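/- arXiv:1510.01343 — 5 statements merged into one kernel-verified Lean document; each statement's English description precedes it below -/
import Mathlib

section
/- Let n and m be positive integers, let c ∈ (ℤ[t])^n, A ∈ (ℤ[t])^{m×n}, and b ∈ (ℤ[t])^m. For each positive integer t let R(t) = {x ∈ ℝ^n : x ≥ 0 and A(t)x = b(t)} (relations coordinatewise) and L(t) = R(t) ∩ ℤ^n. Assume R(t) is bounded for every positive integer t. For each positive integer ℓ define f_ℓ(t) ∈ ℤ ∪ {−∞} to be the ℓth largest value with multiplicity of the multiset {c(t)ᵀx : x ∈ L(t)}, or −∞ if |L(t)| < ℓ. Then for every positive integer ℓ, the function f_ℓ is eventually quasi-polynomial. -/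
/-!
For large `t` the points of the bounded polyhedron `R(t)` have coordinates less than `t ^ N`, for an
`N` independent of `t`. Indeed, moving along kernel vectors of `A(t)` reduces to points whose
support indexes linearly independent columns (`coord_le_of_bounded`). There Cramer's rule, applied
to the Gram matrix of those columns, writes each coordinate as an integer polynomial in `t` divided
by a nonzero integer (`coord_le_cramerNum`).

So a point of `L(t)` is described by boundedly many base-`t` digits. In terms of `t` and these
digits, each condition `A(t)x = b(t)` or `c(t)x ≥ v` compares polynomials in `t` whose coefficients
are linear in the digits. Processing it from the lowest digit upwards, the carry takes only finitely
many values, so the condition is semilinear, that is, Presburger definable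
(`BaseTForm.isSemilinearSet`).

That the `ℓ`th largest value is at least `v` means that `ℓ` distinct points of `L(t)` have objective at
least `v` (`le_nthLargest_valsOf_iff`). Semilinear sets being closed under projections and
complements, the graph of `t ↦ (digits of f_ℓ(t) + t ^ P)` is semilinear; the shift by `t ^ P` makes
the value nonnegative. A linear set which is a functional graph is an affine graph
(`IsLinearSet.exists_polynomial_of_functional`), and the domains of finitely many such pieces are
eventually periodic. So on each residue class the digits are eventually affine in `t`, and `f_ℓ(t)`
is a polynomial (`isEQP_of_isSemilinearSet`).
-/

/-- The ℓth largest element (with multiplicity) of a multiset of `ℤ ∪ {-∞}`;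
`⊥` (= -∞) if the multiset has fewer than `ℓ` elements. -/
def nthLargestW (M : Multiset (WithBot ℤ)) (ℓ : ℕ) : WithBot ℤ :=
  (((M.sort (· ≤ ·)).reverse)[ℓ - 1]?).getD ⊥

/-- The ℓth largest element (with multiplicity) of a multiset of integers. -/
def nthLargest (M : Multiset ℤ) (ℓ : ℕ) : WithBot ℤ :=
  nthLargestW (M.map (fun z => (z : WithBot ℤ))) ℓ

-- The multiset of values of `g` on the finite set `L` (junk value `0` if `L` is infinite).
open Classical in
noncomputable def valsOf {n : ℕ} (L : Set (Fin n → ℤ)) (g : (Fin n → ℤ) → ℤ) : Multiset ℤ :=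
  if h : L.Finite then h.toFinset.val.map g else 0

/-- A function from the positive integers to `ℤ ∪ {-∞}` is eventually quasi-polynomial. -/
def IsEQP (g : ℕ → WithBot ℤ) : Prop :=
  ∃ d : ℕ, 0 < d ∧ ∃ P : ℕ → Option (Polynomial ℝ),
    ∀ᶠ t : ℕ in Filter.atTop,
      (g t).map (fun z : ℤ => (z : ℝ)) =
        ((P (t % d)).map (fun p => ((p.eval (t : ℝ) : ℝ) : WithBot ℝ))).getD ⊥

/-- Evaluation of an integer polynomial at a positive integer, as an integer. -/
def evZ (p : Polynomial ℤ) (t : ℕ) : ℤ := p.eval (t : ℤ)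

/-- Evaluation of an integer polynomial at a positive integer, as a real number. -/
def evR (p : Polynomial ℤ) (t : ℕ) : ℝ := ((p.eval (t : ℤ) : ℤ) : ℝ)


/-! ### Order statistics -/

/-- The entry at position `k` of a decreasing list is at least `v` exactly when more than `k` entries
are. -/
theorem getD_sorted {v : WithBot ℤ} (hv : v ≠ ⊥) (l : List (WithBot ℤ)) (hl : l.Pairwise (· ≥ ·))
    (k : ℕ) :
    v ≤ (l[k]?).getD ⊥ ↔ k < (l.filter (fun w => decide (v ≤ w))).length := by
  induction l generalizing k with
  | nil => simpa using hv
  | cons a l ih =>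
    rw [List.pairwise_cons] at hl
    by_cases hva : v ≤ a
    · cases k with
      | zero => simp [hva]
      | succ k => simp [hva, ih hl.2 k]
    · have h0 : l.filter (fun w => decide (v ≤ w)) = [] := by
        rw [List.filter_eq_nil_iff]
        intro w hw
        simpa using lt_of_le_of_lt (hl.1 w hw) (not_le.1 hva)
      cases k with
      | zero => simp [hva, h0]
      | succ k =>
        have := ih hl.2 k
        simp [hva, h0] at this ⊢
        exact this

theorem le_nthLargest_iff (M : Multiset ℤ) {ℓ : ℕ} (hℓ : 0 < ℓ) (v : ℤ) :
    (v : WithBot ℤ) ≤ nthLargest M ℓ ↔ ℓ ≤ (M.filter (fun w => v ≤ w)).card := by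
  have hM : (M >>= fun z => pure (z : WithBot ℤ)) = M.map (fun z : ℤ => (z : WithBot ℤ)) :=
    Multiset.bind_singleton M _
  -- in `nthLargest`, `M` is coerced to `Multiset (WithBot ℤ)` as a monadic bind
  unfold nthLargest nthLargestW
  rw [hM, Multiset.map_id', getD_sorted (WithBot.coe_ne_bot)]
  · rw [← Multiset.coe_card, ← Multiset.filter_coe, Multiset.coe_reverse, Multiset.sort_eq,
      Multiset.filter_map, Multiset.card_map]
    have : (M.filter ((fun w : WithBot ℤ => (v : WithBot ℤ) ≤ w) ∘ fun z : ℤ => (z : WithBot ℤ)))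
        = M.filter (fun w => v ≤ w) := by
      apply Multiset.filter_congr
      intro x _
      simp
    rw [← this]
    have h2 : ∀ k, ℓ - 1 < k ↔ ℓ ≤ k := fun k => by omega
    exact h2 _
  · rw [List.pairwise_reverse]
    exact Multiset.pairwise_sort _ _

/-- The `ℓ`th largest value of `g` on the finite set `L` is at least `v` exactly when `ℓ` pairwise
distinct points of `L` have values at least `v`. -/
theorem le_nthLargest_valsOf_iff {n : ℕ} {L : Set (Fin n → ℤ)} (hL : L.Finite)
    (g : (Fin n → ℤ) → ℤ) {ℓ : ℕ} (hℓ : 0 < ℓ) (v : ℤ) :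
    (v : WithBot ℤ) ≤ nthLargest (valsOf L g) ℓ ↔
      ∃ X : Fin ℓ → Fin n → ℤ, Function.Injective X ∧ ∀ i, X i ∈ L ∧ v ≤ g (X i) := by
  classical
  rw [le_nthLargest_iff _ hℓ, valsOf, dif_pos hL, Multiset.filter_map, Multiset.card_map]
  have h1 : (Multiset.filter ((fun w => v ≤ w) ∘ g) hL.toFinset.val).card
      = (hL.toFinset.filter (fun x => v ≤ g x)).card := rfl
  rw [h1]
  constructor
  · intro h
    obtain ⟨s, hs, hcard⟩ := Finset.exists_subset_card_eq h
    let e := s.equivFinOfCardEq hcard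
    refine ⟨fun i => (e.symm i : Fin n → ℤ), Subtype.val_injective.comp e.symm.injective, ?_⟩
    intro i
    have := hs (e.symm i).2
    simpa using this
  · rintro ⟨X, hX, h⟩
    have : (Finset.univ.image X).card = ℓ := by
      rw [Finset.card_image_of_injective _ hX, Finset.card_univ, Fintype.card_fin]
    rw [← this]
    apply Finset.card_le_card
    intro x hx
    simp only [Finset.mem_image, Finset.mem_univ, true_and] at hx
    obtain ⟨i, rfl⟩ := hx
    simpa using h i

/-! ### Base-t expressions and semilinear sets -/

/-- A function to `ℤ` on an additive monoid is affine if it is a homomorphism plus a constant. -/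
def IsAffine {M : Type*} [AddCommMonoid M] (u : M → ℤ) : Prop :=
  ∃ (a : ℤ) (h : M →+ ℤ), ∀ v, u v = a + h v

section semilinear

variable {M : Type*} [AddCommMonoid M]

theorem IsAffine.const (a : ℤ) : IsAffine (fun _ : M => a) := ⟨a, 0, by simp⟩

theorem IsAffine.add {u w : M → ℤ} (hu : IsAffine u) (hw : IsAffine w) :
    IsAffine (fun v => u v + w v) := by
  obtain ⟨a, h, hu⟩ := hu
  obtain ⟨b, k, hw⟩ := hw
  exact ⟨a + b, h + k, fun v => by
    simp only [hu, hw, AddMonoidHom.add_apply]; ring⟩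

theorem IsAffine.const_mul {u : M → ℤ} (hu : IsAffine u) (c : ℤ) :
    IsAffine (fun v => c * u v) := by
  obtain ⟨a, h, hu⟩ := hu
  exact ⟨c * a, c • h, fun v => by
    simp only [hu, AddMonoidHom.smul_apply, smul_eq_mul]; ring⟩

theorem IsAffine.sub {u w : M → ℤ} (hu : IsAffine u) (hw : IsAffine w) :
    IsAffine (fun v => u v - w v) := by
  have := hu.add (hw.const_mul (-1))
  convert this using 2
  ring

theorem isSemilinearSet_nonneg [AddMonoid.FG M] {u : M → ℤ} (hu : IsAffine u) :
    IsSemilinearSet {v | 0 ≤ u v} := by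
  obtain ⟨a, h, hu⟩ := hu
  -- the slack `s : ℕ` turns the inequality into an equation, then it is projected away
  have h1 : IsSemilinearSet {p : M × ℕ | a + (h.comp (AddMonoidHom.fst M ℕ)) p
      = 0 + ((Nat.castAddMonoidHom ℤ).comp (AddMonoidHom.snd M ℕ)) p} :=
    isSemilinearSet_setOfPred_eq _ _ _ _
  have h2 := h1.image (AddMonoidHom.fst M ℕ)
  convert h2 using 1
  ext v
  simp only [Set.mem_ofPred_eq, Set.mem_image, hu]
  constructor
  · intro hv
    refine ⟨(v, (a + h v).toNat), ?_, rfl⟩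
    simp [hv]
  · rintro ⟨⟨w, s⟩, hw, rfl⟩
    simp at hw
    simp [hw]

/-- `BaseTForm D τ F` says that `F` is a polynomial expression `u₀ + τ (u₁ + τ (u₂ + ⋯))` in `τ`
whose coefficients `uₖ` are affine functions of size `O(τ)` on the domain `D`. -/
inductive BaseTForm (D : Set M) (τ : M → ℤ) : (M → ℤ) → Prop
  | zero : BaseTForm D τ (fun _ => 0)
  | step (u F : M → ℤ) : IsAffine u → (∃ C : ℤ, ∀ v ∈ D, |u v| ≤ C * τ v) → BaseTForm D τ F →
      BaseTForm D τ (fun v => u v + τ v * F v)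

variable {D : Set M} {τ : M → ℤ}

/-- Although `F` is not linear, its nonnegativity on `D` is a semilinear condition: the carry
`q = ⌊(w + u₀) / τ⌋` takes only finitely many values, and once it is fixed the sign of
`w + u₀ + τ F'` is that of `q + F'`. -/
theorem BaseTForm.isSemilinearSet [AddMonoid.FG M] (hD : IsSemilinearSet D) (hτ : IsAffine τ)
    (hτ1 : ∀ v ∈ D, 1 ≤ τ v) {F : M → ℤ} (hF : BaseTForm D τ F) :
    ∀ w : ℤ, IsSemilinearSet {v | v ∈ D ∧ 0 ≤ w + F v} := by
  induction hF with
  | zero =>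
    intro w
    by_cases hw : 0 ≤ w
    · simpa [hw] using hD
    · simp [hw]
  | step u F hu hC _ ih =>
    intro w
    obtain ⟨C, hC⟩ := hC
    have key : IsSemilinearSet (⋃ q ∈ Finset.Icc (-(C + |w|)) (C + |w|),
        ({v | 0 ≤ (w + u v) - q * τ v} ∩ {v | 0 ≤ ((q + 1) * τ v + -1) - (w + u v)}) ∩
          {v | v ∈ D ∧ 0 ≤ q + F v}) := by
      apply IsSemilinearSet.biUnion_finset
      intro q _
      refine ((isSemilinearSet_nonneg ?_).inter (isSemilinearSet_nonneg ?_)).inter (ih q)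
      · exact ((IsAffine.const w).add hu).sub (hτ.const_mul q)
      · exact ((hτ.const_mul (q + 1)).add (IsAffine.const (-1))).sub ((IsAffine.const w).add hu)
    convert key using 1
    ext v
    simp only [Set.mem_ofPred_eq, Set.mem_iUnion, Set.mem_inter_iff, Finset.mem_Icc, exists_prop]
    constructor
    · rintro ⟨hv, h0⟩
      have ht := hτ1 v hv
      have hb := abs_le.1 (hC v hv)
      have hw := abs_le.1 (le_refl |w|)
      have hm := Int.emod_add_mul_ediv (w + u v) (τ v)
      have hm0 := Int.emod_nonneg (w + u v) (show τ v ≠ 0 by omega)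
      have hm1 := Int.emod_lt_of_pos (w + u v) (show 0 < τ v by omega)
      set q := (w + u v) / τ v with hq
      have hwt : |w| ≤ |w| * τ v := le_mul_of_one_le_right (abs_nonneg w) ht
      refine ⟨q, ⟨?_, ?_⟩, ⟨?_, ?_⟩, hv, ?_⟩
      · by_contra hcon
        have : q + 1 ≤ -(C + |w|) := by omega
        nlinarith
      · by_contra hcon
        have : C + |w| + 1 ≤ q := by omega
        nlinarith
      · nlinarith
      · nlinarith
      · by_contra hcon
        have : q + F v ≤ -1 := by omega
        nlinarith
    · rintro ⟨q, -, ⟨h1, h2⟩, hv, h3⟩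
      have ht := hτ1 v hv
      exact ⟨hv, by nlinarith⟩

theorem BaseTForm.add {F G : M → ℤ} (hF : BaseTForm D τ F) (hG : BaseTForm D τ G) :
    BaseTForm D τ (fun v => F v + G v) := by
  induction hF generalizing G with
  | zero => simpa using hG
  | step u F hu hC hF ih =>
    cases hG with
    | zero => simpa using BaseTForm.step u F hu hC hF
    | step u' F' hu' hC' hF' =>
      obtain ⟨C, hC⟩ := hC
      obtain ⟨C', hC'⟩ := hC'
      have := BaseTForm.step (D := D) (τ := τ) _ _ (hu.add hu') ⟨C + C', fun v hv => by
        have h1 := abs_add_le (u v) (u' v)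
        have h2 := hC v hv
        have h3 := hC' v hv
        linarith⟩ (ih hF')
      convert this using 2
      ring

theorem BaseTForm.const_mul {F : M → ℤ} (hF : BaseTForm D τ F) (a : ℤ) :
    BaseTForm D τ (fun v => a * F v) := by
  induction hF with
  | zero => simpa using BaseTForm.zero
  | step u F hu hC hF ih =>
    obtain ⟨C, hC⟩ := hC
    have := BaseTForm.step (D := D) (τ := τ) _ _ (hu.const_mul a) ⟨|a| * C, fun v hv => by
        have h2 := mul_le_mul_of_nonneg_left (hC v hv) (abs_nonneg a)
        rw [abs_mul]
        linarith⟩ ih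
    convert this using 2
    ring

theorem BaseTForm.sub {F G : M → ℤ} (hF : BaseTForm D τ F) (hG : BaseTForm D τ G) :
    BaseTForm D τ (fun v => F v - G v) := by
  have := hF.add (hG.const_mul (-1))
  convert this using 2
  ring

theorem BaseTForm.pow_mul {F : M → ℤ} (hF : BaseTForm D τ F) (k : ℕ) :
    BaseTForm D τ (fun v => τ v ^ k * F v) := by
  induction k with
  | zero => simpa using hF
  | succ k ih =>
    have := BaseTForm.step (D := D) (τ := τ) _ _ (IsAffine.const 0) ⟨0, by simp⟩ ih
    convert this using 2
    ring

theorem BaseTForm.sum {ι : Type*} (s : Finset ι) {F : ι → M → ℤ}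
    (hF : ∀ i ∈ s, BaseTForm D τ (F i)) : BaseTForm D τ (fun v => ∑ i ∈ s, F i v) := by
  classical
  induction s using Finset.induction_on with
  | empty => simpa using BaseTForm.zero
  | insert i s hi ih =>
    simp only [Finset.sum_insert hi]
    exact (hF i (by simp)).add (ih fun j hj => hF j (by simp [hj]))

theorem BaseTForm.eval_mul {F : M → ℤ} (hF : BaseTForm D τ F) (p : Polynomial ℤ) :
    BaseTForm D τ (fun v => p.eval (τ v) * F v) := by
  induction p using Polynomial.induction_on' with
  | add p q hp hq =>
    have := hp.add hq
    simpa only [Polynomial.eval_add, add_mul] using this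
  | monomial k a =>
    have := (hF.pow_mul k).const_mul a
    simpa only [Polynomial.eval_monomial, mul_assoc] using this

theorem BaseTForm.of_affine {u : M → ℤ} (hu : IsAffine u) (C : ℤ) (hC : ∀ v ∈ D, |u v| ≤ C * τ v) :
    BaseTForm D τ u := by
  simpa using BaseTForm.step u _ hu ⟨C, hC⟩ BaseTForm.zero

theorem BaseTForm.isSemilinearSet_eq [AddMonoid.FG M] (hD : IsSemilinearSet D) (hτ : IsAffine τ)
    (hτ1 : ∀ v ∈ D, 1 ≤ τ v) {F G : M → ℤ} (hF : BaseTForm D τ F) (hG : BaseTForm D τ G) :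
    IsSemilinearSet {v | v ∈ D ∧ F v = G v} := by
  have := ((hF.sub hG).isSemilinearSet hD hτ hτ1 0).inter
    ((hG.sub hF).isSemilinearSet hD hτ hτ1 0)
  convert this using 1
  ext v
  simp only [Set.mem_ofPred_eq, Set.mem_inter_iff]
  constructor
  · rintro ⟨h, h'⟩
    exact ⟨⟨h, by omega⟩, h, by omega⟩
  · rintro ⟨⟨h, h'⟩, _, h''⟩
    exact ⟨h, by omega⟩

end semilinear

/-! ### From semilinear graphs to quasi-polynomials -/

open Pointwise in
/-- On a linear set which is the graph of a partial function of its first coordinate, that function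
is given by polynomials (of degree at most one): all periods with nonzero first coordinate have the
same slope, and the other periods vanish. -/
theorem IsLinearSet.exists_polynomial_of_functional {K : ℕ} {s : Set (ℕ × (Fin K → ℕ))}
    (hs : IsLinearSet s) (hf : ∀ p ∈ s, ∀ q ∈ s, p.1 = q.1 → p.2 = q.2) :
    ∃ Q : Fin K → Polynomial ℝ, ∀ p ∈ s, ∀ k, (p.2 k : ℝ) = (Q k).eval (p.1 : ℝ) := by
  obtain ⟨a, P, -, rfl⟩ := isLinearSet_iff_exists_fg_eq_vadd.1 hs
  have hmem : ∀ p ∈ P, a + p ∈ a +ᵥ (P : Set (ℕ × (Fin K → ℕ))) := fun p hp =>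
    Set.mem_vadd_set.2 ⟨p, hp, rfl⟩
  by_cases h0 : ∃ p₀ ∈ P, p₀.1 ≠ 0
  · obtain ⟨p₀, hp₀, hne⟩ := h0
    have hne' : (p₀.1 : ℝ) ≠ 0 := by exact_mod_cast hne
    refine ⟨fun k => Polynomial.C (a.2 k : ℝ) + (Polynomial.X - Polynomial.C (a.1 : ℝ)) *
      Polynomial.C ((p₀.2 k : ℝ) / p₀.1), ?_⟩
    intro q hq k
    obtain ⟨p, hp, rfl⟩ := Set.mem_vadd_set.1 hq
    have h1 := hf _ (hmem _ (P.nsmul_mem hp p₀.1)) _ (hmem _ (P.nsmul_mem hp₀ p.1))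
      (by simp [mul_comm])
    have h2 := congrFun h1 k
    simp at h2
    have h3 : (p₀.1 : ℝ) * p.2 k = p.1 * p₀.2 k := by exact_mod_cast h2
    simp
    field_simp
    linarith
  · push Not at h0
    refine ⟨fun k => Polynomial.C (a.2 k : ℝ), ?_⟩
    intro q hq k
    obtain ⟨p, hp, rfl⟩ := Set.mem_vadd_set.1 hq
    have h1 := hf _ (hmem _ hp) _ (hmem _ P.zero_mem) (by simp [h0 p hp])
    have h2 := congrFun h1 k
    simp at h2
    simp [h2]

/-- Finitely many semilinear subsets of `ℕ` have a common eventual period. -/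
theorem exists_common_period {ι : Type*} [Finite ι] (A : ι → Set ℕ)
    (hA : ∀ i, IsSemilinearSet (A i)) :
    ∃ k d : ℕ, 0 < d ∧ ∀ i, ∀ t t' : ℕ, k ≤ t → k ≤ t' → t % d = t' % d →
      (t ∈ A i ↔ t' ∈ A i) := by
  classical
  have := Fintype.ofFinite ι
  choose k p hp h using fun i => Nat.isSemilinearSet_iff_ultimately_periodic.1 (hA i)
  have hiter : ∀ i m t, k i ≤ t → (t ∈ A i ↔ t + p i * m ∈ A i) := by
    intro i m
    induction m with
    | zero => simp
    | succ m ih =>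
      intro t ht
      rw [ih t ht, h i _ (by omega), mul_add, mul_one, add_assoc]
  refine ⟨∑ i, k i, ∏ i, p i, Finset.prod_pos fun i _ => hp i, ?_⟩
  have main : ∀ i, ∀ t t' : ℕ, ∑ i, k i ≤ t → t ≤ t' → t % (∏ i, p i) = t' % (∏ i, p i) →
      (t ∈ A i ↔ t' ∈ A i) := by
    intro i t t' ht htt' hmod
    have hk : k i ≤ t := (Finset.single_le_sum (fun i _ => Nat.zero_le (k i))
      (Finset.mem_univ i)).trans ht
    obtain ⟨m, hm⟩ := (Finset.dvd_prod_of_mem p (Finset.mem_univ i)).trans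
      ((Nat.modEq_iff_dvd' htt').1 hmod)
    have : t' = t + p i * m := by omega
    rw [this]
    exact hiter i m t hk
  intro i t t' ht ht' hmod
  rcases le_total t t' with h | h
  · exact main i t t' ht h hmod
  · exact (main i t' t ht' h hmod.symm).symm

/-- If the base-`t` digits of `g t + t ^ P` form a semilinear graph, then `g` is eventually
quasi-polynomial. -/
theorem isEQP_of_isSemilinearSet {K : ℕ} {T : Set (ℕ × (Fin K → ℕ))} (hT : IsSemilinearSet T)
    (hf : ∀ p ∈ T, ∀ q ∈ T, p.1 = q.1 → p.2 = q.2) (g : ℕ → WithBot ℤ) (P t₀ : ℕ)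
    (hg : ∀ t y, (t, y) ∈ T →
      g t = (((∑ k, (y k : ℤ) * (t : ℤ) ^ (k : ℕ)) - (t : ℤ) ^ P : ℤ) : WithBot ℤ))
    (hg' : ∀ t, t₀ ≤ t → g t ≠ ⊥ → ∃ y, (t, y) ∈ T) : IsEQP g := by
  classical
  obtain ⟨S, hS, hS', rfl⟩ := hT
  have : Finite S := hS
  choose Q hQ using fun s : S => (hS' s.1 s.2).exists_polynomial_of_functional
    (fun p hp q hq => hf p ⟨s.1, s.2, hp⟩ q ⟨s.1, s.2, hq⟩)
  obtain ⟨k, d, hd, hper⟩ := exists_common_period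
    (fun s : S => (AddMonoidHom.fst ℕ (Fin K → ℕ)) '' s.1)
    (fun s => (hS' s.1 s.2).isSemilinearSet.image _)
  -- `r + d * k` is a representative of the class of `r` beyond the preperiod
  refine ⟨d, hd, fun r =>
    if h : ∃ s : S, r + d * k ∈ (AddMonoidHom.fst ℕ (Fin K → ℕ)) '' s.1 then
      some ((∑ i, Q h.choose i * Polynomial.X ^ (i : ℕ)) - Polynomial.X ^ P) else none, ?_⟩
  filter_upwards [Filter.eventually_ge_atTop (max k t₀)] with t ht
  have hk : k ≤ t % d + d * k := (Nat.le_mul_of_pos_left k hd).trans (Nat.le_add_left _ _)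
  have hmod : (t % d + d * k) % d = t % d := by simp
  have htk : k ≤ t := (le_max_left _ _).trans ht
  split_ifs with h
  · have h1 := (hper h.choose _ _ hk htk hmod).1 h.choose_spec
    obtain ⟨⟨t', y⟩, hy, ht'⟩ := h1
    obtain rfl : t' = t := ht'
    rw [hg t' y ⟨_, h.choose.2, hy⟩]
    have h2 := hQ _ _ hy
    simp only [Option.map_some, Option.getD_some, WithBot.map_coe, WithBot.coe_inj,
      Polynomial.eval_sub, Polynomial.eval_finsetSum, Polynomial.eval_mul, Polynomial.eval_pow,
      Polynomial.eval_X]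
    push_cast
    congr 1
    exact Finset.sum_congr rfl fun i _ => by rw [h2 i]
  · have h1 : g t = ⊥ := by
      by_contra hne
      obtain ⟨y, s, hs, hy⟩ := hg' t ((le_max_right _ _).trans ht) hne
      exact h ⟨⟨s, hs⟩, (hper ⟨s, hs⟩ _ _ hk htk hmod).2 ⟨_, hy, rfl⟩⟩
    rw [h1]
    simp

/-! ### Polynomial bounds on bounded polyhedra -/

theorem exists_abs_eval_lt_pow (p : Polynomial ℤ) :
    ∃ N : ℕ, ∀ᶠ t : ℕ in Filter.atTop, ∀ N' ≥ N, |p.eval (t : ℤ)| < (t : ℤ) ^ N' := by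
  have key : ∃ (N : ℕ) (C : ℤ), ∀ t : ℕ, 1 ≤ t → |p.eval (t : ℤ)| ≤ C * (t : ℤ) ^ N := by
    induction p using Polynomial.induction_on' with
    | add p q hp hq =>
      obtain ⟨N, C, h⟩ := hp
      obtain ⟨N', C', h'⟩ := hq
      refine ⟨N + N', |C| + |C'|, fun t ht => ?_⟩
      have ht' : (1 : ℤ) ≤ t := by exact_mod_cast ht
      have h1 : (t : ℤ) ^ N ≤ t ^ (N + N') := pow_le_pow_right₀ ht' (by omega)
      have h2 : (t : ℤ) ^ N' ≤ t ^ (N + N') := pow_le_pow_right₀ ht' (by omega)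
      have h3 : C * (t : ℤ) ^ N ≤ |C| * t ^ (N + N') :=
        mul_le_mul (le_abs_self C) h1 (by positivity) (abs_nonneg C)
      have h4 : C' * (t : ℤ) ^ N' ≤ |C'| * t ^ (N + N') :=
        mul_le_mul (le_abs_self C') h2 (by positivity) (abs_nonneg C')
      rw [Polynomial.eval_add, add_mul]
      linarith [abs_add_le (p.eval (t : ℤ)) (q.eval (t : ℤ)), h t ht, h' t ht]
    | monomial k a =>
      refine ⟨k, |a|, fun t _ => ?_⟩
      simp [abs_mul]
  obtain ⟨N, C, h⟩ := key
  refine ⟨N + 1, ?_⟩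
  filter_upwards [Filter.eventually_ge_atTop (C.toNat + 1)] with t ht N' hN'
  have ht1 : (1 : ℤ) ≤ t := by exact_mod_cast (by omega : 1 ≤ t)
  have hC : C < t := by omega
  calc |p.eval (t : ℤ)| ≤ C * (t : ℤ) ^ N := h t (by omega)
    _ < t * (t : ℤ) ^ N := mul_lt_mul_of_pos_right hC (by positivity)
    _ = (t : ℤ) ^ (N + 1) := by ring
    _ ≤ (t : ℤ) ^ N' := pow_le_pow_right₀ ht1 hN'

open Matrix in
/-- To bound a coordinate on a bounded polyhedron `{x ≥ 0, A x = b}` it is enough to bound it at the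
points whose support indexes linearly independent columns of `A`: from any other point one can move
along a kernel vector, without decreasing the given coordinate, until the support shrinks. -/
theorem coord_le_of_bounded {m n : ℕ} (A : Matrix (Fin m) (Fin n) ℝ) (b : Fin m → ℝ)
    (hbdd : Bornology.IsBounded {x : Fin n → ℝ | (∀ j, 0 ≤ x j) ∧ A *ᵥ x = b}) (j : Fin n) (B : ℝ)
    (hB : ∀ (S : Finset (Fin n)) (x : Fin n → ℝ), (∀ i, 0 ≤ x i) → A *ᵥ x = b →
      (∀ i, i ∉ S → x i = 0) →
      (∀ z : Fin n → ℝ, (∀ i, i ∉ S → z i = 0) → A *ᵥ z = 0 → z = 0) → x j ≤ B) :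
    ∀ (N : ℕ) (x : Fin n → ℝ), (∀ i, 0 ≤ x i) → A *ᵥ x = b →
      (Finset.univ.filter (fun i => x i ≠ 0)).card ≤ N → x j ≤ B := by
  obtain ⟨C, hC⟩ := hbdd.exists_norm_le
  intro N
  induction N with
  | zero =>
    intro x hx hA hcard
    have hx0 : ∀ i, x i = 0 := by
      intro i
      by_contra hi
      have : i ∈ Finset.univ.filter (fun i => x i ≠ 0) := by simpa using hi
      rw [Finset.card_eq_zero.1 (Nat.le_zero.1 hcard)] at this
      simp at this
    exact hB ∅ x hx hA (fun i _ => hx0 i) (fun z hz _ => funext fun i => hz i (by simp))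
  | succ N ih =>
    intro x hx hA hcard
    by_cases hind : ∀ z : Fin n → ℝ, (∀ i, i ∉ Finset.univ.filter (fun i => x i ≠ 0) → z i = 0) →
        A *ᵥ z = 0 → z = 0
    · exact hB _ x hx hA (fun i hi => by simpa using hi) hind
    push Not at hind
    have : ∃ z : Fin n → ℝ, (∀ i, x i = 0 → z i = 0) ∧ A *ᵥ z = 0 ∧ z ≠ 0 ∧ 0 ≤ z j := by
      obtain ⟨z, hz, hAz, hne⟩ := hind
      rcases le_total 0 (z j) with h | h
      · exact ⟨z, fun i hi => hz i (by simpa using hi), hAz, hne, h⟩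
      · refine ⟨-z, fun i hi => by simpa using hz i (by simpa using hi), ?_, ?_, by simpa using h⟩
        · rw [mulVec_neg, hAz, neg_zero]
        · simpa using hne
    obtain ⟨z, hz, hAz, hne, hzj⟩ := this
    have hAs : ∀ s : ℝ, A *ᵥ (x + s • z) = b := by
      intro s
      rw [mulVec_add, mulVec_smul, hAz, smul_zero, add_zero, hA]
    -- a nonnegative kernel direction would give an unbounded ray
    have hneg : ∃ i, z i < 0 := by
      by_contra hcon
      push Not at hcon
      obtain ⟨i, hi⟩ := Function.ne_iff.1 hne
      have hi : 0 < z i := lt_of_le_of_ne (hcon i) (Ne.symm hi)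
      have hC0 : 0 ≤ C := (norm_nonneg x).trans (hC x ⟨hx, hA⟩)
      have hs : 0 ≤ (C + 1) / z i := by positivity
      have h1 := hC (x + ((C + 1) / z i) • z) ⟨fun k => by
        have := mul_nonneg hs (hcon k)
        simpa using add_nonneg (hx k) this, hAs _⟩
      have h2 := (norm_le_pi_norm _ i).trans h1
      rw [Real.norm_eq_abs] at h2
      have h3 := (le_abs_self _).trans h2
      simp only [Pi.add_apply, Pi.smul_apply, smul_eq_mul] at h3
      rw [div_mul_cancel₀ _ hi.ne'] at h3
      linarith [hx i]
    obtain ⟨i₀, hi₀, hmin⟩ := Finset.exists_min_image (Finset.univ.filter (fun i => z i < 0))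
      (fun i => x i / (-z i)) (by
        obtain ⟨i, hi⟩ := hneg
        exact ⟨i, by simpa using hi⟩)
    simp only [Finset.mem_filter, Finset.mem_univ, true_and] at hi₀ hmin
    set ε := x i₀ / (-z i₀) with hε
    have hε0 : 0 ≤ ε := div_nonneg (hx i₀) (by linarith)
    have hnn : ∀ i, 0 ≤ (x + ε • z) i := by
      intro i
      simp only [Pi.add_apply, Pi.smul_apply, smul_eq_mul]
      rcases lt_or_ge (z i) 0 with h | h
      · have := hmin i h
        rw [le_div_iff₀ (by linarith)] at this
        linarith
      · exact add_nonneg (hx i) (mul_nonneg hε0 h)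
    have hzero : (x + ε • z) i₀ = 0 := by
      simp only [Pi.add_apply, Pi.smul_apply, smul_eq_mul, hε]
      have := hi₀.ne
      rw [div_neg, neg_mul, div_mul_cancel₀ _ this, add_neg_cancel]
    have hlt : (Finset.univ.filter (fun i => (x + ε • z) i ≠ 0)).card
        < (Finset.univ.filter (fun i => x i ≠ 0)).card := by
      apply Finset.card_lt_card
      rw [Finset.ssubset_iff_of_subset]
      · refine ⟨i₀, ?_, ?_⟩
        · simp only [Finset.mem_filter, Finset.mem_univ, true_and]
          intro h
          exact hi₀.ne (hz i₀ h)
        · simpa using hzero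
      · intro i hi
        simp only [Finset.mem_filter, Finset.mem_univ, true_and] at hi ⊢
        intro h
        apply hi
        simp [h, hz i h]
    have h1 := ih _ hnn (hAs ε) (by omega)
    have h2 : 0 ≤ ε * z j := mul_nonneg hε0 hzj
    simp only [Pi.add_apply, Pi.smul_apply, smul_eq_mul] at h1
    linarith

section bound

open Matrix

variable {m n : ℕ} (A : Matrix (Fin m) (Fin n) (Polynomial ℤ)) (b : Fin m → Polynomial ℤ)

/-- The Gram matrix of the columns of `A` indexed by `S`. -/
noncomputable def colGram (S : Finset (Fin n)) : Matrix S S (Polynomial ℤ) :=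
  (A.submatrix id (fun i : S => (i : Fin n)))ᵀ * A.submatrix id (fun i : S => (i : Fin n))

/-- The Cramer numerators `adj(G) A_Sᵀ b` of the normal equations `G x_S = A_Sᵀ b`, where `G` is the
Gram matrix of the columns of `A` indexed by `S`. -/
noncomputable def cramerNum (S : Finset (Fin n)) : S → Polynomial ℤ :=
  (colGram A S).adjugate *ᵥ ((A.submatrix id (fun i : S => (i : Fin n)))ᵀ *ᵥ b)

/-- The Cramer denominator is a nonzero integer, so the Cramer numerator bounds the coordinate. -/
theorem coord_le_cramerNum (t : ℕ) (S : Finset (Fin n)) (x : Fin n → ℝ)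
    (hA : (A.map (fun p => evR p t)) *ᵥ x = fun i => evR (b i) t) (hS : ∀ i, i ∉ S → x i = 0)
    (hind : ∀ z : Fin n → ℝ, (∀ i, i ∉ S → z i = 0) → (A.map (fun p => evR p t)) *ᵥ z = 0 → z = 0)
    (j : S) : x j ≤ ((|(cramerNum A b S j).eval (t : ℤ)| : ℤ) : ℝ) := by
  classical
  let φ : Polynomial ℤ →+* ℝ := (Int.castRingHom ℝ).comp (Polynomial.evalRingHom (t : ℤ))
  set M : Matrix (Fin m) S ℝ := (A.submatrix id (fun i : S => (i : Fin n))).map φ with hM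
  -- vectors supported on `S`
  have hext : ∀ z : Fin n → ℝ, (∀ i, i ∉ S → z i = 0) →
      M *ᵥ (fun i : S => z i) = (A.map (fun p => evR p t)) *ᵥ z := by
    intro z hz
    ext r
    simp only [mulVec, dotProduct, hM, map_apply, submatrix_apply, id]
    have h1 : ∑ i : S, φ (A r i) * z i = ∑ i ∈ S, φ (A r i) * z i :=
      Finset.sum_coe_sort S (fun i => φ (A r i) * z i)
    rw [h1]
    refine Finset.sum_subset (Finset.subset_univ S) fun i _ hi => ?_
    rw [hz i hi, mul_zero]
  have hG : φ.mapMatrix (colGram A S) = Mᵀ * M := by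
    rw [colGram, RingHom.mapMatrix_apply, Matrix.map_mul, transpose_map]
  have hdet : φ (colGram A S).det = (Mᵀ * M).det := by rw [RingHom.map_det, hG]
  have hne : φ (colGram A S).det ≠ 0 := by
    rw [hdet]
    intro h0
    obtain ⟨v, hv, hMv⟩ := Matrix.exists_mulVec_eq_zero_iff.2 h0
    have hMv' : M *ᵥ v = 0 := by
      rw [← conjTranspose_eq_transpose_of_trivial] at hMv
      exact (conjTranspose_mul_self_mulVec_eq_zero M v).1 hMv
    let z : Fin n → ℝ := fun i => if h : i ∈ S then v ⟨i, h⟩ else 0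
    have hz : ∀ i, i ∉ S → z i = 0 := fun i hi => by simp [z, hi]
    have hzv : (fun i : S => z i) = v := by
      ext i
      simp [z]
    have h2 := hind z hz (by rw [← hext z hz, hzv, hMv'])
    apply hv
    rw [← hzv, h2]
    rfl
  have hnum : φ (cramerNum A b S j) = φ (colGram A S).det * x j := by
    have h1 : (fun i => φ (cramerNum A b S i)) =
        (Mᵀ * M).adjugate *ᵥ (Mᵀ *ᵥ (M *ᵥ fun i : S => x i)) := by
      rw [hext x hS, hA, ← hG, ← RingHom.map_adjugate]
      ext i
      rw [cramerNum, RingHom.map_mulVec]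
      have h2 : φ ∘ ((A.submatrix id (fun i : S => (i : Fin n)))ᵀ *ᵥ b) =
          Mᵀ *ᵥ (fun i => evR (b i) t) := by
        ext k
        exact RingHom.map_mulVec φ _ _ _
      rw [h2]
      rfl
    rw [mulVec_mulVec, mulVec_mulVec, Matrix.mul_assoc, adjugate_mul, smul_mulVec, one_mulVec] at h1
    rw [hdet]
    exact congrFun h1 j
  have hφ : ∀ p, φ p = ((p.eval (t : ℤ) : ℤ) : ℝ) := fun p => rfl
  have h1 : (1 : ℝ) ≤ |φ (colGram A S).det| := by
    rw [hφ] at hne ⊢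
    have : (1 : ℤ) ≤ |(colGram A S).det.eval (t : ℤ)| := Int.one_le_abs (by exact_mod_cast hne)
    exact_mod_cast this
  rw [Int.cast_abs, ← hφ, hnum, abs_mul]
  exact (le_abs_self _).trans (le_mul_of_one_le_left (abs_nonneg _) h1)

/-- The points of the bounded polyhedra `R(t)` have coordinates of polynomial size in `t`. -/
theorem exists_coord_lt_pow
    (hbdd : ∀ t : ℕ, 0 < t → Bornology.IsBounded
      {x : Fin n → ℝ | (∀ j, 0 ≤ x j) ∧ ∀ i, ∑ j, evR (A i j) t * x j = evR (b i) t}) :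
    ∃ N : ℕ, ∀ᶠ t : ℕ in Filter.atTop, ∀ x : Fin n → ℝ, (∀ j, 0 ≤ x j) →
      (∀ i, ∑ j, evR (A i j) t * x j = evR (b i) t) → ∀ j, x j < (t : ℝ) ^ N := by
  choose N hN using fun (q : Σ S : Finset (Fin n), S) =>
    exists_abs_eval_lt_pow (cramerNum A b q.1 q.2)
  refine ⟨∑ q, N q, ?_⟩
  filter_upwards [Filter.eventually_all.2 hN, Filter.eventually_ge_atTop 1] with t ht ht1 x hx hA j
  have hset : {x : Fin n → ℝ | (∀ j, 0 ≤ x j) ∧ ∀ i, ∑ j, evR (A i j) t * x j = evR (b i) t} =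
      {x : Fin n → ℝ | (∀ j, 0 ≤ x j) ∧
        (A.map (fun p => evR p t)) *ᵥ x = fun i => evR (b i) t} := by
    ext y
    simp [funext_iff, mulVec, dotProduct]
  have hle := coord_le_of_bounded (A.map (fun p => evR p t)) (fun i => evR (b i) t)
    (by rw [← hset]; exact hbdd t ht1) j ((t : ℝ) ^ (∑ q, N q) - 1) ?_ _ x hx
    (by ext i; exact hA i) le_rfl
  · linarith
  · intro S y hy hAy hS hind
    by_cases hj : j ∈ S
    · have h1 := coord_le_cramerNum A b t S y hAy hS hind ⟨j, hj⟩
      have h2 := ht ⟨S, ⟨j, hj⟩⟩ (∑ q, N q)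
        (Finset.single_le_sum (fun q _ => Nat.zero_le (N q)) (Finset.mem_univ _))
      have h3 : |(cramerNum A b S ⟨j, hj⟩).eval (t : ℤ)| ≤ (t : ℤ) ^ (∑ q, N q) - 1 := by
        have := Int.le_sub_one_of_lt h2
        exact this
      exact h1.trans (by exact_mod_cast h3)
    · rw [hS j hj]
      have : (1 : ℝ) ≤ (t : ℝ) ^ (∑ q, N q) := one_le_pow₀ (by exact_mod_cast ht1)
      linarith

end bound

/-! ### Digits and the graph of the value function -/

/-- The integer with base-`t` digits `y`, least significant digit first. -/
def digitSum {N : ℕ} (t : ℕ) (y : Fin N → ℕ) : ℤ := ∑ d, (y d : ℤ) * (t : ℤ) ^ (d : ℕ)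

theorem exists_digits {N t : ℕ} {z : ℤ} (h0 : 0 ≤ z) (h1 : z < (t : ℤ) ^ N) :
    ∃ y : Fin N → ℕ, (∀ d, y d < t) ∧ digitSum t y = z := by
  lift z to ℕ using h0
  have h1 : z < t ^ N := by exact_mod_cast h1
  refine ⟨fun d => (finFunctionFinEquiv.symm ⟨z, h1⟩ d : Fin t), fun d => Fin.is_lt _, ?_⟩
  have := finFunctionFinEquiv_apply (finFunctionFinEquiv.symm (⟨z, h1⟩ : Fin (t ^ N)))
  rw [Equiv.apply_symm_apply] at this
  unfold digitSum
  exact_mod_cast this.symm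

theorem digitSum_inj {N t : ℕ} {y y' : Fin N → ℕ} (hy : ∀ d, y d < t) (hy' : ∀ d, y' d < t)
    (h : digitSum t y = digitSum t y') : y = y' := by
  have h1 : (fun d => (⟨y d, hy d⟩ : Fin t)) = fun d => ⟨y' d, hy' d⟩ := by
    apply finFunctionFinEquiv.injective
    apply Fin.ext
    rw [finFunctionFinEquiv_apply, finFunctionFinEquiv_apply]
    unfold digitSum at h
    exact_mod_cast h
  ext d
  exact congrArg Fin.val (congrFun h1 d)

theorem digitSum_nonneg {N t : ℕ} (y : Fin N → ℕ) : 0 ≤ digitSum t y :=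
  Finset.sum_nonneg fun _ _ => by positivity

section main

/-- Points `(t, y, X)`: the parameter `t`, the `K` digits `y` of a (shifted) value, and the `N`
digits of each coordinate of `ℓ` integer points of dimension `n`. -/
abbrev DigitSpace (n N K ℓ : ℕ) : Type :=
  ℕ × (Fin K → ℕ) × (Fin ℓ → Fin n → Fin N → ℕ)

variable {n m N K ℓ : ℕ}

/-- The points of `DigitSpace` with `t` positive and all digits less than `t`. -/
def digitDomain (n N K ℓ : ℕ) : Set (DigitSpace n N K ℓ) :=
  {v | 1 ≤ v.1 ∧ (∀ k, v.2.1 k < v.1) ∧ ∀ i j d, v.2.2 i j d < v.1}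

/-- The points `(t, y, X)` of `digitDomain` such that `X` consists of pairwise distinct points of
`L(t)` at which the objective is at least `y + s - t ^ P`. -/
def witnessSet (c : Fin n → Polynomial ℤ) (A : Matrix (Fin m) (Fin n) (Polynomial ℤ))
    (b : Fin m → Polynomial ℤ) (N K ℓ P : ℕ) (s : ℤ) : Set (DigitSpace n N K ℓ) :=
  {v | v ∈ digitDomain n N K ℓ ∧
    (∀ i r, ∑ j, evZ (A r j) v.1 * digitSum v.1 (v.2.2 i j) = evZ (b r) v.1) ∧
    (∀ i, digitSum v.1 v.2.1 + s - (v.1 : ℤ) ^ P ≤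
      ∑ j, evZ (c j) v.1 * digitSum v.1 (v.2.2 i j)) ∧
    Function.Injective v.2.2}

theorem isAffine_param : IsAffine (fun v : DigitSpace n N K ℓ => (v.1 : ℤ)) :=
  ⟨0, ⟨⟨fun v => (v.1 : ℤ), rfl⟩, fun _ _ => Nat.cast_add _ _⟩, fun _ => (zero_add _).symm⟩

theorem isAffine_value (k : Fin K) : IsAffine (fun v : DigitSpace n N K ℓ => (v.2.1 k : ℤ)) :=
  ⟨0, ⟨⟨fun v => (v.2.1 k : ℤ), rfl⟩, fun _ _ => Nat.cast_add _ _⟩, fun _ => (zero_add _).symm⟩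

theorem isAffine_coord (i : Fin ℓ) (j : Fin n) (d : Fin N) :
    IsAffine (fun v : DigitSpace n N K ℓ => (v.2.2 i j d : ℤ)) :=
  ⟨0, ⟨⟨fun v => (v.2.2 i j d : ℤ), rfl⟩, fun _ _ => Nat.cast_add _ _⟩, fun _ => (zero_add _).symm⟩

theorem isSemilinearSet_digitDomain : IsSemilinearSet (digitDomain n N K ℓ) := by
  have h1 : IsSemilinearSet ({v : DigitSpace n N K ℓ | 0 ≤ (v.1 : ℤ) + -1} ∩
      ((⋂ k, {v : DigitSpace n N K ℓ | 0 ≤ ((v.1 : ℤ) - v.2.1 k) + -1}) ∩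
      ⋂ i, ⋂ j, ⋂ d, {v : DigitSpace n N K ℓ | 0 ≤ ((v.1 : ℤ) - v.2.2 i j d) + -1})) := by
    refine (isSemilinearSet_nonneg (isAffine_param.add (IsAffine.const _))).inter
      ((IsSemilinearSet.iInter fun k => ?_).inter (IsSemilinearSet.iInter fun i =>
        IsSemilinearSet.iInter fun j => IsSemilinearSet.iInter fun d => ?_))
    · exact isSemilinearSet_nonneg ((isAffine_param.sub (isAffine_value k)).add (IsAffine.const _))
    · exact isSemilinearSet_nonneg
        ((isAffine_param.sub (isAffine_coord i j d)).add (IsAffine.const _))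
  convert h1 using 1
  ext v
  simp only [digitDomain, Set.mem_ofPred_eq, Set.mem_inter_iff, Set.mem_iInter]
  refine and_congr (by omega) (and_congr (forall_congr' fun k => by omega)
    (forall_congr' fun i => forall_congr' fun j => forall_congr' fun d => by omega))

theorem isSemilinearSet_injective :
    IsSemilinearSet {v : DigitSpace n N K ℓ | Function.Injective v.2.2} := by
  have h1 : IsSemilinearSet (⋂ q : {q : Fin ℓ × Fin ℓ // q.1 ≠ q.2},
      (⋂ j, ⋂ d, ({v : DigitSpace n N K ℓ | 0 ≤ (v.2.2 q.1.1 j d : ℤ) - v.2.2 q.1.2 j d} ∩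
        {v : DigitSpace n N K ℓ | 0 ≤ (v.2.2 q.1.2 j d : ℤ) - v.2.2 q.1.1 j d}))ᶜ) := by
    refine IsSemilinearSet.iInter fun q => (IsSemilinearSet.iInter fun j =>
      IsSemilinearSet.iInter fun d => ?_).compl
    exact (isSemilinearSet_nonneg ((isAffine_coord _ j d).sub (isAffine_coord _ j d))).inter
      (isSemilinearSet_nonneg ((isAffine_coord _ j d).sub (isAffine_coord _ j d)))
  convert h1 using 1
  ext v
  simp only [Set.mem_ofPred_eq, Set.mem_inter_iff, Set.mem_iInter, Set.mem_compl_iff]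
  constructor
  · rintro h ⟨⟨i, i'⟩, hne⟩ hcon
    apply hne
    apply h
    ext j d
    obtain ⟨h1, h2⟩ := hcon j d
    dsimp only at h1 h2 ⊢
    omega
  · intro h i i' heq
    by_contra hne
    apply h ⟨(i, i'), hne⟩
    intro j d
    simp [heq]

theorem isSemilinearSet_witnessSet (c : Fin n → Polynomial ℤ)
    (A : Matrix (Fin m) (Fin n) (Polynomial ℤ)) (b : Fin m → Polynomial ℤ) (N K ℓ P : ℕ) (s : ℤ) :
    IsSemilinearSet (witnessSet c A b N K ℓ P s) := by
  set D := digitDomain n N K ℓ with hDdef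
  set τ : DigitSpace n N K ℓ → ℤ := fun v => (v.1 : ℤ) with hτdef
  have hD : IsSemilinearSet D := isSemilinearSet_digitDomain
  have hτ : IsAffine τ := isAffine_param
  have hτ1 : ∀ v ∈ D, 1 ≤ τ v := fun v hv => by
    have := hv.1
    simp only [hτdef]
    omega
  have hconst : ∀ a : ℤ, BaseTForm D τ (fun _ => a) := fun a =>
    BaseTForm.of_affine (IsAffine.const a) |a| fun v hv =>
      le_mul_of_one_le_right (abs_nonneg a) (hτ1 v hv)
  have hdig : ∀ u : DigitSpace n N K ℓ → ℕ, IsAffine (fun v => (u v : ℤ)) →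
      (∀ v ∈ D, u v < v.1) → BaseTForm D τ (fun v => (u v : ℤ)) := fun u hu hlt =>
    BaseTForm.of_affine hu 1 fun v hv => by
      have := hlt v hv
      simp only [hτdef, Nat.abs_cast]
      omega
  have hval : BaseTForm D τ (fun v => digitSum v.1 v.2.1) := by
    refine BaseTForm.sum _ fun k _ => ?_
    have := (hdig (fun v => v.2.1 k) (isAffine_value k) fun v hv => hv.2.1 k).pow_mul (k : ℕ)
    convert this using 2
    exact mul_comm _ _
  have hcoord : ∀ i j, BaseTForm D τ (fun v => digitSum v.1 (v.2.2 i j)) := by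
    intro i j
    refine BaseTForm.sum _ fun d _ => ?_
    have := (hdig (fun v => v.2.2 i j d) (isAffine_coord i j d)
      fun v hv => hv.2.2 i j d).pow_mul (d : ℕ)
    convert this using 2
    exact mul_comm _ _
  have hlin : ∀ (a : Fin n → Polynomial ℤ) (i : Fin ℓ),
      BaseTForm D τ (fun v => ∑ j, evZ (a j) v.1 * digitSum v.1 (v.2.2 i j)) := fun a i =>
    BaseTForm.sum _ fun j _ => (hcoord i j).eval_mul (a j)
  have hb : ∀ p : Polynomial ℤ, BaseTForm D τ (fun v => evZ p v.1) := by
    intro p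
    have := (hconst 1).eval_mul p
    simp only [mul_one] at this
    exact this
  have hpow : BaseTForm D τ (fun v => (v.1 : ℤ) ^ P) := by
    simpa using (hconst 1).pow_mul P
  have h1 : IsSemilinearSet (D ∩ ((⋂ i, ⋂ r, {v : DigitSpace n N K ℓ | v ∈ D ∧
      ∑ j, evZ (A r j) v.1 * digitSum v.1 (v.2.2 i j) = evZ (b r) v.1}) ∩
      ((⋂ i, {v : DigitSpace n N K ℓ | v ∈ D ∧ 0 ≤ -s +
        (((∑ j, evZ (c j) v.1 * digitSum v.1 (v.2.2 i j)) - digitSum v.1 v.2.1) +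
          (v.1 : ℤ) ^ P)}) ∩
      {v : DigitSpace n N K ℓ | Function.Injective v.2.2}))) := by
    refine hD.inter ((IsSemilinearSet.iInter fun i => IsSemilinearSet.iInter fun r => ?_).inter
      ((IsSemilinearSet.iInter fun i => ?_).inter isSemilinearSet_injective))
    · exact (hlin (A r) i).isSemilinearSet_eq hD hτ hτ1 (hb (b r))
    · exact (((hlin c i).sub hval).add hpow).isSemilinearSet hD hτ hτ1 (-s)
  convert h1 using 1
  ext v
  simp only [witnessSet, Set.mem_ofPred_eq, Set.mem_inter_iff, Set.mem_iInter]
  constructor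
  · rintro ⟨hv, h1, h2, h3⟩
    exact ⟨hv, fun i r => ⟨hv, h1 i r⟩, fun i => ⟨hv, by linarith [h2 i]⟩, h3⟩
  · rintro ⟨hv, h1, h2, h3⟩
    exact ⟨hv, fun i r => (h1 i r).2, fun i => by linarith [(h2 i).2], h3⟩

/-- The feasible integer points `L(t)`. -/
def latticePts (A : Matrix (Fin m) (Fin n) (Polynomial ℤ)) (b : Fin m → Polynomial ℤ) (t : ℕ) :
    Set (Fin n → ℤ) :=
  {x : Fin n → ℤ | (∀ j, 0 ≤ x j) ∧ ∀ i, ∑ j, evZ (A i j) t * x j = evZ (b i) t}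

/-- If the coordinates of the feasible points have `N` digits, then `witnessSet` projects onto the
pairs `(t, y)` for which the `ℓ`th largest value is at least `y + s - t ^ P`. -/
theorem exists_mem_witnessSet_iff (c : Fin n → Polynomial ℤ)
    (A : Matrix (Fin m) (Fin n) (Polynomial ℤ)) (b : Fin m → Polynomial ℤ) (N K ℓ P : ℕ) (s : ℤ)
    (hℓ : 0 < ℓ) {t : ℕ} (ht : 1 ≤ t) (hfin : (latticePts A b t).Finite)
    (hN : ∀ x ∈ latticePts A b t, ∀ j, x j < (t : ℤ) ^ N) (y : Fin K → ℕ) :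
    (∃ X, (t, y, X) ∈ witnessSet c A b N K ℓ P s) ↔
      (∀ k, y k < t) ∧ ((digitSum t y + s - (t : ℤ) ^ P : ℤ) : WithBot ℤ) ≤
        nthLargest (valsOf (latticePts A b t) (fun x => ∑ j, evZ (c j) t * x j)) ℓ := by
  rw [le_nthLargest_valsOf_iff hfin _ hℓ]
  constructor
  · rintro ⟨X, ⟨-, hy, hX⟩, h1, h2, h3⟩
    refine ⟨hy, fun i j => digitSum t (X i j), ?_,
      fun i => ⟨⟨fun j => digitSum_nonneg _, h1 i⟩, h2 i⟩⟩
    intro i i' heq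
    apply h3
    ext1 j
    exact digitSum_inj (hX i j) (hX i' j) (congrFun heq j)
  · rintro ⟨hy, Z, hinj, hZ⟩
    choose X hX hXZ using fun i j => exists_digits ((hZ i).1.1 j) (hN _ (hZ i).1 j)
    refine ⟨X, ⟨ht, hy, hX⟩, ?_, ?_, ?_⟩
    · intro i r
      simp only [hXZ]
      exact (hZ i).1.2 r
    · intro i
      simp only [hXZ]
      exact (hZ i).2
    · intro i i' heq
      apply hinj
      ext j
      rw [← hXZ, ← hXZ]
      exact congrArg _ (congrFun heq j)

theorem eqp_latticePts (c : Fin n → Polynomial ℤ) (A : Matrix (Fin m) (Fin n) (Polynomial ℤ))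
    (b : Fin m → Polynomial ℤ)
    (hbdd : ∀ t : ℕ, 0 < t → Bornology.IsBounded
      {x : Fin n → ℝ | (∀ j, 0 ≤ x j) ∧ ∀ i, ∑ j, evR (A i j) t * x j = evR (b i) t})
    (ℓ : ℕ) (hℓ : 0 < ℓ) :
    IsEQP (fun t : ℕ =>
      nthLargest (valsOf (latticePts A b t) (fun x => ∑ j, evZ (c j) t * x j)) ℓ) := by
  obtain ⟨N, hN⟩ := exists_coord_lt_pow A b hbdd
  choose M hM using fun j => exists_abs_eval_lt_pow (c j)
  -- `t ^ P` dominates the objective on `L(t)`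
  set P := (∑ j, M j) + N + 1 with hP
  obtain ⟨t₀, ht₀⟩ := Filter.eventually_atTop.1 (hN.and ((Filter.eventually_all.2 hM).and
    (Filter.eventually_ge_atTop (n + 3))))
  set g : ℕ → WithBot ℤ := fun t : ℕ =>
      nthLargest (valsOf (latticePts A b t) (fun x => ∑ j, evZ (c j) t * x j)) ℓ with hg
  have hcoord : ∀ t ≥ t₀, ∀ x ∈ latticePts A b t, ∀ j, x j < (t : ℤ) ^ N := by
    intro t ht x hx j
    have := (ht₀ t ht).1 (fun j => (x j : ℝ)) (fun j => by exact_mod_cast hx.1 j) (fun i => by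
      have := hx.2 i
      unfold evZ at this
      unfold evR
      exact_mod_cast this) j
    exact_mod_cast this
  have hfin : ∀ t ≥ t₀, (latticePts A b t).Finite := by
    intro t ht
    apply (Set.finite_Icc (0 : Fin n → ℤ) (fun _ => (t : ℤ) ^ N)).subset
    intro x hx
    exact ⟨fun j => hx.1 j, fun j => (hcoord t ht x hx j).le⟩
  have hobj : ∀ t ≥ t₀, ∀ x ∈ latticePts A b t, |∑ j, evZ (c j) t * x j| ≤ (t : ℤ) ^ P := by
    intro t ht x hx
    have ht3 : (n : ℤ) + 3 ≤ t := by exact_mod_cast (ht₀ t ht).2.2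
    calc |∑ j, evZ (c j) t * x j| ≤ ∑ j, |evZ (c j) t * x j| := Finset.abs_sum_le_sum_abs _ _
      _ ≤ ∑ _j : Fin n, (t : ℤ) ^ (∑ j, M j) * (t : ℤ) ^ N := by
          apply Finset.sum_le_sum
          intro j _
          rw [abs_mul, abs_of_nonneg (hx.1 j)]
          exact mul_le_mul ((ht₀ t ht).2.1 j _ (Finset.single_le_sum
            (fun j _ => Nat.zero_le (M j)) (Finset.mem_univ j))).le (hcoord t ht x hx j).le
            (hx.1 j) (by positivity)
      _ = n * (t : ℤ) ^ (∑ j, M j + N) := by simp [pow_add]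
      _ ≤ t * (t : ℤ) ^ (∑ j, M j + N) := by
          apply mul_le_mul_of_nonneg_right _ (by positivity)
          omega
      _ = (t : ℤ) ^ P := by rw [hP]; ring
  let G : ℤ → Set (ℕ × (Fin (P + 1) → ℕ)) := fun s =>
    {p | ∃ X, (p.1, p.2, X) ∈ witnessSet c A b N (P + 1) ℓ P s}
  have hG : ∀ s, IsSemilinearSet (G s) := by
    intro s
    have := (isSemilinearSet_witnessSet c A b N (P + 1) ℓ P s).image
      ((AddMonoidHom.fst ℕ (Fin (P + 1) → ℕ)).comp (AddMonoidHom.fst _ _) |>.prod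
        ((AddMonoidHom.snd ℕ (Fin (P + 1) → ℕ)).comp (AddMonoidHom.fst _ _)) |>.comp
        ((AddMonoidHom.fst ℕ _).prod ((AddMonoidHom.fst (Fin (P + 1) → ℕ)
          (Fin ℓ → Fin n → Fin N → ℕ)).comp (AddMonoidHom.snd _ _)) |>.prod
          (0 : DigitSpace n N (P + 1) ℓ →+ ℕ)))
    convert this using 1
    ext ⟨t, y⟩
    constructor
    · rintro ⟨X, hX⟩
      exact ⟨_, hX, rfl⟩
    · rintro ⟨⟨t', y', X⟩, hX, heq⟩
      have h1 : t' = t := congrArg Prod.fst heq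
      have h2 : y' = y := congrArg Prod.snd heq
      subst h1 h2
      exact ⟨X, hX⟩
  let T : Set (ℕ × (Fin (P + 1) → ℕ)) := (G 0 \ G 1) ∩ {p | 0 ≤ (p.1 : ℤ) - t₀}
  have hT : IsSemilinearSet T := ((hG 0).sdiff (hG 1)).inter
    (isSemilinearSet_nonneg (IsAffine.sub
      ⟨0, ⟨⟨fun p => (p.1 : ℤ), rfl⟩, fun _ _ => Nat.cast_add _ _⟩, fun _ => (zero_add _).symm⟩
      (IsAffine.const _)))
  -- on the integers, `v ≤ g t` and `¬ v + 1 ≤ g t` together say `g t = v`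
  have hTiff : ∀ t y, (t, y) ∈ T ↔ t₀ ≤ t ∧ (∀ k, y k < t) ∧
      g t = ((digitSum t y - (t : ℤ) ^ P : ℤ) : WithBot ℤ) := by
    intro t y
    have hge : (t, y) ∈ ({p | 0 ≤ (p.1 : ℤ) - t₀} : Set (ℕ × (Fin (P + 1) → ℕ))) ↔ t₀ ≤ t := by
      simp
    rw [Set.mem_inter_iff, hge, and_comm]
    refine and_congr_right fun ht => ?_
    have key := fun s => exists_mem_witnessSet_iff c A b N (P + 1) ℓ P s hℓ
      (by have := (ht₀ t ht).2.2; omega) (hfin t ht) (hcoord t ht) y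
    change ((∃ X, (t, y, X) ∈ _) ∧ ¬ (∃ X, (t, y, X) ∈ _)) ↔ _
    rw [key, key]
    change (_ ∧ _ ≤ g t) ∧ ¬ (_ ∧ _ ≤ g t) ↔ _
    cases hgt : g t with
    | bot => simp
    | coe z =>
      simp only [WithBot.coe_le_coe, WithBot.coe_inj]
      constructor
      · rintro ⟨⟨h1, h2⟩, h3⟩
        refine ⟨h1, ?_⟩
        have : ¬ (digitSum t y + 1 - (t : ℤ) ^ P ≤ z) := fun h => h3 ⟨h1, h⟩
        omega
      · rintro ⟨h1, h2⟩
        exact ⟨⟨h1, by omega⟩, fun h => by have := h.2; omega⟩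
  refine isEQP_of_isSemilinearSet hT ?_ g P t₀ (fun t y h => ((hTiff t y).1 h).2.2) ?_
  · rintro ⟨t, y⟩ hp ⟨t', y'⟩ hq (rfl : t = t')
    obtain ⟨-, h1, h2⟩ := (hTiff _ _).1 hp
    obtain ⟨-, h1', h2'⟩ := (hTiff _ _).1 hq
    rw [h2, WithBot.coe_inj] at h2'
    exact digitSum_inj h1 h1' (by linarith)
  · intro t ht hne
    obtain ⟨z, hz⟩ := WithBot.ne_bot_iff_exists.1 hne
    have hle := fun v => le_nthLargest_valsOf_iff (hfin t ht)
      (fun x => ∑ j, evZ (c j) t * x j) hℓ v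
    have hle : ∀ v : ℤ, v ≤ z ↔ ∃ X : Fin ℓ → Fin n → ℤ, Function.Injective X ∧
        ∀ i, X i ∈ latticePts A b t ∧ v ≤ ∑ j, evZ (c j) t * X i j := fun v => by
      rw [← hle v, ← WithBot.coe_le_coe, hz]
    obtain ⟨X, hX, hX'⟩ := (hle z).1 le_rfl
    have h0 : -(t : ℤ) ^ P ≤ z := (hle _).2 ⟨X, hX, fun i =>
      ⟨(hX' i).1, (abs_le.1 (hobj t ht _ (hX' i).1)).1⟩⟩
    have h1 : z ≤ (t : ℤ) ^ P :=
      (hX' ⟨0, hℓ⟩).2.trans (abs_le.1 (hobj t ht _ (hX' ⟨0, hℓ⟩).1)).2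
    have ht3 : (3 : ℤ) ≤ t := by
      have := (ht₀ t ht).2.2
      omega
    have hpos : (0 : ℤ) < (t : ℤ) ^ P := by positivity
    clear_value P
    obtain ⟨y, hy, hyz⟩ := exists_digits (N := P + 1) (t := t) (z := z + (t : ℤ) ^ P) (by omega)
      (by rw [pow_succ]; nlinarith)
    exact ⟨y, (hTiff t y).2 ⟨ht, hy, by rw [hyz, ← hz, add_sub_cancel_right]⟩⟩

end main

/-- **Standard form.** For a parametric integer linear program
`R(t) = {x | x ≥ 0 ∧ A(t)x = b(t)}` with polynomial data, bounded for every positive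
integer `t`, every ℓth-largest-value function `f_ℓ` is eventually quasi-polynomial. -/
theorem standard_form_EQP (n m : ℕ) (hn : 0 < n) (hm : 0 < m)
    (c : Fin n → Polynomial ℤ) (A : Matrix (Fin m) (Fin n) (Polynomial ℤ))
    (b : Fin m → Polynomial ℤ)
    (hbdd : ∀ t : ℕ, 0 < t → Bornology.IsBounded
      {x : Fin n → ℝ | (∀ j, 0 ≤ x j) ∧ ∀ i, ∑ j, evR (A i j) t * x j = evR (b i) t}) :
    ∀ ℓ : ℕ, 0 < ℓ → IsEQP (fun t : ℕ =>
      nthLargest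
        (valsOf {x : Fin n → ℤ | (∀ j, 0 ≤ x j) ∧ ∀ i, ∑ j, evZ (A i j) t * x j = evZ (b i) t}
          (fun x => ∑ j, evZ (c j) t * x j)) ℓ) :=
  fun ℓ hℓ => eqp_latticePts c A b hbdd ℓ hℓ
end

section
/- Let n and m be positive integers, let c ∈ (ℤ[t])^n, A ∈ (ℤ[t])^{m×n}, and b ∈ (ℤ[t])^m. For each positive integer t let R(t) = {x ∈ ℝ^n : x ≥ 0 and A(t)x ≤ b(t)} (relations coordinatewise) and L(t) = R(t) ∩ ℤ^n. Assume R(t) is bounded for every positive integer t. For each positive integer ℓ define f_ℓ(t) ∈ ℤ ∪ {−∞} to be the ℓth largest value with multiplicity of the multiset {c(t)ᵀx : x ∈ L(t)}, or −∞ if |L(t)| < ℓ. Then for every positive integer ℓ, the function f_ℓ is eventually quasi-polynomial. -/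
/-! ### Polynomial inequalities as semilinear sets -/

section
variable {M : Type} [AddCommMonoid M] [AddMonoid.FG M]

lemma semilin_le_aux (φ : M →+ ℤ) (k : ℤ) : IsSemilinearSet {x : M | φ x ≤ k} := by
  have h : IsSemilinearSet (Set.Iic k) := by
    apply IsLinearSet.isSemilinearSet
    refine ⟨k, {-1}, by simp, ?_⟩
    ext z
    simp only [Set.mem_Iic, Set.mem_vadd_set, SetLike.mem_coe, AddSubmonoid.mem_closure_singleton,
      vadd_eq_add]
    constructor
    · intro h
      exact ⟨z - k, ⟨(k - z).toNat, by simp; omega⟩, by ring⟩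
    · rintro ⟨y, ⟨n, rfl⟩, rfl⟩
      simp
  exact h.preimage φ

lemma semilin_lt_aux (φ : M →+ ℤ) (k : ℤ) : IsSemilinearSet {x : M | φ x < k} := by
  convert! semilin_le_aux φ (k - 1) using 3
  omega

/-- The carry argument. On `D`, each `F i` is `O(τ)`, so `F 0 + k 0 + j` lies in `((i - 1) τ, i τ]`
for one of finitely many carries `i`; for that `i` the constraint becomes one with one power of `τ`
fewer and `j` replaced by `i`. -/
lemma semilin_horner_aux (τ : M →+ ℤ) (D : Set M) (hD : IsSemilinearSet D)
    (hτ : ∀ x ∈ D, 1 ≤ τ x) (C : ℤ) (d : ℕ) :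
    ∀ (F : ℕ → (M →+ ℤ)) (k : ℕ → ℤ) (_ : ∀ x ∈ D, ∀ i < d, |F i x| ≤ C * τ x) (j : ℤ),
      IsSemilinearSet {x ∈ D | j + ∑ i ∈ Finset.range d, τ x ^ i * (F i x + k i) ≤ 0} := by
  induction d with
  | zero =>
    intro F k _ j
    by_cases hj : j ≤ 0
    · simpa [hj] using hD
    · simp [hj]
  | succ d ih =>
    intro F k hF j
    set K : ℤ := C + |k 0 + j| with hK
    have key : {x ∈ D | j + ∑ i ∈ Finset.range (d + 1), τ x ^ i * (F i x + k i) ≤ 0} =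
        ⋃ i ∈ Finset.Icc (-K) (K + 1),
          (({x : M | (F 0 - i • τ) x ≤ -(k 0 + j)} ∩
            {x : M | ((i - 1) • τ - F 0) x < k 0 + j}) ∩
          {x ∈ D | i + ∑ l ∈ Finset.range d, τ x ^ l * (F (l + 1) x + k (l + 1)) ≤ 0}) := by
      ext x
      simp only [Set.mem_ofPred_eq, Set.mem_iUnion, Set.mem_inter_iff, Finset.sum_range_succ',
        AddMonoidHom.sub_apply, AddMonoidHom.coe_smul, Pi.smul_apply, smul_eq_mul, exists_prop,
        Finset.mem_Icc]
      set E := ∑ l ∈ Finset.range d, τ x ^ l * (F (l + 1) x + k (l + 1)) with hE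
      have hE' : ∑ l ∈ Finset.range d, τ x ^ (l + 1) * (F (l + 1) x + k (l + 1)) = τ x * E := by
        rw [hE, Finset.mul_sum]
        refine Finset.sum_congr rfl fun l _ => by ring
      rw [hE']
      -- once `(i - 1) t < r ≤ i t`, the inequality `r + t E ≤ 0` carries over to `i + E ≤ 0`
      have carry : ∀ i r t : ℤ, 1 ≤ t → (i - 1) * t < r → r ≤ i * t →
          (r + t * E ≤ 0 ↔ i + E ≤ 0) := by
        intro i r t ht h1 h2
        constructor
        · intro h
          by_contra! hc
          nlinarith
        · intro h
          nlinarith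
      constructor
      · rintro ⟨hx, h⟩
        have ht := hτ x hx
        have hF0 := abs_le.1 (hF x hx 0 (by omega))
        set r := F 0 x + (k 0 + j) with hr
        have hkj := abs_le.1 (le_refl |k 0 + j|)
        have habs := abs_nonneg (k 0 + j)
        have hr1 : r ≤ K * τ x := by nlinarith
        have hr2 : -(K * τ x) ≤ r := by nlinarith
        have hd := Int.mul_ediv_add_emod (-r) (τ x)
        have hm0 := Int.emod_nonneg (-r) (show τ x ≠ 0 by omega)
        have hm1 := Int.emod_lt_of_pos (-r) (show 0 < τ x by omega)
        set q := (-r) / τ x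
        have e1 : (-q - 1) * τ x < r := by nlinarith
        have e2 : r ≤ -q * τ x := by nlinarith
        refine ⟨-q, ⟨?_, ?_⟩, ⟨by linarith, by linarith⟩, hx, ?_⟩
        · by_contra! hc
          nlinarith
        · by_contra! hc
          nlinarith
        · rw [← carry (-q) r (τ x) ht e1 e2]
          simp only [pow_zero, one_mul] at h
          linarith
      · rintro ⟨i, -, ⟨h1, h2⟩, hx, h⟩
        refine ⟨hx, ?_⟩
        rw [← carry i (F 0 x + (k 0 + j)) (τ x) (hτ x hx) (by linarith) (by linarith)] at h
        simp only [pow_zero, one_mul]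
        linarith
    rw [key]
    refine IsSemilinearSet.biUnion_finset fun i _ => ?_
    exact ((semilin_le_aux _ _).inter (semilin_lt_aux _ _)).inter
      (ih (fun l => F (l + 1)) (fun l => k (l + 1)) (fun x hx i hi => hF x hx (i + 1) (by omega)) i)

/-- A linear inequality in the `y s` whose coefficients are polynomials in `τ` defines a semilinear
set, as long as `|y s| ≤ τ`. -/
lemma semilin_poly_le {ι : Type} [Fintype ι] (τ : M →+ ℤ) (y : ι → (M →+ ℤ)) (D : Set M)
    (hD : IsSemilinearSet D) (hτ : ∀ x ∈ D, 1 ≤ τ x) (hy : ∀ x ∈ D, ∀ s, |y s x| ≤ τ x)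
    (p : ι → Polynomial ℤ) (q : Polynomial ℤ) :
    IsSemilinearSet {x ∈ D | ∑ s, (p s).eval (τ x) * y s x ≤ q.eval (τ x)} := by
  obtain ⟨d, hdp, hdq⟩ : ∃ d, (∀ s, (p s).natDegree < d) ∧ q.natDegree < d := by
    refine ⟨(∑ s, (p s).natDegree) + q.natDegree + 1, fun s => ?_, by omega⟩
    have := Finset.single_le_sum (f := fun s => (p s).natDegree) (fun _ _ => Nat.zero_le _)
      (Finset.mem_univ s)
    omega
  obtain ⟨C, hC⟩ : ∃ C : ℤ, ∀ i < d, ∑ s, |(p s).coeff i| ≤ C :=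
    ⟨∑ i ∈ Finset.range d, ∑ s, |(p s).coeff i|, fun i hi =>
      Finset.single_le_sum (f := fun i => ∑ s, |(p s).coeff i|)
        (fun _ _ => Finset.sum_nonneg fun _ _ => abs_nonneg _) (Finset.mem_range.2 hi)⟩
  convert! semilin_horner_aux τ D hD hτ C d (fun i => ∑ s, (p s).coeff i • y s)
    (fun i => - q.coeff i) ?_ 0 using 3 with x
  · have e1 : ∑ s, (p s).eval (τ x) * y s x
        = ∑ i ∈ Finset.range d, τ x ^ i * ∑ s, (p s).coeff i * y s x := by
      simp_rw [Finset.mul_sum]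
      rw [Finset.sum_comm]
      refine Finset.sum_congr rfl fun s _ => ?_
      rw [Polynomial.eval_eq_sum_range' (hdp s), Finset.sum_mul]
      exact Finset.sum_congr rfl fun i _ => by ring
    rw [e1, Polynomial.eval_eq_sum_range' hdq, ← sub_nonpos, ← Finset.sum_sub_distrib, zero_add]
    simp only [AddMonoidHom.finsetSum_apply, AddMonoidHom.coe_smul, Pi.smul_apply, smul_eq_mul]
    refine iff_of_eq (congrArg (fun z : ℤ => x ∈ D ∧ z ≤ 0) (Finset.sum_congr rfl fun i _ => by ring))
  · intro x hx i hi
    simp only [AddMonoidHom.finsetSum_apply, AddMonoidHom.coe_smul, Pi.smul_apply, smul_eq_mul]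
    calc |∑ s, (p s).coeff i * y s x| ≤ ∑ s, |(p s).coeff i * y s x| :=
          Finset.abs_sum_le_sum_abs _ _
      _ ≤ ∑ s, |(p s).coeff i| * τ x := by
          refine Finset.sum_le_sum fun s _ => ?_
          rw [abs_mul]
          exact mul_le_mul_of_nonneg_left (hy x hx s) (abs_nonneg _)
      _ = (∑ s, |(p s).coeff i|) * τ x := by rw [Finset.sum_mul]
      _ ≤ C * τ x := mul_le_mul_of_nonneg_right (hC i hi) (by have := hτ x hx; omega)
end

/-! ### Bounding the polyhedron -/

/-- Fourier–Motzkin bound: if the system in `(u, y)` has entries at most `t ^ k` and bounds `u`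
above, then it forces `u ≤ t ^ k'` with `k'` depending only on `k` and the number of variables `y`.
The number of rows (indexed by `ι`) grows during the elimination and plays no role. -/
lemma fm_bound (n : ℕ) : ∀ k : ℕ, ∃ k' : ℕ, ∀ (t : ℤ), 2 ≤ t → ∀ (ι : Type) [Finite ι]
    (c : ι → ℤ) (a : ι → Fin n → ℤ) (b : ι → ℤ),
    (∀ i, |c i| ≤ t ^ k) → (∀ i j, |a i j| ≤ t ^ k) → (∀ i, |b i| ≤ t ^ k) →
    BddAbove {u : ℝ | ∃ y : Fin n → ℝ, ∀ i, c i * u + ∑ j, a i j * y j ≤ b i} →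
    ∀ u : ℝ, (∃ y : Fin n → ℝ, ∀ i, c i * u + ∑ j, a i j * y j ≤ b i) → u ≤ (t : ℝ) ^ k' := by
  induction n with
  | zero =>
    intro k
    refine ⟨k, fun t ht ι _ c a b hc ha hb hbd u ⟨y, hu⟩ => ?_⟩
    simp only [Finset.univ_eq_empty, Finset.sum_empty, add_zero] at hbd hu
    obtain ⟨i, hi⟩ : ∃ i, 0 < c i := by
      by_contra! hneg
      obtain ⟨B, hB⟩ := hbd
      have : max u B + 1 ≤ B := hB ⟨0, fun i => by
        have h1 : (c i : ℝ) ≤ 0 := by exact_mod_cast hneg i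
        have := le_max_left u B
        have := hu i
        nlinarith⟩
      have := le_max_right u B
      linarith
    have h1 : (1 : ℝ) ≤ c i := by exact_mod_cast hi
    have h2 : (b i : ℝ) ≤ (t : ℝ) ^ k := by exact_mod_cast (abs_le.1 (hb i)).2
    have h3 := hu i
    have ht0 : (0:ℝ) ≤ (t : ℝ) ^ k := by
      have : (0:ℝ) ≤ t := by exact_mod_cast (by omega : (0:ℤ) ≤ t)
      positivity
    by_contra! hc
    nlinarith
  | succ n ih =>
    intro k
    obtain ⟨k', hk'⟩ := ih (2 * k + 1)
    refine ⟨k', fun t ht ι _ c a b hc ha hb hbd u hu => ?_⟩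
    -- each pair of rows is replaced by a nonnegative combination `lam * row i + mu * row j`
    -- from which the first variable has disappeared
    obtain ⟨lam, mu, hlam, hmu, hlam', hmu', hcancel, hzero, hpair⟩ : ∃ lam mu : ι × ι → ℤ,
        (∀ r, 0 ≤ lam r) ∧ (∀ r, 0 ≤ mu r) ∧ (∀ r, lam r ≤ t ^ k) ∧ (∀ r, mu r ≤ t ^ k) ∧
        (∀ r, lam r * a r.1 0 + mu r * a r.2 0 = 0) ∧
        (∀ i, a i 0 = 0 → lam (i, i) = 1 ∧ mu (i, i) = 0) ∧
        (∀ i j, 0 < a i 0 → a j 0 < 0 → lam (i, j) = - a j 0 ∧ mu (i, j) = a i 0) := by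
      have h1 : 1 ≤ t ^ k := one_le_pow₀ (by omega)
      refine ⟨fun r => if a r.1 0 = 0 then 1 else if 0 < a r.1 0 ∧ a r.2 0 < 0 then - a r.2 0 else 0,
        fun r => if a r.1 0 = 0 then 0 else if 0 < a r.1 0 ∧ a r.2 0 < 0 then a r.1 0 else 0,
        ?_, ?_, ?_, ?_, ?_, ?_, ?_⟩
      · intro r; dsimp only; split_ifs <;> omega
      · intro r; dsimp only; split_ifs <;> omega
      · intro r; have := abs_le.1 (ha r.2 0); dsimp only; split_ifs <;> omega
      · intro r; have := abs_le.1 (ha r.1 0); dsimp only; split_ifs <;> omega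
      · intro r
        dsimp only
        split_ifs with h2 h3
        · simp [h2]
        · ring
        · simp
      · intro i hi; simp [hi]
      · intro i j hi hj; simp [hi, hj, hi.ne']
    have hbound : ∀ (r : ι × ι) (x y : ℤ), |x| ≤ t ^ k → |y| ≤ t ^ k →
        |lam r * x + mu r * y| ≤ t ^ (2 * k + 1) := by
      intro r x y hx hy
      have h0 : 0 ≤ t ^ k := by positivity
      have e1 : |lam r * x| ≤ t ^ k * t ^ k := by
        rw [abs_mul, abs_of_nonneg (hlam r)]
        exact mul_le_mul (hlam' r) hx (abs_nonneg _) h0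
      have e2 : |mu r * y| ≤ t ^ k * t ^ k := by
        rw [abs_mul, abs_of_nonneg (hmu r)]
        exact mul_le_mul (hmu' r) hy (abs_nonneg _) h0
      calc _ ≤ |lam r * x| + |mu r * y| := abs_add_le _ _
        _ ≤ 2 * (t ^ k * t ^ k) := by linarith
        _ ≤ t * (t ^ k * t ^ k) := by
          apply mul_le_mul_of_nonneg_right ht; positivity
        _ = _ := by ring
    have hequiv : ∀ u : ℝ, (∃ y : Fin (n + 1) → ℝ, ∀ i, c i * u + ∑ j, a i j * y j ≤ b i) ↔
        ∃ y : Fin n → ℝ, ∀ r : ι × ι, ((lam r * c r.1 + mu r * c r.2 : ℤ) : ℝ) * u +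
          ∑ j, ((lam r * a r.1 j.succ + mu r * a r.2 j.succ : ℤ) : ℝ) * y j ≤
          ((lam r * b r.1 + mu r * b r.2 : ℤ) : ℝ) := by
      intro u
      have hsum : ∀ (y : Fin n → ℝ) (r : ι × ι),
          ((lam r * c r.1 + mu r * c r.2 : ℤ) : ℝ) * u +
          ∑ j, ((lam r * a r.1 j.succ + mu r * a r.2 j.succ : ℤ) : ℝ) * y j =
          lam r * (c r.1 * u + ∑ j, a r.1 j.succ * y j) +
            mu r * (c r.2 * u + ∑ j, a r.2 j.succ * y j) := by
        intro y r
        have : ∑ j, ((lam r * a r.1 j.succ + mu r * a r.2 j.succ : ℤ) : ℝ) * y j =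
          lam r * ∑ j, a r.1 j.succ * y j + mu r * ∑ j, a r.2 j.succ * y j := by
          rw [Finset.mul_sum, Finset.mul_sum, ← Finset.sum_add_distrib]
          refine Finset.sum_congr rfl fun j _ => by push_cast; ring
        rw [this]
        push_cast
        ring
      constructor
      · rintro ⟨y, hy⟩
        refine ⟨fun j => y j.succ, fun r => ?_⟩
        rw [hsum]
        have h1 := hy r.1
        have h2 := hy r.2
        rw [Fin.sum_univ_succ] at h1 h2
        have h3 : (lam r : ℝ) * a r.1 0 + mu r * a r.2 0 = 0 := by exact_mod_cast hcancel r
        have h4 : (0 : ℝ) ≤ lam r := by exact_mod_cast hlam r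
        have h5 : (0 : ℝ) ≤ mu r := by exact_mod_cast hmu r
        have h6 := mul_le_mul_of_nonneg_left h1 h4
        have h7 := mul_le_mul_of_nonneg_left h2 h5
        have h8 : ((lam r : ℝ) * a r.1 0 + mu r * a r.2 0) * y 0 = 0 := by rw [h3]; ring
        push_cast
        linarith
      · rintro ⟨y, hy⟩
        simp only [hsum] at hy
        set R : ι → ℝ := fun i => c i * u + ∑ j, a i j.succ * y j with hR
        change ∀ r : ι × ι, lam r * R r.1 + mu r * R r.2 ≤ _ at hy
        let Up : Set ℝ := (fun i => (b i - R i) / a i 0) '' {i | 0 < a i 0}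
        let Lo : Set ℝ := (fun i => (b i - R i) / a i 0) '' {i | a i 0 < 0}
        have hLU : ∀ x ∈ Lo, ∀ z ∈ Up, x ≤ z := by
          rintro _ ⟨j, hj, rfl⟩ _ ⟨i, hi, rfl⟩
          have h := hy (i, j)
          obtain ⟨e1, e2⟩ := hpair i j hi hj
          push_cast [e1, e2] at h
          have hi' : (0 : ℝ) < a i 0 := by exact_mod_cast hi
          have hj' : (a j 0 : ℝ) < 0 := by exact_mod_cast hj
          dsimp only
          rw [div_le_iff_of_neg hj', div_mul_eq_mul_div, div_le_iff₀ hi']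
          linarith
        have hUf : Up.Finite := (Set.toFinite _).image _
        have hLf : Lo.Finite := (Set.toFinite _).image _
        obtain ⟨z, hzL, hzU⟩ : ∃ z, z ∈ upperBounds Lo ∧ z ∈ lowerBounds Up := by
          rcases Lo.eq_empty_or_nonempty with h | h
          · obtain ⟨z, hz⟩ := hUf.bddBelow
            exact ⟨z, by simp [h], hz⟩
          rcases Up.eq_empty_or_nonempty with h' | h'
          · obtain ⟨z, hz⟩ := hLf.bddAbove
            exact ⟨z, hz, by simp [h']⟩
          exact exists_between_of_forall_le h h' hLU
        refine ⟨Fin.cons z y, fun i => ?_⟩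
        rw [Fin.sum_univ_succ]
        simp only [Fin.cons_zero, Fin.cons_succ]
        have goal' : a i 0 * z + R i ≤ b i := by
          rcases lt_trichotomy (a i 0) 0 with hi | hi | hi
          · have h := hzL ⟨i, hi, rfl⟩
            have hi' : (a i 0 : ℝ) < 0 := by exact_mod_cast hi
            dsimp only at h
            rw [div_le_iff_of_neg hi'] at h
            linarith
          · have h := hy (i, i)
            obtain ⟨e1, e2⟩ := hzero i hi
            push_cast [e1, e2] at h
            rw [hi]
            push_cast
            linarith
          · have h := hzU ⟨i, hi, rfl⟩
            have hi' : (0 : ℝ) < a i 0 := by exact_mod_cast hi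
            dsimp only at h
            rw [le_div_iff₀ hi'] at h
            linarith
        rw [hR] at goal'
        dsimp only at goal'
        linarith
    simp only [hequiv] at hbd hu
    exact hk' t ht (ι × ι) _ _ _ (fun r => hbound r _ _ (hc _) (hc _))
      (fun r j => hbound r _ _ (ha _ _) (ha _ _)) (fun r => hbound r _ _ (hb _) (hb _)) hbd u hu

lemma poly_bound (p : Polynomial ℤ) : ∃ k : ℕ, ∀ t : ℤ, 2 ≤ t → |p.eval t| ≤ t ^ k := by
  induction p using Polynomial.induction_on' with
  | add p q hp hq =>
    obtain ⟨k, hk⟩ := hp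
    obtain ⟨l, hl⟩ := hq
    refine ⟨max k l + 1, fun t ht => ?_⟩
    have h1 : t ^ k ≤ t ^ max k l := pow_le_pow_right₀ (by omega) (le_max_left _ _)
    have h2 : t ^ l ≤ t ^ max k l := pow_le_pow_right₀ (by omega) (le_max_right _ _)
    have h3 := hk t ht
    have h4 := hl t ht
    rw [Polynomial.eval_add, pow_succ]
    have h5 := abs_add_le (p.eval t) (q.eval t)
    have h6 : 0 ≤ t ^ max k l := by positivity
    nlinarith
  | monomial n a =>
    refine ⟨a.natAbs + n, fun t ht => ?_⟩
    rw [Polynomial.eval_monomial, abs_mul, pow_add, abs_of_nonneg (by positivity : 0 ≤ t ^ n)]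
    refine mul_le_mul_of_nonneg_right ?_ (by positivity)
    calc |a| = (a.natAbs : ℤ) := by simp
      _ ≤ 2 ^ a.natAbs := by exact_mod_cast Nat.lt_two_pow_self.le
      _ ≤ t ^ a.natAbs := pow_le_pow_left₀ (by norm_num) ht _

lemma poly_bound_finite {ι : Type} [Finite ι] (p : ι → Polynomial ℤ) :
    ∃ k : ℕ, ∀ t : ℤ, 2 ≤ t → ∀ i, |(p i).eval t| ≤ t ^ k := by
  choose k hk using fun i => poly_bound (p i)
  obtain ⟨K, hK⟩ := (Set.finite_range k).bddAbove
  exact ⟨K, fun t ht i => (hk i t ht).trans (pow_le_pow_right₀ (by omega) (hK ⟨i, rfl⟩))⟩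

/-! ### From semilinear graphs to quasi-polynomials -/

section
open Pointwise

/-- On a linear set that is the graph of a partial function of `t`, that function is affine in `t`
(comparing `base + e' • g` and `base + e • v` determines the slope), so `∑ p_s(t) a_s` is
polynomial. If all periods have first coordinate `0`, only one `t` occurs, and `T` excludes it. -/
lemma linear_graph_poly {κ : Type} [Fintype κ] (L : Set (ℕ × (κ → ℕ))) (hL : IsLinearSet L)
    (hfun : ∀ t a b, (t, a) ∈ L → (t, b) ∈ L → a = b) (p : κ → Polynomial ℤ) :
    ∃ (P : Polynomial ℝ) (T : ℕ), ∀ t a, (t, a) ∈ L → T ≤ t →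
      ((∑ s, evZ (p s) t * (a s : ℤ) : ℤ) : ℝ) = P.eval (t : ℝ) := by
  obtain ⟨⟨t₀, a₀⟩, G, -, rfl⟩ := hL
  by_cases h : ∃ g ∈ AddSubmonoid.closure G, 0 < g.1
  · obtain ⟨⟨e, g⟩, hg, he⟩ := h
    refine ⟨∑ s, (p s).map (Int.castRingHom ℝ) * (Polynomial.C (a₀ s : ℝ) +
      Polynomial.C ((g s : ℝ) / e) * (Polynomial.X - Polynomial.C (t₀ : ℝ))), 0, ?_⟩
    rintro t a ⟨⟨e', v⟩, hv, heq⟩ -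
    simp only [vadd_eq_add, Prod.mk_add_mk, Prod.mk.injEq] at heq
    obtain ⟨rfl, rfl⟩ := heq
    dsimp only at he
    -- the two points `base + e' • g` and `base + e • v` lie over the same `t`
    have hsame := hfun (t₀ + e * e') (a₀ + e' • g) (a₀ + e • v)
      ⟨e' • (e, g), nsmul_mem hg _, by simp [mul_comm]⟩ ⟨e • (e', v), nsmul_mem hv _, by simp⟩
    rw [Polynomial.eval_finsetSum]
    push_cast
    refine Finset.sum_congr rfl fun s _ => ?_
    have hs := congrFun hsame s
    simp only [Pi.add_apply, Pi.smul_apply, smul_eq_mul, add_right_inj] at hs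
    have hs' : (e' : ℝ) * g s = e * v s := by exact_mod_cast hs
    have he' : (e : ℝ) ≠ 0 := by positivity
    have hev : (evZ (p s) (t₀ + e') : ℝ) =
        ((p s).map (Int.castRingHom ℝ)).eval ((t₀ : ℝ) + e') := by
      have := Polynomial.eval_intCast_map (Int.castRingHom ℝ) (p s) ((t₀ + e' : ℕ) : ℤ)
      simp only [evZ]
      push_cast at this ⊢
      simpa using this.symm
    rw [hev]
    simp only [Polynomial.eval_mul, Polynomial.eval_add, Polynomial.eval_sub, Polynomial.eval_C,
      Polynomial.eval_X, Pi.add_apply]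
    congr 1
    push_cast
    field_simp
    linarith
  · push Not at h
    refine ⟨0, t₀ + 1, ?_⟩
    rintro t a ⟨⟨e', v⟩, hv, heq⟩ ht
    simp only [vadd_eq_add, Prod.mk_add_mk, Prod.mk.injEq] at heq
    have := h _ hv
    simp only at this
    omega

/-- A function read off, by a linear form with polynomial coefficients, from a semilinear partial
function of `t` is eventually quasi-polynomial; it is `-∞` where the partial function is undefined.
The period is a common period of the projections of the linear pieces. -/
lemma eqp_of_graph {κ : Type} [Fintype κ] (G : Set (ℕ × (κ → ℕ))) (hG : IsSemilinearSet G)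
    (hfun : ∀ t a b, (t, a) ∈ G → (t, b) ∈ G → a = b) (p : κ → Polynomial ℤ)
    (g : ℕ → WithBot ℤ)
    (h1 : ∀ᶠ t in Filter.atTop, ∀ a, (t, a) ∈ G →
      g t = ((∑ s, evZ (p s) t * (a s : ℤ) : ℤ) : WithBot ℤ))
    (h2 : ∀ᶠ t in Filter.atTop, (¬ ∃ a, (t, a) ∈ G) → g t = ⊥) : IsEQP g := by
  classical
  obtain ⟨S, hS, hSL, rfl⟩ := hG
  have := hS.to_subtype
  have := Fintype.ofFinite S
  have hpoly := fun L : S => linear_graph_poly L.1 (hSL L.1 L.2)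
    (fun t a b ha hb => hfun t a b ⟨L.1, L.2, ha⟩ ⟨L.1, L.2, hb⟩) p
  choose P T hPT using hpoly
  have hper := fun L : S => Nat.isSemilinearSet_iff_ultimately_periodic.1
    ((hSL L.1 L.2).isSemilinearSet.image (AddMonoidHom.fst ℕ (κ → ℕ)))
  choose k d hd hk using hper
  obtain ⟨N, hN⟩ := Filter.eventually_atTop.1 (h1.and h2)
  obtain ⟨B, hB⟩ : ∃ B, N ≤ B ∧ ∀ L, T L ≤ B ∧ k L ≤ B :=
    ⟨N + ∑ L, (T L + k L), by omega, fun L => by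
      have := Finset.single_le_sum (f := fun L => T L + k L) (fun _ _ => Nat.zero_le _)
        (Finset.mem_univ L)
      omega⟩
  have hmul : ∀ (L : S) (t m : ℕ), k L ≤ t →
      (t ∈ AddMonoidHom.fst ℕ (κ → ℕ) '' L.1 ↔ t + d L * m ∈ AddMonoidHom.fst ℕ (κ → ℕ) '' L.1) := by
    intro L t m ht
    induction m with
    | zero => simp
    | succ m ih =>
      rw [ih, hk L _ (by omega), mul_add, mul_one, add_assoc]
  have hmod : ∀ (L : S) (t t' : ℕ), k L ≤ t → k L ≤ t' → t % (∏ L, d L) = t' % (∏ L, d L) →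
      t ∈ AddMonoidHom.fst ℕ (κ → ℕ) '' L.1 → t' ∈ AddMonoidHom.fst ℕ (κ → ℕ) '' L.1 := by
    intro L t t' ht ht' hmod hmem
    have hmod' : t ≡ t' [MOD d L] :=
      Nat.ModEq.of_dvd (Finset.dvd_prod_of_mem d (Finset.mem_univ L)) hmod
    rcases le_total t t' with hle | hle
    · obtain ⟨m, hm⟩ := (Nat.modEq_iff_dvd' hle).1 hmod'
      rw [hmul L t m ht, ← hm] at hmem
      convert! hmem using 1
      omega
    · obtain ⟨m, hm⟩ := (Nat.modEq_iff_dvd' hle).1 hmod'.symm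
      rw [hmul L t' m ht', ← hm]
      convert! hmem using 1
      omega
  refine ⟨∏ L, d L, Finset.prod_pos fun L _ => hd L, fun r =>
    if h : ∃ L : S, ∃ t, B ≤ t ∧ t % (∏ L, d L) = r ∧ t ∈ AddMonoidHom.fst ℕ (κ → ℕ) '' L.1
      then some (P h.choose) else none, Filter.eventually_atTop.2 ⟨B, fun t ht => ?_⟩⟩
  dsimp only
  split_ifs with h
  · obtain ⟨t', ht', hr, hmem⟩ := h.choose_spec
    set L := h.choose
    obtain ⟨⟨_, a⟩, ha, rfl⟩ :=
      hmod L t' t (by have := hB.2 L; omega) (by have := hB.2 L; omega) hr hmem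
    simp only [AddMonoidHom.coe_fst] at *
    rw [(hN _ (by omega)).1 a ⟨L.1, L.2, ha⟩]
    have := hPT L _ a ha (by have := hB.2 L; omega)
    simp only [Option.map_some, Option.getD_some, WithBot.map_coe]
    rw [this]
  · rw [(hN t (by omega)).2]
    · simp
    · rintro ⟨a, L, hL, ha⟩
      exact h ⟨⟨L, hL⟩, t, ht, rfl, (t, a), ha, rfl⟩

end

/-! ### Largest values and ranks -/

lemma getElem_of_count {α : Type} [LinearOrder α] (v : α) : ∀ (l : List α) (k : ℕ),
    l.Pairwise (· ≥ ·) → l.countP (fun a => v < a) ≤ k → k < l.countP (fun a => v ≤ a) →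
    l[k]? = some v := by
  intro l
  induction l with
  | nil => intro k _ _ h; simp at h
  | cons a l ih =>
    intro k hl h1 h2
    rw [List.pairwise_cons] at hl
    have hz : a ≤ v → l.countP (fun a => decide (v < a)) = 0 := by
      intro hav
      rw [List.countP_eq_zero]
      intro b hb
      simpa using (hl.1 b hb).trans hav
    have hz' : a < v → l.countP (fun a => decide (v ≤ a)) = 0 := by
      intro hav
      rw [List.countP_eq_zero]
      intro b hb
      simpa using (hl.1 b hb).trans_lt hav
    rw [List.countP_cons] at h1 h2
    cases k with
    | zero =>
      rcases lt_trichotomy a v with h | h | h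
      · simp [hz' h, not_le.2 h] at h2
      · simp [h]
      · simp [h] at h1
    | succ k =>
      rw [List.getElem?_cons_succ]
      apply ih k hl.2
      · by_cases h : v < a
        · simpa [h] using h1
        · rw [hz (not_lt.1 h)]; omega
      · split_ifs at h2 <;> omega

/-- The map inside `nthLargest` elaborates to a monadic lift of `M` followed by the identity map;
this lemma replaces it by the map of coercions. -/
lemma nthLargest_eq (M : Multiset ℤ) (ℓ : ℕ) :
    nthLargest M ℓ = nthLargestW (M.map WithBot.some) ℓ := by
  unfold nthLargest
  congr 1
  rw [Multiset.map_id']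
  exact Multiset.bind_singleton M WithBot.some

lemma nthLargest_eq_of_count (M : Multiset ℤ) (ℓ : ℕ) (hℓ : 0 < ℓ) (v : ℤ)
    (h1 : M.countP (fun a => v < a) < ℓ) (h2 : ℓ ≤ M.countP (fun a => v ≤ a)) :
    nthLargest M ℓ = v := by
  rw [nthLargest_eq, nthLargestW]
  have hc : ∀ (q : WithBot ℤ → Prop) [DecidablePred q],
      (((M.map WithBot.some).sort (· ≤ ·)).reverse).countP (fun a => q a) =
        M.countP (fun z => q (WithBot.some z)) := by
    intro q _
    rw [List.countP_reverse, ← Multiset.coe_countP, Multiset.sort_eq, Multiset.countP_map,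
      Multiset.countP_eq_card_filter]
  rw [getElem_of_count (v : WithBot ℤ)]
  · rfl
  · rw [List.pairwise_reverse]
    exact Multiset.pairwise_sort _ _
  · rw [hc]
    simp only [WithBot.coe_lt_coe]
    omega
  · rw [hc]
    simp only [WithBot.coe_le_coe]
    omega

lemma nthLargest_eq_bot (M : Multiset ℤ) (ℓ : ℕ) (h : M.card < ℓ) : nthLargest M ℓ = ⊥ := by
  rw [nthLargest_eq, nthLargestW, List.getElem?_eq_none]
  · rfl
  · simp
    omega

lemma valsOf_eq_map {n : ℕ} {α : Type} [DecidableEq α] (L : Set (Fin n → ℤ))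
    (g : (Fin n → ℤ) → ℤ) (St : Finset α) (x : α → Fin n → ℤ) (hinj : Set.InjOn x St)
    (hL : L = x '' St) : valsOf L g = St.val.map (fun a => g (x a)) := by
  have hfin : L.Finite := hL ▸ St.finite_toSet.image x
  have : hfin.toFinset = St.image x := by ext y; simp [hL]
  rw [valsOf, dif_pos hfin, this, Finset.image_val_of_injOn hinj, Multiset.map_map]
  rfl

/-- The elements of `St` lying strictly below at least `k` elements of `St` for the key `w`. -/
def rankGE {α : Type} (St : Finset α) (w : α → ℤ) (k : ℕ) : Finset α :=
  St.filter fun a => k ≤ (St.filter fun b => w a < w b).card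

lemma rankGE_succ {α : Type} (St : Finset α) (w : α → ℤ) (hw : Set.InjOn w St) (k : ℕ) (a : α) :
    a ∈ rankGE St w (k + 1) ↔ a ∈ St ∧ ∃ b ∈ rankGE St w k, w a < w b := by
  classical
  simp only [rankGE, Finset.mem_filter]
  constructor
  · rintro ⟨ha, hk⟩
    refine ⟨ha, ?_⟩
    obtain ⟨b, hb, hmin⟩ := (St.filter fun b => w a < w b).exists_min_image w
      (Finset.card_pos.1 (by omega))
    rw [Finset.mem_filter] at hb
    refine ⟨b, ⟨hb.1, ?_⟩, hb.2⟩
    have hsub : (St.filter fun c => w a < w c) ⊆ insert b (St.filter fun c => w b < w c) := by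
      intro c hc
      have h1 := hmin c hc
      rw [Finset.mem_filter] at hc
      rw [Finset.mem_insert, Finset.mem_filter]
      rcases h1.eq_or_lt with h | h
      · exact Or.inl (hw hc.1 hb.1 h.symm)
      · exact Or.inr ⟨hc.1, h⟩
    have := (Finset.card_le_card hsub).trans (Finset.card_insert_le _ _)
    omega
  · rintro ⟨ha, b, ⟨hb, hk⟩, hab⟩
    refine ⟨ha, ?_⟩
    have hsub : insert b (St.filter fun c => w b < w c) ⊆ (St.filter fun c => w a < w c) := by
      intro c hc
      rw [Finset.mem_insert, Finset.mem_filter] at hc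
      rw [Finset.mem_filter]
      rcases hc with rfl | hc
      · exact ⟨hb, hab⟩
      · exact ⟨hc.1, hab.trans hc.2⟩
    have := Finset.card_le_card hsub
    rw [Finset.card_insert_of_notMem (by simp)] at this
    omega

/-- If `St` has more than `k` elements, some element has exactly `k` elements above it. -/
lemma exists_rank_eq {α : Type} (St : Finset α) (w : α → ℤ) (hw : Set.InjOn w St) (k : ℕ)
    (hk : k < St.card) : ∃ a ∈ rankGE St w k, a ∉ rankGE St w (k + 1) := by
  classical
  have hne : (rankGE St w k).Nonempty := by
    obtain ⟨a, ha, hmin⟩ := St.exists_min_image w (Finset.card_pos.1 (by omega))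
    refine ⟨a, Finset.mem_filter.2 ⟨ha, ?_⟩⟩
    have hsub : St ⊆ insert a (St.filter fun c => w a < w c) := by
      intro c hc
      rw [Finset.mem_insert, Finset.mem_filter]
      rcases (hmin c hc).eq_or_lt with h | h
      · exact Or.inl (hw hc ha h.symm)
      · exact Or.inr ⟨hc, h⟩
    have := (Finset.card_le_card hsub).trans (Finset.card_insert_le _ _)
    omega
  obtain ⟨a, ha, hmax⟩ := (rankGE St w k).exists_max_image w hne
  refine ⟨a, ha, fun h => ?_⟩
  obtain ⟨-, b, hb, hab⟩ := (rankGE_succ St w hw k a).1 h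
  exact absurd (hmax b hb) (not_le.2 hab)

lemma rank_eq_unique {α : Type} (St : Finset α) (w : α → ℤ) (hw : Set.InjOn w St) (k : ℕ)
    {a b : α} (ha : a ∈ rankGE St w k) (ha' : a ∉ rankGE St w (k + 1))
    (hb : b ∈ rankGE St w k) (hb' : b ∉ rankGE St w (k + 1)) : a = b := by
  have haS := (Finset.mem_filter.1 ha).1
  have hbS := (Finset.mem_filter.1 hb).1
  rcases lt_trichotomy (w a) (w b) with h | h | h
  · exact absurd ((rankGE_succ St w hw k a).2 ⟨haS, b, hb, h⟩) ha'
  · exact hw haS hbS h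
  · exact absurd ((rankGE_succ St w hw k b).2 ⟨hbS, a, ha, h⟩) hb'

/-- If the injective key `w` refines the objective `G`, then the element with exactly `k` elements
above it for `w` realises the `(k + 1)`st largest value of `G` with multiplicity. -/
lemma nthLargest_of_rank {α : Type} (St : Finset α) (w G : α → ℤ) (hw : Set.InjOn w St)
    (hwG : ∀ a ∈ St, ∀ b ∈ St, w a < w b → G a ≤ G b) (k : ℕ) (a : α)
    (ha : a ∈ rankGE St w k) (ha' : a ∉ rankGE St w (k + 1)) :
    nthLargest (St.val.map G) (k + 1) = G a := by
  classical
  obtain ⟨haS, hak⟩ := Finset.mem_filter.1 ha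
  have hak' : (St.filter fun b => w a < w b).card < k + 1 := by
    by_contra! h
    exact ha' (Finset.mem_filter.2 ⟨haS, h⟩)
  apply nthLargest_eq_of_count _ _ (by omega)
  · rw [Multiset.countP_map]
    change (St.filter fun b => G a < G b).card < k + 1
    refine lt_of_le_of_lt (Finset.card_le_card fun b hb => ?_) hak'
    rw [Finset.mem_filter] at hb ⊢
    refine ⟨hb.1, ?_⟩
    rcases lt_trichotomy (w a) (w b) with h | h | h
    · exact h
    · rw [hw haS hb.1 h] at hb; exact absurd hb.2 (lt_irrefl _)
    · exact absurd (hwG b hb.1 a haS h) (not_le.2 hb.2)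
  · rw [Multiset.countP_map]
    change k + 1 ≤ (St.filter fun b => G a ≤ G b).card
    have hsub : insert a (St.filter fun c => w a < w c) ⊆ (St.filter fun b => G a ≤ G b) := by
      intro c hc
      rw [Finset.mem_insert, Finset.mem_filter] at hc
      rw [Finset.mem_filter]
      rcases hc with rfl | hc
      · exact ⟨haS, le_rfl⟩
      · exact ⟨hc.1, hwG a haS c hc.1 hc.2⟩
    have := Finset.card_le_card hsub
    rw [Finset.card_insert_of_notMem (by simp)] at this
    omega

/-! ### Base-`t` digits -/

lemma digits_inj {r t : ℕ} (a b : Fin r → ℕ) (ha : ∀ i, a i < t) (hb : ∀ i, b i < t)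
    (h : ∑ i, a i * t ^ (i : ℕ) = ∑ i, b i * t ^ (i : ℕ)) : a = b := by
  have := finFunctionFinEquiv.injective (a₁ := fun i => (⟨a i, ha i⟩ : Fin t))
    (a₂ := fun i => (⟨b i, hb i⟩ : Fin t)) (Fin.ext (by simpa [finFunctionFinEquiv_apply] using h))
  funext i
  exact congrArg Fin.val (congrFun this i)

lemma digits_lt {r t : ℕ} (a : Fin r → ℕ) (ha : ∀ i, a i < t) :
    ∑ i, a i * t ^ (i : ℕ) < t ^ r := by
  simpa [finFunctionFinEquiv_apply] using
    (finFunctionFinEquiv (fun i => (⟨a i, ha i⟩ : Fin t))).isLt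

lemma digits_surj {r t : ℕ} (x : ℕ) (hx : x < t ^ r) :
    ∃ a : Fin r → ℕ, (∀ i, a i < t) ∧ ∑ i, a i * t ^ (i : ℕ) = x := by
  refine ⟨fun i => (finFunctionFinEquiv.symm (⟨x, hx⟩ : Fin (t ^ r)) i : ℕ), fun i => Fin.isLt _, ?_⟩
  rw [← finFunctionFinEquiv_apply, Equiv.apply_symm_apply]

/-- The parameter `t`, as an integer-valued additive map on pairs `(t, a)`. -/
def tHom (κ : Type) : ℕ × (κ → ℕ) →+ ℤ :=
  (Nat.castAddMonoidHom ℤ).comp (AddMonoidHom.fst ℕ (κ → ℕ))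

/-- The coordinate `a s`, as an integer-valued additive map on pairs `(t, a)`. -/
def aHom {κ : Type} (s : κ) : ℕ × (κ → ℕ) →+ ℤ :=
  (Nat.castAddMonoidHom ℤ).comp ((Pi.evalAddMonoidHom _ s).comp (AddMonoidHom.snd ℕ (κ → ℕ)))

@[simp] lemma tHom_apply {κ : Type} (x : ℕ × (κ → ℕ)) : tHom κ x = x.1 := rfl
@[simp] lemma aHom_apply {κ : Type} (s : κ) (x : ℕ × (κ → ℕ)) : aHom s x = x.2 s := rfl

lemma semilin_digits {κ : Type} [Fintype κ] :
    IsSemilinearSet {x : ℕ × (κ → ℕ) | 1 ≤ x.1 ∧ ∀ s, x.2 s < x.1} := by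
  have h : IsSemilinearSet ({x : ℕ × (κ → ℕ) | (-tHom κ) x ≤ -1} ∩
      ⋂ s, {x : ℕ × (κ → ℕ) | (aHom s - tHom κ : ℕ × (κ → ℕ) →+ ℤ) x < 0}) :=
    (semilin_le_aux _ _).inter (IsSemilinearSet.iInter fun s => semilin_lt_aux _ _)
  convert! h using 1
  ext x
  simp

section
variable {κ : Type} [Fintype κ] [DecidableEq κ]

/-- The `κ`-tuples of base-`t` digits `a` satisfying `∑ s, p i s (t) * a s ≤ b i (t)` for all `i`. -/
def digitPts {m : ℕ} (p : Fin m → κ → Polynomial ℤ) (b : Fin m → Polynomial ℤ) (t : ℕ) :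
    Finset (κ → ℕ) :=
  (Fintype.piFinset fun _ => Finset.range t).filter
    fun a => ∀ i, ∑ s, evZ (p i s) t * (a s : ℤ) ≤ evZ (b i) t

lemma mem_digitPts {m : ℕ} (p : Fin m → κ → Polynomial ℤ) (b : Fin m → Polynomial ℤ) (t : ℕ)
    (a : κ → ℕ) : a ∈ digitPts p b t ↔
      (∀ s, a s < t) ∧ ∀ i, ∑ s, evZ (p i s) t * (a s : ℤ) ≤ evZ (b i) t := by
  simp [digitPts]

lemma semilin_digitPts {m : ℕ} (p : Fin m → κ → Polynomial ℤ) (b : Fin m → Polynomial ℤ) :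
    IsSemilinearSet {x : ℕ × (κ → ℕ) | 1 ≤ x.1 ∧ x.2 ∈ digitPts p b x.1} := by
  have h := (semilin_digits (κ := κ)).inter (IsSemilinearSet.iInter fun i =>
    semilin_poly_le (tHom κ) (fun s => aHom s) _ (semilin_digits (κ := κ))
      (fun x hx => by have := hx.1; simp; omega)
      (fun x hx s => by have := hx.2 s; simp; omega) (p i) (b i))
  convert! h using 1
  ext x
  simp only [mem_digitPts, Set.mem_ofPred_eq, Set.mem_inter_iff, Set.mem_iInter, tHom_apply,
    aHom_apply, evZ]
  constructor
  · rintro ⟨h1, h2, h3⟩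
    exact ⟨⟨h1, h2⟩, fun i => ⟨⟨h1, h2⟩, h3 i⟩⟩
  · rintro ⟨⟨h1, h2⟩, h3⟩
    exact ⟨h1, h2, fun i => (h3 i).2⟩

/-- Points with at least `k` points above them form a semilinear set: `a` has `k + 1` points above
it iff some point above `a` has `k` points above it, which is a projection. Integrality turns the
strict comparison of keys into `w(a) - w(c) ≤ -1`, and differences of digits are at most `t`. -/
lemma semilin_rankGE {m : ℕ} (p : Fin m → κ → Polynomial ℤ) (b : Fin m → Polynomial ℤ)
    (w : κ → Polynomial ℤ)
    (hw : ∀ t, 1 ≤ t → Set.InjOn (fun a : κ → ℕ => ∑ s, evZ (w s) t * (a s : ℤ)) (digitPts p b t))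
    (k : ℕ) : IsSemilinearSet {x : ℕ × (κ → ℕ) | 1 ≤ x.1 ∧
      x.2 ∈ rankGE (digitPts p b x.1) (fun a => ∑ s, evZ (w s) x.1 * (a s : ℤ)) k} := by
  induction k with
  | zero => simpa [rankGE] using semilin_digitPts p b
  | succ k ih =>
    -- triples `(t, a, c)`: two points over the same parameter
    let M := ℕ × (κ → ℕ) × (κ → ℕ)
    let π₁ : M →+ ℕ × (κ → ℕ) := (AddMonoidHom.fst _ _).prod
      ((AddMonoidHom.fst _ _).comp (AddMonoidHom.snd _ _))
    let π₂ : M →+ ℕ × (κ → ℕ) := (AddMonoidHom.fst _ _).prod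
      ((AddMonoidHom.snd _ _).comp (AddMonoidHom.snd _ _))
    have hD : IsSemilinearSet ((π₁ ⁻¹' {x | 1 ≤ x.1 ∧ x.2 ∈ digitPts p b x.1}) ∩ (π₂ ⁻¹' _) : Set M) :=
      ((semilin_digitPts p b).preimage π₁).inter (ih.preimage π₂)
    have h := (semilin_poly_le ((tHom κ).comp π₁)
      (fun s => (aHom s).comp π₁ - (aHom s).comp π₂) _ hD
      (fun x hx => by have := hx.1.1; simp only [AddMonoidHom.comp_apply, tHom_apply]; exact_mod_cast this)
      (fun x hx s => by
        have h1 := ((mem_digitPts _ _ _ _).1 hx.1.2).1 s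
        have h2 := ((mem_digitPts _ _ _ _).1 (Finset.mem_filter.1 hx.2.2).1).1 s
        have h3 : (π₁ x).1 = (π₂ x).1 := rfl
        simp only [AddMonoidHom.comp_apply, tHom_apply, aHom_apply, AddMonoidHom.sub_apply]
        rw [abs_le]
        omega) w (-1)).image π₁
    convert! h using 1
    ext ⟨t, a⟩
    simp only [Set.mem_ofPred_eq, Set.mem_image]
    constructor
    · rintro ⟨ht, ha⟩
      rw [rankGE_succ _ _ (hw t ht)] at ha
      obtain ⟨ha, c, hc, hac⟩ := ha
      refine ⟨(t, a, c), ⟨⟨⟨ht, ha⟩, ⟨ht, hc⟩⟩, ?_⟩, rfl⟩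
      simp only [AddMonoidHom.comp_apply, tHom_apply, aHom_apply, AddMonoidHom.sub_apply, mul_sub,
        Finset.sum_sub_distrib, Polynomial.eval_neg, Polynomial.eval_one]
      simp only [evZ] at hac
      change ∑ s, (w s).eval (t : ℤ) * (a s : ℤ) - ∑ s, (w s).eval (t : ℤ) * (c s : ℤ) ≤ -1
      omega
    · rintro ⟨⟨t', a', c⟩, ⟨⟨⟨ht, ha⟩, ⟨-, hc⟩⟩, hac⟩, heq⟩
      obtain ⟨rfl, rfl⟩ : t' = t ∧ a' = a := Prod.mk.inj heq
      refine ⟨ht, (rankGE_succ _ _ (hw _ ht) _ _).2 ⟨ha, c, hc, ?_⟩⟩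
      simp only [AddMonoidHom.comp_apply, tHom_apply, aHom_apply, AddMonoidHom.sub_apply, mul_sub,
        Finset.sum_sub_distrib, Polynomial.eval_neg, Polynomial.eval_one] at hac
      change ∑ s, (w s).eval (t' : ℤ) * (a' s : ℤ) - ∑ s, (w s).eval (t' : ℤ) * (c s : ℤ) ≤ -1 at hac
      change ∑ s, (w s).eval (t' : ℤ) * (a' s : ℤ) < ∑ s, (w s).eval (t' : ℤ) * (c s : ℤ)
      omega

/-- The theorem for points given by base-`t` digits. -/
lemma eqp_digits {m N : ℕ} (e : κ ≃ Fin N) (p : Fin m → κ → Polynomial ℤ)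
    (b : Fin m → Polynomial ℤ) (q : κ → Polynomial ℤ) (ℓ : ℕ) (hℓ : 0 < ℓ) (g : ℕ → WithBot ℤ)
    (hg : ∀ᶠ t in Filter.atTop, g t = nthLargest ((digitPts p b t).val.map
      fun a => ∑ s, evZ (q s) t * (a s : ℤ)) ℓ) : IsEQP g := by
  obtain ⟨k, rfl⟩ : ∃ k, ℓ = k + 1 := ⟨ℓ - 1, by omega⟩
  -- tie-breaking: the key `t ^ N * objective + (the digits read as one base-t number)`
  set w : κ → Polynomial ℤ := fun s => q s * Polynomial.X ^ N + Polynomial.X ^ (e s : ℕ) with hw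
  set W : ℕ → (κ → ℕ) → ℤ := fun t a => ∑ s, evZ (w s) t * (a s : ℤ) with hW
  set Q : ℕ → (κ → ℕ) → ℤ := fun t a => ∑ s, evZ (q s) t * (a s : ℤ) with hQ
  have hWQ : ∀ t a, W t a = (t : ℤ) ^ N * Q t a +
      ((∑ i, a (e.symm i) * t ^ (i : ℕ) : ℕ) : ℤ) := by
    intro t a
    have h1 : ((∑ i, a (e.symm i) * t ^ (i : ℕ) : ℕ) : ℤ) = ∑ s, (t : ℤ) ^ (e s : ℕ) * a s := by
      rw [← Equiv.sum_comp e]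
      push_cast
      exact Finset.sum_congr rfl fun s _ => by simp [mul_comm]
    rw [h1, hW, hQ, Finset.mul_sum, ← Finset.sum_add_distrib]
    refine Finset.sum_congr rfl fun s _ => ?_
    simp only [hw, evZ, Polynomial.eval_add, Polynomial.eval_mul, Polynomial.eval_pow,
      Polynomial.eval_X]
    ring
  have hmono : ∀ t, 1 ≤ t → ∀ a ∈ digitPts p b t, ∀ c ∈ digitPts p b t, W t a ≤ W t c →
      Q t a ≤ Q t c := by
    intro t ht a ha c hc hac
    rw [hWQ, hWQ] at hac
    have h1 : ((∑ i, c (e.symm i) * t ^ (i : ℕ) : ℕ) : ℤ) < (t : ℤ) ^ N := by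
      exact_mod_cast digits_lt (fun i => c (e.symm i)) (fun i => ((mem_digitPts _ _ _ _).1 hc).1 _)
    have h2 : (0 : ℤ) < (t : ℤ) ^ N := by positivity
    by_contra! h
    have h3 : (t : ℤ) ^ N * (Q t c + 1) ≤ (t : ℤ) ^ N * Q t a :=
      mul_le_mul_of_nonneg_left (by omega) h2.le
    have h4 : (0 : ℤ) ≤ ((∑ i, a (e.symm i) * t ^ (i : ℕ) : ℕ) : ℤ) := by positivity
    linarith
  have hinj : ∀ t, 1 ≤ t → Set.InjOn (W t) (digitPts p b t) := by
    intro t ht a ha c hc hac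
    have hQeq : Q t a = Q t c :=
      le_antisymm (hmono t ht a ha c hc hac.le) (hmono t ht c hc a ha hac.ge)
    rw [hWQ, hWQ, hQeq] at hac
    have h1 : ∑ i, a (e.symm i) * t ^ (i : ℕ) = ∑ i, c (e.symm i) * t ^ (i : ℕ) := by
      have := add_left_cancel hac
      exact_mod_cast this
    have h2 := digits_inj (fun i => a (e.symm i)) (fun i => c (e.symm i))
      (fun i => ((mem_digitPts _ _ _ _).1 ha).1 _) (fun i => ((mem_digitPts _ _ _ _).1 hc).1 _) h1
    funext s
    simpa using congrFun h2 (e s)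
  refine eqp_of_graph ({x : ℕ × (κ → ℕ) | 1 ≤ x.1 ∧ x.2 ∈ rankGE (digitPts p b x.1) (W x.1) k} ∩
      {x : ℕ × (κ → ℕ) | 1 ≤ x.1 ∧ x.2 ∈ rankGE (digitPts p b x.1) (W x.1) (k + 1)}ᶜ)
    ((semilin_rankGE p b w hinj k).inter (semilin_rankGE p b w hinj (k + 1)).compl) ?_ q g ?_ ?_
  · rintro t a c ⟨⟨ht, ha⟩, ha'⟩ ⟨⟨-, hc⟩, hc'⟩
    exact rank_eq_unique _ (W t) (hinj t ht) k ha (fun h => ha' ⟨ht, h⟩) hc (fun h => hc' ⟨ht, h⟩)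
  · filter_upwards [hg] with t hgt
    rintro a ⟨⟨ht, ha⟩, ha'⟩
    rw [hgt]
    exact nthLargest_of_rank _ (W t) (Q t) (hinj t ht)
      (fun x hx y hy hxy => hmono t ht x hx y hy hxy.le) k a ha (fun h => ha' ⟨ht, h⟩)
  · filter_upwards [hg, Filter.eventually_ge_atTop 1] with t hgt ht hno
    rw [hgt]
    apply nthLargest_eq_bot
    rw [Multiset.card_map]
    by_contra! hcard
    obtain ⟨a, ha, ha'⟩ := exists_rank_eq _ (W t) (hinj t ht) k (Nat.lt_of_succ_le hcard)
    exact hno ⟨a, ⟨ht, ha⟩, fun h => ha' h.2⟩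
end

/-! ### The parametric program -/

/-- The polyhedra `R(t)` lie in boxes of polynomial size. -/
lemma box_bound (n m : ℕ) (A : Matrix (Fin m) (Fin n) (Polynomial ℤ)) (b : Fin m → Polynomial ℤ)
    (hbdd : ∀ t : ℕ, 0 < t → Bornology.IsBounded
      {x : Fin n → ℝ | (∀ j, 0 ≤ x j) ∧ ∀ i, ∑ j, evR (A i j) t * x j ≤ evR (b i) t}) :
    ∃ r : ℕ, ∀ t : ℕ, 2 ≤ t → ∀ x : Fin n → ℝ, (∀ j, 0 ≤ x j) →
      (∀ i, ∑ j, evR (A i j) t * x j ≤ evR (b i) t) → ∀ j, x j < (t : ℝ) ^ r := by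
  obtain ⟨k₁, hk₁⟩ := poly_bound_finite (fun s : Fin m × Fin n => A s.1 s.2)
  obtain ⟨k₂, hk₂⟩ := poly_bound_finite b
  obtain ⟨k', hk'⟩ := fm_bound n (max k₁ k₂)
  refine ⟨k' + 1, fun t ht x hx0 hx j => ?_⟩
  have ht' : (2 : ℤ) ≤ t := by exact_mod_cast ht
  have hpow1 : (t : ℤ) ^ k₁ ≤ (t : ℤ) ^ max k₁ k₂ := pow_le_pow_right₀ (by omega) (le_max_left _ _)
  have hpow2 : (t : ℤ) ^ k₂ ≤ (t : ℤ) ^ max k₁ k₂ := pow_le_pow_right₀ (by omega) (le_max_right _ _)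
  have hpow0 : (1 : ℤ) ≤ (t : ℤ) ^ max k₁ k₂ := one_le_pow₀ (by omega)
  -- the system for `(u, x)`: the given rows, `-x l ≤ 0`, and `u - x j ≤ 0`
  let c' : Fin m ⊕ Fin n ⊕ Unit → ℤ := Sum.elim 0 (Sum.elim 0 1)
  let a' : Fin m ⊕ Fin n ⊕ Unit → Fin n → ℤ := Sum.elim (fun i l => evZ (A i l) t)
    (Sum.elim (fun l => Pi.single l (-1)) (fun _ => Pi.single j (-1)))
  let b' : Fin m ⊕ Fin n ⊕ Unit → ℤ := Sum.elim (fun i => evZ (b i) t) 0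
  have hsys : ∀ (u : ℝ) (y : Fin n → ℝ), (∀ i, c' i * u + ∑ l, a' i l * y l ≤ b' i) ↔
      ((∀ i, ∑ j, evR (A i j) t * y j ≤ evR (b i) t) ∧ (∀ l, 0 ≤ y l) ∧ u ≤ y j) := by
    intro u y
    simp [c', a', b', Sum.forall, evR, evZ, Pi.single_apply, apply_ite, ite_mul]
  have hsingle : ∀ l l' : Fin n, |(Pi.single l (-1) : Fin n → ℤ) l'| ≤ (t : ℤ) ^ max k₁ k₂ := by
    intro l l'
    rw [Pi.single_apply]
    split_ifs
    · simpa using hpow0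
    · simp
  have hle := hk' t ht' (Fin m ⊕ Fin n ⊕ Unit) c' a' b'
    (by rintro (i | i | i) <;> simp [c', hpow0])
    (by
      rintro (i | i | i) l
      · exact (hk₁ t ht' (i, l)).trans hpow1
      · exact hsingle _ _
      · exact hsingle _ _)
    (by
      rintro (i | i)
      · exact (hk₂ t ht' i).trans hpow2
      · simp [b'])
    (by
      obtain ⟨B, hB⟩ := (hbdd t (by omega)).exists_norm_le
      refine ⟨B, ?_⟩
      rintro u ⟨y, hy⟩
      obtain ⟨h1, h2, h3⟩ := (hsys u y).1 hy
      have h4 := hB y ⟨h2, h1⟩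
      exact h3.trans ((le_abs_self _).trans ((norm_le_pi_norm y j).trans h4)))
    (x j) ⟨x, (hsys _ _).2 ⟨hx, hx0, le_rfl⟩⟩
  refine hle.trans_lt ?_
  push_cast
  exact pow_lt_pow_right₀ (by exact_mod_cast ht) (by omega)

/-- **Canonical form.** For a parametric integer linear program
`R(t) = {x | x ≥ 0 ∧ A(t)x ≤ b(t)}` with polynomial data, bounded for every positive
integer `t`, every ℓth-largest-value function `f_ℓ` is eventually quasi-polynomial. -/
theorem canonical_form_EQP (n m : ℕ) (hn : 0 < n) (hm : 0 < m)
    (c : Fin n → Polynomial ℤ) (A : Matrix (Fin m) (Fin n) (Polynomial ℤ))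
    (b : Fin m → Polynomial ℤ)
    (hbdd : ∀ t : ℕ, 0 < t → Bornology.IsBounded
      {x : Fin n → ℝ | (∀ j, 0 ≤ x j) ∧ ∀ i, ∑ j, evR (A i j) t * x j ≤ evR (b i) t}) :
    ∀ ℓ : ℕ, 0 < ℓ → IsEQP (fun t : ℕ =>
      nthLargest
        (valsOf {x : Fin n → ℤ | (∀ j, 0 ≤ x j) ∧ ∀ i, ∑ j, evZ (A i j) t * x j ≤ evZ (b i) t}
          (fun x => ∑ j, evZ (c j) t * x j)) ℓ) := by
  intro ℓ hℓ
  obtain ⟨r, hr⟩ := box_bound n m A b hbdd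
  -- the integer vector with the given base-`t` digits
  let X : ℕ → (Fin n × Fin r → ℕ) → Fin n → ℤ := fun t a j =>
    ((∑ i, a (j, i) * t ^ (i : ℕ) : ℕ) : ℤ)
  let ext : (Fin n → Polynomial ℤ) → Fin n × Fin r → Polynomial ℤ := fun q s =>
    q s.1 * Polynomial.X ^ (s.2 : ℕ)
  have hX : ∀ (q : Fin n → Polynomial ℤ) t a,
      ∑ j, evZ (q j) t * X t a j = ∑ s, evZ (ext q s) t * (a s : ℤ) := by
    intro q t a
    rw [Fintype.sum_prod_type]
    refine Finset.sum_congr rfl fun j _ => ?_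
    simp only [X, ext, evZ, Polynomial.eval_mul, Polynomial.eval_pow, Polynomial.eval_X]
    push_cast
    rw [Finset.mul_sum]
    exact Finset.sum_congr rfl fun i _ => by ring
  refine eqp_digits finProdFinEquiv (fun i => ext (A i)) b (ext c) ℓ hℓ _ ?_
  filter_upwards [Filter.eventually_ge_atTop 2] with t ht
  rw [valsOf_eq_map _ _ (digitPts (fun i => ext (A i)) b t) (X t)]
  · simp only [hX]
  · intro a ha a' ha' heq
    funext ⟨j, i⟩
    have h1 := congrFun heq j
    simp only [X] at h1
    exact congrFun (digits_inj (fun i => a (j, i)) (fun i => a' (j, i))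
      (fun i => ((mem_digitPts _ _ _ _).1 ha).1 _) (fun i => ((mem_digitPts _ _ _ _).1 ha').1 _)
      (by exact_mod_cast h1)) i
  · ext x
    simp only [Set.mem_ofPred_eq, Set.mem_image]
    constructor
    · rintro ⟨hx0, hx⟩
      have hlt : ∀ j, (x j).toNat < t ^ r := by
        intro j
        have h1 := hr t ht (fun j => (x j : ℝ)) (fun j => by exact_mod_cast hx0 j)
          (fun i => by have := hx i; simp only [evR, evZ] at this ⊢; exact_mod_cast this) j
        have h2 : x j < (t : ℤ) ^ r := by exact_mod_cast h1
        have h3 : ((x j).toNat : ℤ) < (t : ℤ) ^ r := by rwa [Int.toNat_of_nonneg (hx0 j)]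
        exact_mod_cast h3
      choose a ha1 ha2 using fun j => digits_surj _ (hlt j)
      have hXa : X t (fun s => a s.1 s.2) = x := by
        funext j
        simp only [X, ha2]
        exact Int.toNat_of_nonneg (hx0 j)
      refine ⟨fun s => a s.1 s.2, (mem_digitPts _ _ _ _).2 ⟨fun s => ha1 _ _, fun i => ?_⟩, hXa⟩
      rw [← hX, hXa]
      exact hx i
    · rintro ⟨a, ha, rfl⟩
      refine ⟨fun j => Int.natCast_nonneg _, fun i => ?_⟩
      rw [hX]
      exact ((mem_digitPts _ _ _ _).1 ha).2 i
end

section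
/- Let n and m be positive integers, A ∈ (ℤ[t])^{m×n}, and b ∈ (ℤ[t])^m. For each positive integer t let R(t) = {x ∈ ℝ^n : A(t)x ≤ b(t)} (coordinatewise) and L(t) = R(t) ∩ ℤ^n, and assume R(t) is bounded for every positive integer t. Then there exists a positive integer r such that for all sufficiently large positive integers t, every point x ∈ L(t) has |x_i| < t^r for every coordinate i. -/
/-- At an extreme point of a polyhedron the normals of the tight constraints have no common
nonzero orthogonal vector: one could move a little in both directions along it. -/
lemma eq_zero_of_tight {n m : ℕ} (M : Fin m → Fin n → ℝ) (c : Fin m → ℝ) (x : Fin n → ℝ)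
    (hx : x ∈ Set.extremePoints ℝ {x : Fin n → ℝ | ∀ i, ∑ j, M i j * x j ≤ c i})
    (d : Fin n → ℝ) (hd : ∀ i, ∑ j, M i j * x j = c i → ∑ j, M i j * d j = 0) : d = 0 := by
  have key : ∀ s : ℝ, ∀ i, ∑ j, M i j * (x + s • d) j
      = ∑ j, M i j * x j + s * ∑ j, M i j * d j := by
    intro s i
    rw [Finset.mul_sum, ← Finset.sum_add_distrib]
    refine Finset.sum_congr rfl fun j _ => ?_
    simp only [Pi.add_apply, Pi.smul_apply, smul_eq_mul]
    ring
  have hx1 : ∀ i, ∑ j, M i j * x j ≤ c i := hx.1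
  have ev : ∀ᶠ s : ℝ in nhds 0, ∀ i, ∑ j, M i j * (x + s • d) j ≤ c i := by
    rw [Filter.eventually_all]
    intro i
    simp only [key]
    by_cases h : ∑ j, M i j * x j = c i
    · simp [hd i h, hx1 i]
    · have hlt := lt_of_le_of_ne (hx1 i) h
      have hc : Continuous fun s : ℝ => ∑ j, M i j * x j + s * ∑ j, M i j * d j := by fun_prop
      have := hc.continuousAt.eventually_lt (continuousAt_const (y := c i) (x := (0 : ℝ)))
        (by simpa using hlt)
      exact this.mono fun s hs => hs.le
  obtain ⟨ε, hε, hb⟩ := Metric.eventually_nhds_iff.1 ev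
  have h1 := hb (y := ε / 2) (by rw [Real.dist_eq, sub_zero, abs_of_pos] <;> linarith)
  have h2 := hb (y := -(ε / 2)) (by rw [Real.dist_eq, sub_zero, abs_neg, abs_of_pos] <;> linarith)
  -- `x` is the midpoint of `x + (ε / 2) • d` and `x - (ε / 2) • d`, both in the polyhedron.
  have h3 := hx.2 h1 h2 ⟨1 / 2, 1 / 2, by norm_num, by norm_num, by norm_num, by
    ext j
    simp only [Pi.add_apply, Pi.smul_apply, smul_eq_mul]
    ring⟩
  have h4 : (ε / 2) • d = 0 := by simpa using h3
  exact (smul_eq_zero.1 h4).resolve_left (by linarith)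

/-- The coordinates of a vertex are bounded through Cramer's rule. -/
lemma abs_le_of_mem_extremePoints {n m : ℕ} (M : Fin m → Fin n → ℤ) (c : Fin m → ℤ) (B : ℝ)
    (hM : ∀ i j, |(M i j : ℝ)| ≤ B) (hc : ∀ i, |(c i : ℝ)| ≤ B) (x : Fin n → ℝ)
    (hx : x ∈ Set.extremePoints ℝ {x : Fin n → ℝ | ∀ i, ∑ j, (M i j : ℝ) * x j ≤ c i})
    (j : Fin n) : |x j| ≤ n.factorial * B ^ n := by
  let v : {i // ∑ j, (M i j : ℝ) * x j = c i} → Fin n → ℝ := fun i j => M i.1 j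
  -- A functional vanishing on the tight normals is the dot product with a vector orthogonal to them,
  -- and such a vector is zero because `x` is extreme.
  have hspan : Submodule.span ℝ (Set.range v) = ⊤ := by
    by_contra hne
    obtain ⟨f, hf0, hf⟩ := Submodule.exists_le_ker_of_lt_top _ (lt_top_iff_ne_top.2 hne)
    have hfe : ∀ y : Fin n → ℝ, f y = ∑ j, y j * f (Pi.single j 1) := by
      intro y
      conv_lhs => rw [LinearMap.pi_apply_eq_sum_univ f y]
      refine Finset.sum_congr rfl fun j _ => ?_
      rw [smul_eq_mul]
      congr 2
      ext k
      simp [Pi.single_apply, eq_comm]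
    have hd := eq_zero_of_tight (fun i j => (M i j : ℝ)) (fun i => (c i : ℝ)) x hx
      (fun j => f (Pi.single j 1)) (fun i hi => by
        have : f (v ⟨i, hi⟩) = 0 := hf (Submodule.subset_span ⟨_, rfl⟩)
        rwa [hfe] at this)
    apply hf0
    ext1 y
    ext
    simpa using congrFun hd y
  obtain ⟨κ, a, -, hsp, hli⟩ := exists_linearIndependent' ℝ v
  let bas := Module.Basis.mk hli (by rw [hsp, hspan])
  let e : Fin n ≃ κ := (Pi.basisFun ℝ (Fin n)).indexEquiv bas
  let S : Matrix (Fin n) (Fin n) ℤ := Matrix.of fun i j => M (a (e i)).1 j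
  let SR : Matrix (Fin n) (Fin n) ℝ := (Int.castRingHom ℝ).mapMatrix S
  let w : Fin n → ℝ := fun i => c (a (e i)).1
  have hli' : LinearIndependent ℝ SR.row := hli.comp e e.injective
  have hdet : SR.det ≠ 0 :=
    ((Matrix.isUnit_iff_isUnit_det _).1 (Matrix.linearIndependent_rows_iff_isUnit.1 hli')).ne_zero
  have hdetZ : SR.det = (S.det : ℝ) := ((Int.castRingHom ℝ).map_det S).symm
  -- Integrality of the data bounds the denominator in Cramer's rule away from zero.
  have hone : 1 ≤ |SR.det| := by
    rw [hdetZ] at hdet ⊢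
    have : S.det ≠ 0 := by exact_mod_cast hdet
    exact_mod_cast Int.one_le_abs this
  have hSx : SR.mulVec x = w := by
    ext i
    exact (a (e i)).2
  have hcr : SR.det * x j = (SR.updateCol j w).det := by
    rw [← Matrix.cramer_apply, Matrix.cramer_eq_adjugate_mulVec, ← hSx, Matrix.mulVec_mulVec,
      Matrix.adjugate_mul, Matrix.smul_mulVec, Matrix.one_mulVec]
    rfl
  have hle : |(SR.updateCol j w).det| ≤ n.factorial * B ^ n := by
    have := Matrix.det_le (A := SR.updateCol j w) (abv := AbsoluteValue.abs) (x := B) (by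
      intro i k
      by_cases hk : k = j
      · subst hk
        simpa using hc _
      · simpa [Matrix.updateCol_apply, hk] using! hM (a (e i)).1 k)
    simpa using this
  calc |x j| ≤ |SR.det| * |x j| := le_mul_of_one_le_left (abs_nonneg _) hone
    _ = |(SR.updateCol j w).det| := by rw [← abs_mul, hcr]
    _ ≤ _ := hle

/-- Krein–Milman transfers the bound from the vertices to the whole polytope. -/
lemma abs_le_of_isBounded {n m : ℕ} (M : Fin m → Fin n → ℤ) (c : Fin m → ℤ) (B : ℝ)
    (hM : ∀ i j, |(M i j : ℝ)| ≤ B) (hc : ∀ i, |(c i : ℝ)| ≤ B)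
    (hb : Bornology.IsBounded {x : Fin n → ℝ | ∀ i, ∑ j, (M i j : ℝ) * x j ≤ c i})
    (x : Fin n → ℝ) (hx : ∀ i, ∑ j, (M i j : ℝ) * x j ≤ c i) (j : Fin n) :
    |x j| ≤ n.factorial * B ^ n := by
  set P := {x : Fin n → ℝ | ∀ i, ∑ j, (M i j : ℝ) * x j ≤ c i} with hP
  set K : ℝ := n.factorial * B ^ n
  have hclosed : IsClosed P := by
    rw [hP, Set.ofPred_forall]
    exact isClosed_iInter fun i => isClosed_le (by fun_prop) continuous_const
  have hconv : Convex ℝ P := by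
    intro y hy z hz p q hp hq hpq i
    have e : ∑ j, (M i j : ℝ) * (p • y + q • z) j
        = p * ∑ j, (M i j : ℝ) * y j + q * ∑ j, (M i j : ℝ) * z j := by
      rw [Finset.mul_sum, Finset.mul_sum, ← Finset.sum_add_distrib]
      refine Finset.sum_congr rfl fun j _ => ?_
      simp only [Pi.add_apply, Pi.smul_apply, smul_eq_mul]
      ring
    have h1 := mul_le_mul_of_nonneg_left (hy i) hp
    have h2 := mul_le_mul_of_nonneg_left (hz i) hq
    have h3 : p * (c i : ℝ) + q * c i = c i := by rw [← add_mul, hpq, one_mul]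
    rw [e]
    linarith
  have hsub : P ⊆ Set.Icc (fun _ => -K) (fun _ => K) := by
    rw [← closure_convexHull_extremePoints (Metric.isCompact_of_isClosed_isBounded hclosed hb)
      hconv]
    refine closure_minimal (convexHull_min (fun y hy => ?_) (convex_Icc _ _)) isClosed_Icc
    have := abs_le_of_mem_extremePoints M c B hM hc y hy
    exact ⟨fun k => (abs_le.1 (this k)).1, fun k => (abs_le.1 (this k)).2⟩
  have := hsub (show x ∈ P from hx)
  exact abs_le.2 ⟨this.1 j, this.2 j⟩

lemma exists_pow_bound (p : Polynomial ℤ) :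
    ∃ k : ℕ, ∀ᶠ t : ℕ in Filter.atTop, |evZ p t| ≤ (t : ℤ) ^ k := by
  induction p using Polynomial.induction_on' with
  | add p q hp hq =>
    obtain ⟨k, hk⟩ := hp
    obtain ⟨l, hl⟩ := hq
    -- The extra exponent absorbs the factor `2` once `t ≥ 2`.
    refine ⟨max k l + 1, ?_⟩
    filter_upwards [hk, hl, Filter.eventually_ge_atTop 2] with t h1 h2 ht
    have ht' : (2 : ℤ) ≤ t := by exact_mod_cast ht
    have e1 : (t : ℤ) ^ k ≤ t ^ max k l := pow_le_pow_right₀ (by linarith) (le_max_left _ _)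
    have e2 : (t : ℤ) ^ l ≤ t ^ max k l := pow_le_pow_right₀ (by linarith) (le_max_right _ _)
    have e3 : (0 : ℤ) ≤ t ^ max k l := by positivity
    have e4 : evZ (p + q) t = evZ p t + evZ q t := by simp [evZ]
    rw [e4, pow_succ]
    have := abs_add_le (evZ p t) (evZ q t)
    nlinarith
  | monomial d a =>
    refine ⟨d + 1, ?_⟩
    filter_upwards [Filter.eventually_ge_atTop a.natAbs] with t ht
    have ht' : |a| ≤ (t : ℤ) := by rw [Int.abs_eq_natAbs]; exact_mod_cast ht
    have e : |evZ (Polynomial.monomial d a) t| = |a| * (t : ℤ) ^ d := by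
      simp [evZ, abs_mul]
    rw [e, pow_succ, mul_comm]
    gcongr

/-- A finite family of polynomials is eventually dominated by a single power of `t`. -/
lemma exists_uniform_pow_bound {ι : Type*} [Fintype ι] (p : ι → Polynomial ℤ) :
    ∃ k : ℕ, ∀ᶠ t : ℕ in Filter.atTop, ∀ i, |evZ (p i) t| ≤ (t : ℤ) ^ k := by
  choose k hk using fun i => exists_pow_bound (p i)
  refine ⟨∑ i, k i, ?_⟩
  filter_upwards [Filter.eventually_all.2 hk, Filter.eventually_ge_atTop 1] with t h ht i
  refine (h i).trans (pow_le_pow_right₀ (by exact_mod_cast ht) ?_)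
  exact Finset.single_le_sum (fun _ _ => Nat.zero_le _) (Finset.mem_univ i)

/-- For a parametric integer linear program in general form whose real feasible region
is bounded for every positive integer `t`, there is a positive integer `r` such that for
all sufficiently large `t`, every lattice point of the feasible region has all
coordinates of magnitude less than `t^r`. -/
theorem feasible_points_polynomially_bounded (n m : ℕ) (hn : 0 < n) (hm : 0 < m)
    (A : Matrix (Fin m) (Fin n) (Polynomial ℤ)) (b : Fin m → Polynomial ℤ)
    (hbdd : ∀ t : ℕ, 0 < t → Bornology.IsBounded
      {x : Fin n → ℝ | ∀ i, ∑ j, evR (A i j) t * x j ≤ evR (b i) t}) :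
    ∃ r : ℕ, 0 < r ∧ ∀ᶠ t : ℕ in Filter.atTop,
      ∀ x : Fin n → ℤ, (∀ i, ∑ j, evZ (A i j) t * x j ≤ evZ (b i) t) →
        ∀ j, |x j| < (t : ℤ) ^ r := by
  obtain ⟨k, hk⟩ := exists_uniform_pow_bound
    (Sum.elim (fun ij : Fin m × Fin n => A ij.1 ij.2) b)
  refine ⟨k * n + 1, Nat.succ_pos _, ?_⟩
  filter_upwards [hk, Filter.eventually_gt_atTop n.factorial] with t ht htn x hx j
  have ht0 : 0 < t := by omega
  have key := abs_le_of_isBounded (fun i j => evZ (A i j) t) (fun i => evZ (b i) t)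
    ((t : ℝ) ^ k) (fun i j => by exact_mod_cast ht (Sum.inl (i, j)))
    (fun i => by exact_mod_cast ht (Sum.inr i)) (hbdd t ht0) (fun j => (x j : ℝ))
    (fun i => by exact_mod_cast hx i) j
  have key' : |x j| ≤ n.factorial * ((t : ℤ) ^ k) ^ n := by exact_mod_cast key
  refine key'.trans_lt ?_
  rw [← pow_mul, pow_succ, mul_comm]
  gcongr
end

section
/- Let n and m be positive integers, let c ∈ (ℤ[t])^n, let A ∈ ℤ^{m×n} be a constant integer matrix, and let b ∈ (ℤ[t])^m with every entry of degree at most 1 (i.e. entries in ℤt + ℤ). For each positive integer t let R(t) = {x ∈ ℝ^n : x ≥ 0 and Ax ≤ b(t)} (relations coordinatewise) and L(t) = R(t) ∩ ℤ^n. Assume R(t) is bounded for every positive integer t. For each positive integer ℓ define f_ℓ(t) ∈ ℤ ∪ {−∞} to be the ℓth largest value with multiplicity of the multiset {c(t)ᵀx : x ∈ L(t)}, or −∞ if |L(t)| < ℓ. Then for every positive integer ℓ, the function f_ℓ is eventually quasi-polynomial. -/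
section

open Filter
open scoped Pointwise

variable {n : ℕ}

/-! ### Largest values by counting -/

theorem list_le_getElem (z : ℤ) (l : List (WithBot ℤ)) (hl : l.Pairwise (· ≥ ·)) (k : ℕ) :
    (z : WithBot ℤ) ≤ (l[k]?).getD ⊥ ↔ k + 1 ≤ l.countP (fun a => (z : WithBot ℤ) ≤ a) := by
  induction l generalizing k with
  | nil => simp
  | cons a l ih =>
    rw [List.pairwise_cons] at hl
    by_cases ha : (z : WithBot ℤ) ≤ a
    · rw [List.countP_cons_of_pos (by simpa using ha)]
      cases k with
      | zero => simpa using ha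
      | succ k => simpa using ih hl.2 k
    · have h0 : (a :: l).countP (fun a => (z : WithBot ℤ) ≤ a) = 0 := by
        rw [List.countP_eq_zero]
        intro b hb
        have hba : b ≤ a := by
          rcases List.mem_cons.1 hb with rfl | hb
          · exact le_rfl
          · exact hl.1 b hb
        simpa using lt_of_le_of_lt hba (not_le.1 ha)
      rw [h0]
      cases k with
      | zero => simpa using not_le.1 ha
      | succ k =>
        have h1 := ih hl.2 k
        rw [List.countP_cons_of_neg (by simpa using ha)] at h0
        rw [h0] at h1
        simpa using h1

/-- An `ℓ`th largest value is determined by the numbers of values above each threshold. -/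
theorem le_nthLargest {α : Type*} (s : Finset α) (f : α → ℤ) (ℓ : ℕ) (hℓ : 0 < ℓ) (z : ℤ) :
    (z : WithBot ℤ) ≤ nthLargest (s.val.map f) ℓ ↔ ℓ ≤ (s.filter (fun x => z ≤ f x)).card := by
  unfold nthLargest nthLargestW
  rw [list_le_getElem z _ _ (ℓ - 1), Nat.sub_add_cancel hℓ]
  · rw [List.countP_reverse, ← Multiset.coe_countP, Multiset.sort_eq]
    simp only [Multiset.bind_def, Multiset.pure_def, Multiset.bind_singleton, Multiset.map_map,
      Multiset.countP_map, Function.comp, WithBot.coe_le_coe]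
    rfl
  · rw [List.pairwise_reverse]
    exact Multiset.pairwise_sort _ _

theorem withBot_eq_of_forall_le {a b : WithBot ℤ} (h : ∀ z : ℤ, (z : WithBot ℤ) ≤ a ↔ (z : WithBot ℤ) ≤ b) :
    a = b := by
  apply le_antisymm
  · cases a with
    | bot => exact bot_le
    | coe a => exact (h a).1 le_rfl
  · cases b with
    | bot => exact bot_le
    | coe b => exact (h b).2 le_rfl

/-! ### Eventual comparison of integer vectors -/

/-- The objective `x ↦ c(t)ᵀ x` as an additive homomorphism. -/
def obj (c : Fin n → Polynomial ℤ) (t : ℕ) : (Fin n → ℤ) →+ ℤ where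
  toFun x := ∑ j, evZ (c j) t * x j
  map_zero' := by simp
  map_add' x y := by simp [mul_add, Finset.sum_add_distrib]

/-- The objective refined to a translation-invariant total order on points: ties in `c(t)ᵀ x` are
broken lexicographically in the coordinates of `x`, so that distinct points have distinct keys. -/
def key (c : Fin n → Polynomial ℤ) (t : ℕ) : (Fin n → ℤ) →+ ℤ ×ₗ Lex (Fin n → ℤ) where
  toFun x := toLex (obj c t x, toLex x)
  map_zero' := by rw [map_zero]; rfl
  map_add' x y := by rw [map_add]; rfl

theorem key_pos {c : Fin n → Polynomial ℤ} {t : ℕ} {x : Fin n → ℤ} :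
    0 < key c t x ↔ 0 < obj c t x ∨ (obj c t x = 0 ∧ 0 < toLex x) := by
  have : (0 : ℤ ×ₗ Lex (Fin n → ℤ)) = toLex (0, toLex 0) := rfl
  rw [this]
  change toLex _ < toLex _ ↔ _
  rw [Prod.Lex.toLex_lt_toLex]
  simp [eq_comm]

theorem obj_le_of_key_le {c : Fin n → Polynomial ℤ} {t : ℕ} {x y : Fin n → ℤ}
    (h : key c t x ≤ key c t y) : obj c t x ≤ obj c t y := by
  have h' : toLex (obj c t x, toLex x) ≤ toLex (obj c t y, toLex y) := h
  rw [Prod.Lex.toLex_le_toLex] at h'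
  rcases h' with h' | h'
  · exact h'.le
  · exact h'.1.le

/-- Adding `x` to a point eventually improves its key. -/
def EventuallyPos (c : Fin n → Polynomial ℤ) (x : Fin n → ℤ) : Prop := ∀ᶠ t in atTop, 0 < key c t x

theorem eventually_eval_pos {p : Polynomial ℤ} (hp : 0 < p.leadingCoeff) :
    ∀ᶠ t : ℕ in atTop, 0 < p.eval (t : ℤ) := by
  -- The factor `X` makes the degree positive, so that constants need no separate treatment.
  set q : Polynomial ℝ := (p * Polynomial.X).map (Int.castRingHom ℝ) with hq
  have hinj : Function.Injective (Int.castRingHom ℝ) := Int.cast_injective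
  have hp0 : p ≠ 0 := by rintro rfl; simp at hp
  have h := Polynomial.tendsto_atTop_of_leadingCoeff_nonneg q
    (by
      rw [hq, Polynomial.degree_map_eq_of_injective hinj, Polynomial.degree_mul_X,
        Polynomial.degree_eq_natDegree hp0]
      exact_mod_cast Nat.succ_pos _)
    (by
      rw [hq, Polynomial.leadingCoeff_map_of_injective hinj, Polynomial.leadingCoeff_mul_X]
      simpa using hp.le)
  have h2 := (h.comp tendsto_natCast_atTop_atTop).eventually_gt_atTop 0
  filter_upwards [h2] with t ht
  have e : q.eval (t : ℝ) = ((p.eval (t : ℤ) * t : ℤ) : ℝ) := by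
    have := Polynomial.eval_intCast_map (Int.castRingHom ℝ) (p * Polynomial.X) (t : ℤ)
    simpa [hq] using this
  simp only [Function.comp] at ht
  rw [e] at ht
  have ht' : 0 < p.eval (t : ℤ) * t := by exact_mod_cast ht
  exact pos_of_mul_pos_left ht' (by positivity)

/-- `t ↦ c(t)ᵀ x` is a polynomial, hence has eventually constant sign; where it vanishes identically
the lexicographic sign of `x` decides. -/
theorem eventuallyPos_trichotomy (c : Fin n → Polynomial ℤ) (x : Fin n → ℤ) :
    x = 0 ∨ EventuallyPos c x ∨ EventuallyPos c (-x) := by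
  set p : Polynomial ℤ := ∑ j, c j * Polynomial.C (x j) with hp
  have he : ∀ t : ℕ, p.eval (t : ℤ) = obj c t x := by
    intro t
    simp [hp, Polynomial.eval_finsetSum, obj, evZ]
  rcases lt_trichotomy p.leadingCoeff 0 with h | h | h
  · right; right
    have := eventually_eval_pos (p := -p) (by simpa using h)
    filter_upwards [this] with t ht
    rw [key_pos]; left
    simpa [he] using ht
  · rw [Polynomial.leadingCoeff_eq_zero] at h
    have h0 : ∀ t, obj c t x = 0 := fun t => by rw [← he, h]; simp
    rcases lt_trichotomy (toLex x) 0 with h1 | h1 | h1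
    · right; right
      refine Eventually.of_forall fun t => key_pos.2 (Or.inr ⟨by simp [h0], ?_⟩)
      exact neg_pos.2 h1
    · left; exact h1
    · right; left
      exact Eventually.of_forall fun t => key_pos.2 (Or.inr ⟨h0 t, h1⟩)
  · right; left
    filter_upwards [eventually_eval_pos h] with t ht
    rw [key_pos]; left
    rwa [← he]

theorem EventuallyPos.add {c : Fin n → Polynomial ℤ} {x y : Fin n → ℤ} (hx : EventuallyPos c x) (hy : EventuallyPos c y) :
    EventuallyPos c (x + y) := by
  filter_upwards [hx, hy] with t h1 h2
  rw [map_add]; exact add_pos h1 h2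

theorem key_nsmul_pos {c : Fin n → Polynomial ℤ} {t : ℕ} {x : Fin n → ℤ} {k : ℕ} (hk : 0 < k) :
    0 < key c t (k • x) ↔ 0 < key c t x := by
  rw [map_nsmul]
  exact nsmul_pos_iff hk.ne'

theorem exists_max {ι : Type*} (c : Fin n → Polynomial ℤ) (f : ι → Fin n → ℤ) (s : Finset ι)
    (hs : s.Nonempty) : ∃ i ∈ s, ∀ j ∈ s, f j = f i ∨ EventuallyPos c (f i - f j) := by
  induction hs using Finset.Nonempty.cons_induction with
  | singleton a => exact ⟨a, by simp, by simp⟩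
  | cons a s ha hs ih =>
    obtain ⟨i, hi, h⟩ := ih
    rcases eventuallyPos_trichotomy c (f a - f i) with h1 | h1 | h1
    · refine ⟨i, by simp [hi], fun j hj => ?_⟩
      rcases Finset.mem_cons.1 hj with rfl | hj
      · left; exact sub_eq_zero.1 h1
      · exact h j hj
    · refine ⟨a, by simp, fun j hj => ?_⟩
      rcases Finset.mem_cons.1 hj with rfl | hj
      · left; rfl
      · right
        rcases h j hj with h2 | h2
        · rwa [h2]
        · simpa using h1.add h2
    · refine ⟨i, by simp [hi], fun j hj => ?_⟩
      rcases Finset.mem_cons.1 hj with rfl | hj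
      · right; simpa using h1
      · exact h j hj

/-- In a fixed finite set of vectors, a single element eventually has the `(k+1)`th largest
objective: remove the eventual maximum repeatedly. -/
theorem exists_rank (c : Fin n → Polynomial ℤ) (k : ℕ) (U : Finset (Fin n → ℤ)) :
    U.card ≤ k ∨ ∃ u ∈ U, ∀ᶠ t in atTop, ∀ z : ℤ,
      z ≤ obj c t u ↔ k + 1 ≤ (U.filter (fun x => z ≤ obj c t x)).card := by
  induction k generalizing U with
  | zero =>
    rcases U.eq_empty_or_nonempty with rfl | hU
    · left; simp
    · right
      obtain ⟨v, hv, hmax⟩ := exists_max c id U hU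
      refine ⟨v, hv, ?_⟩
      have : ∀ᶠ t in atTop, ∀ x ∈ U, obj c t x ≤ obj c t v := by
        rw [Filter.eventually_all_finset]
        intro x hx
        rcases hmax x hx with h | h
        · simp only [id] at h; simp [h]
        · filter_upwards [h] with t ht
          refine obj_le_of_key_le ?_
          simpa using ht.le
      filter_upwards [this] with t ht z
      rw [zero_add, Nat.one_le_iff_ne_zero, Finset.card_ne_zero]
      constructor
      · intro h; exact ⟨v, by simp [hv, h]⟩
      · rintro ⟨x, hx⟩
        rw [Finset.mem_filter] at hx
        exact hx.2.trans (ht x hx.1)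
  | succ k ih =>
    rcases U.eq_empty_or_nonempty with rfl | hU
    · left; simp
    · obtain ⟨v, hv, hmax⟩ := exists_max c id U hU
      have : ∀ᶠ t in atTop, ∀ x ∈ U, obj c t x ≤ obj c t v := by
        rw [Filter.eventually_all_finset]
        intro x hx
        rcases hmax x hx with h | h
        · simp only [id] at h; simp [h]
        · filter_upwards [h] with t ht
          refine obj_le_of_key_le ?_
          simpa using ht.le
      rcases ih (U.erase v) with h | ⟨u, hu, h⟩
      · left
        rw [Finset.card_erase_of_mem hv] at h; omega
      · right
        refine ⟨u, Finset.mem_of_mem_erase hu, ?_⟩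
        filter_upwards [this, h] with t ht h z
        have huv := ht u (Finset.mem_of_mem_erase hu)
        by_cases hz : z ≤ obj c t v
        · rw [h z, Finset.filter_erase, Finset.card_erase_of_mem (by simp [hv, hz])]
          have : 0 < (U.filter (fun x => z ≤ obj c t x)).card :=
            Finset.card_pos.2 ⟨v, by simp [hv, hz]⟩
          omega
        · have : U.filter (fun x => z ≤ obj c t x) = ∅ := by
            rw [Finset.filter_eq_empty_iff]
            intro x hx hzx
            exact hz (hzx.trans (ht x hx))
          rw [this]
          constructor
          · intro h; exact absurd (h.trans huv) hz
          · simp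

/-! ### Exchange argument -/

/-- If each point of `L` outside `F` starts an improving progression of `ℓ` further points of `L`,
then `L` and `F` have the same `ℓ`th largest value. -/
theorem card_filter_iff (c : Fin n → Polynomial ℤ) (t ℓ : ℕ) (L F : Finset (Fin n → ℤ))
    (hFL : F ⊆ L)
    (h : ∀ x ∈ L, x ∈ F ∨ ∃ D, 0 < key c t D ∧ ∀ i ≤ ℓ, x + i • D ∈ L) (z : ℤ) :
    ℓ ≤ (L.filter (fun x => z ≤ obj c t x)).card ↔
      ℓ ≤ (F.filter (fun x => z ≤ obj c t x)).card := by
  classical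
  refine ⟨fun hL => ?_, fun hF => hF.trans (Finset.card_le_card (Finset.filter_subset_filter _ hFL))⟩
  by_cases hne : ((L \ F).filter (fun x => z ≤ obj c t x)).Nonempty
  -- All points of the progression starting at a key-maximal missing point lie in `F`.
  · obtain ⟨x, hx, hmax⟩ := Finset.exists_max_image _ (key c t) hne
    simp only [Finset.mem_filter, Finset.mem_sdiff] at hx hmax
    obtain ⟨⟨hxL, hxF⟩, hxz⟩ := hx
    rcases h x hxL with h | ⟨D, hD, hxD⟩
    · exact absurd h hxF
    have hinj : Function.Injective (fun i : ℕ => x + (i + 1) • D) := by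
      intro i j hij
      have hij' : (i + 1) • D = (j + 1) • D := add_left_cancel hij
      have hk : (i + 1) • key c t D = (j + 1) • key c t D := by
        rw [← map_nsmul, ← map_nsmul, hij']
      rcases lt_trichotomy i j with hlt | rfl | hlt
      · exact absurd hk (nsmul_lt_nsmul_left hD (by omega)).ne
      · rfl
      · exact absurd hk (nsmul_lt_nsmul_left hD (by omega)).ne'
    have hsub : (Finset.range ℓ).image (fun i : ℕ => x + (i + 1) • D) ⊆
        F.filter (fun x => z ≤ obj c t x) := by
      intro y hy
      obtain ⟨i, hi, rfl⟩ := Finset.mem_image.1 hy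
      rw [Finset.mem_range] at hi
      have hlt : key c t x < key c t (x + (i + 1) • D) := by
        rw [map_add]
        exact lt_add_of_pos_right _ ((key_nsmul_pos (Nat.succ_pos i)).2 hD)
      have hz : z ≤ obj c t (x + (i + 1) • D) := hxz.trans (obj_le_of_key_le hlt.le)
      have hyL : x + (i + 1) • D ∈ L := hxD (i + 1) hi
      refine Finset.mem_filter.2 ⟨?_, hz⟩
      by_contra hyF
      exact absurd (hmax _ ⟨⟨hyL, hyF⟩, hz⟩) (not_le.2 hlt)
    have := Finset.card_le_card hsub
    rwa [Finset.card_image_of_injective _ hinj, Finset.card_range] at this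
  · have : L.filter (fun x => z ≤ obj c t x) ⊆ F.filter (fun x => z ≤ obj c t x) := by
      intro x hx
      rw [Finset.mem_filter] at hx ⊢
      refine ⟨?_, hx.2⟩
      by_contra hxF
      exact hne ⟨x, by simp [hx.1, hx.2, hxF]⟩
    exact hL.trans (Finset.card_le_card this)

open Classical in
/-- Let `h1` have the best objective per unit of time. A combination using some generator `k` at
least `ℓ * h1.2` times can be improved `ℓ` times in succession by trading `h1.2` copies of `k` for
`k.2` copies of `h1`, unless `k` is parallel to `h1`; in that case one trade yields a
representation of the same point with fewer copies of `k`, hence the induction on `∑ a h`. -/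
theorem exchange (c : Fin n → Polynomial ℤ) (t ℓ : ℕ) (hℓ : 0 < ℓ)
    (S : Set ((Fin n → ℤ) × ℕ)) (H : Finset ((Fin n → ℤ) × ℕ)) (h1 : (Fin n → ℤ) × ℕ)
    (hτ : 0 < h1.2) (g : (Fin n → ℤ) × ℕ)
    (hS : ∀ a : (Fin n → ℤ) × ℕ → ℕ, ∀ q : ℕ, g + ∑ h ∈ H, a h • h + q • h1 ∈ S)
    (hmax : ∀ h ∈ H, h.2 • h1.1 - h1.2 • h.1 = 0 ∨ 0 < key c t (h.2 • h1.1 - h1.2 • h.1))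
    (N : ℕ) (a : (Fin n → ℤ) × ℕ → ℕ) (ha : ∑ h ∈ H, a h ≤ N) (q : ℕ)
    (p : (Fin n → ℤ) × ℕ) (hp : p = g + ∑ h ∈ H, a h • h + q • h1) :
    (∃ a' : (Fin n → ℤ) × ℕ → ℕ, (∀ h ∈ H, a' h < ℓ * h1.2) ∧
        ∃ q' : ℕ, p = g + ∑ h ∈ H, a' h • h + q' • h1) ∨
      ∃ D, 0 < key c t D ∧ ∀ i : ℕ, i ≤ ℓ → (p.1 + i • D, p.2) ∈ S := by
  induction N generalizing a q with
  | zero =>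
    left
    refine ⟨a, fun h hh => ?_, q, hp⟩
    have : a h = 0 := by
      have := Finset.single_le_sum (f := a) (fun _ _ => Nat.zero_le _) hh
      omega
    rw [this]; positivity
  | succ N ih =>
    by_cases hall : ∀ h ∈ H, a h < ℓ * h1.2
    · exact Or.inl ⟨a, hall, q, hp⟩
    push Not at hall
    obtain ⟨k, hk, hka⟩ := hall
    have key1 : ∀ i : ℕ, i ≤ ℓ → (p.1 + i • (k.2 • h1.1 - h1.2 • k.1), p.2) =
        g + ∑ h ∈ H, Function.update a k (a k - i * h1.2) h • h + (q + i * k.2) • h1 := by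
      intro i hi
      have hle : i * h1.2 ≤ a k := (Nat.mul_le_mul_right _ hi).trans hka
      obtain ⟨r, hr⟩ := Nat.exists_eq_add_of_le hle
      have e1 : ∑ h ∈ H, Function.update a k (a k - i * h1.2) h • h =
          r • k + ∑ h ∈ H.erase k, a h • h := by
        rw [← Finset.add_sum_erase _ _ hk]
        congr 1
        · simp [hr]
        · refine Finset.sum_congr rfl fun h hh => ?_
          rw [Function.update_of_ne (Finset.ne_of_mem_erase hh)]
      rw [e1, hp, ← Finset.add_sum_erase _ _ hk, hr]
      ext j
      · simp [add_smul, mul_smul]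
        ring
      · simp
        ring
    rcases hmax k hk with h0 | hpos
    · have h2 := key1 1 hℓ
      rw [h0] at h2
      refine ih (Function.update a k (a k - 1 * h1.2)) ?_ (q + 1 * k.2) (by simpa using h2)
      rw [← Finset.add_sum_erase _ _ hk] at ha ⊢
      have : ∑ h ∈ H.erase k, Function.update a k (a k - 1 * h1.2) h = ∑ h ∈ H.erase k, a h :=
        Finset.sum_congr rfl fun h hh => by
          rw [Function.update_of_ne (Finset.ne_of_mem_erase hh)]
      rw [this, Function.update_self]
      have : h1.2 ≤ ℓ * h1.2 := Nat.le_mul_of_pos_left _ hℓ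
      omega
    · right
      refine ⟨_, hpos, fun i hi => ?_⟩
      rw [key1 i hi]
      exact hS _ _

theorem finite_combinations {M : Type*} [AddCommMonoid M] (G H : Finset M) (B : ℕ) :
    {p : M | ∃ g ∈ G, ∃ a : M → ℕ, (∀ h ∈ H, a h < B) ∧ p = g + ∑ h ∈ H, a h • h}.Finite := by
  classical
  refine (Set.finite_range (fun v : G × (H → Fin B) =>
    (v.1 : M) + ∑ h : H, (v.2 h : ℕ) • (h : M))).subset ?_
  rintro p ⟨g, hg, a, ha, rfl⟩
  refine ⟨(⟨g, hg⟩, fun h => ⟨a h, ha h h.2⟩), ?_⟩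
  simp only
  rw [Finset.sum_coe_sort H (fun h => a h • h)]

/-! ### Finite generation of the lattice points -/

theorem nonneg_of_forall_nat {a h : ℤ} (H : ∀ k : ℕ, 0 ≤ a + k * h) : 0 ≤ h := by
  by_contra hh
  have := H (a.natAbs + 1)
  push_cast at this
  have h3 : a ≤ |a| := le_abs_self a
  nlinarith [abs_nonneg a]

/-- The integer points `(x, t)` with `t ≥ 0` of the polyhedron `x ≥ 0`, `A x ≤ b₀ + t b₁` are the
sums of an element of a finite set `G` and a nonnegative integer combination of a finite set `H`.
Semilinearity gives a finite union of linear sets whose periods may differ; all periods lie in the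
recession cone, so they can be used with every base point. -/
theorem exists_generators {m : ℕ} (A : Matrix (Fin m) (Fin n) ℤ) (b₀ b₁ : Fin m → ℤ)
    (S : Set ((Fin n → ℤ) × ℕ))
    (hS : ∀ p, p ∈ S ↔ (∀ j, 0 ≤ p.1 j) ∧ ∀ i, ∑ j, A i j * p.1 j ≤ b₀ i + b₁ i * p.2) :
    ∃ G H : Finset ((Fin n → ℤ) × ℕ), (∀ h ∈ H, ∀ p ∈ S, p + h ∈ S) ∧
      ∀ p, p ∈ S ↔ ∃ g ∈ G, ∃ a : (Fin n → ℤ) × ℕ → ℕ, p = g + ∑ h ∈ H, a h • h := by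
  classical
  have hsl : IsSemilinearSet S := by
    -- Slack variables turn the inequalities into equations over the natural numbers.
    let f : ((Fin n → ℕ) × ℕ × (Fin m → ℕ)) →+ (Fin m → ℤ) :=
      { toFun := fun v i => ∑ j, A i j * (v.1 j : ℤ) + (v.2.2 i : ℤ)
        map_zero' := by ext; simp
        map_add' := by
          intro v w; ext i
          simp [mul_add, Finset.sum_add_distrib]; ring }
    let g : ((Fin n → ℕ) × ℕ × (Fin m → ℕ)) →+ (Fin m → ℤ) :=
      { toFun := fun v i => b₁ i * (v.2.1 : ℤ)
        map_zero' := by ext; simp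
        map_add' := by
          intro v w; ext i
          simp [mul_add] }
    let π : ((Fin n → ℕ) × ℕ × (Fin m → ℕ)) →+ (Fin n → ℤ) × ℕ :=
      { toFun := fun v => (fun j => (v.1 j : ℤ), v.2.1)
        map_zero' := by ext <;> simp
        map_add' := by intro v w; ext <;> simp }
    have h1 := (isSemilinearSet_setOfPred_eq 0 b₀ f g).image π
    convert h1 using 1
    ext p
    rw [hS]
    constructor
    · rintro ⟨h0, hA⟩
      refine ⟨(fun j => (p.1 j).toNat, p.2,
        fun i => (b₀ i + b₁ i * p.2 - ∑ j, A i j * p.1 j).toNat), ?_, ?_⟩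
      · change 0 + f _ = b₀ + g _
        ext i
        have := hA i
        simp [f, g, h0]
        omega
      · ext j
        · simp [π, h0]
        · simp [π]
    · rintro ⟨v, hv, rfl⟩
      refine ⟨fun j => by simp [π], fun i => ?_⟩
      have h2 : 0 + f v = b₀ + g v := hv
      have := congrFun h2 i
      simp [f, g] at this
      simp [π]
      linarith [Int.natCast_nonneg (v.2.2 i)]
  obtain ⟨Fam, hFam, hS'⟩ := isSemilinearSet_iff.1 hsl
  have hlin : ∀ s, ∃ (a : (Fin n → ℤ) × ℕ) (T : Finset ((Fin n → ℤ) × ℕ)), s ∈ Fam →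
      s = a +ᵥ (AddSubmonoid.closure (T : Set ((Fin n → ℤ) × ℕ)) : Set ((Fin n → ℤ) × ℕ)) := by
    intro s
    by_cases hs : s ∈ Fam
    · obtain ⟨a, T, h⟩ := isLinearSet_iff.1 (hFam s hs)
      exact ⟨a, T, fun _ => h⟩
    · exact ⟨0, ∅, fun h => absurd h hs⟩
  choose a T haT using hlin
  have hmem : ∀ s ∈ Fam, ∀ q ∈ AddSubmonoid.closure (T s : Set ((Fin n → ℤ) × ℕ)), a s + q ∈ S := by
    intro s hs q hq
    rw [hS']
    refine ⟨s, hs, ?_⟩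
    have h : a s + q ∈ a s +ᵥ (AddSubmonoid.closure (T s : Set ((Fin n → ℤ) × ℕ)) :
      Set ((Fin n → ℤ) × ℕ)) := ⟨q, hq, rfl⟩
    rwa [← haT s hs] at h
  have hH : ∀ s ∈ Fam, ∀ h ∈ T s, ∀ p ∈ S, p + h ∈ S := by
    intro s hs h hh p hp
    have hk : ∀ k : ℕ, a s + k • h ∈ S := fun k =>
      hmem s hs _ (AddSubmonoid.nsmul_mem _ (AddSubmonoid.subset_closure hh) k)
    simp only [hS] at hk hp ⊢
    refine ⟨fun j => ?_, fun i => ?_⟩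
    · have : 0 ≤ h.1 j := nonneg_of_forall_nat (a := (a s).1 j) fun k => by
        simpa using (hk k).1 j
      have := hp.1 j
      simp; omega
    · have : 0 ≤ b₁ i * h.2 - ∑ j, A i j * h.1 j :=
        nonneg_of_forall_nat (a := b₀ i + b₁ i * (a s).2 - ∑ j, A i j * (a s).1 j) fun k => by
          have := (hk k).2 i
          simp [mul_add, Finset.sum_add_distrib, mul_left_comm _ (k : ℤ), ← Finset.mul_sum] at this
          linarith
      have := hp.2 i
      simp [mul_add, Finset.sum_add_distrib]
      linarith
  refine ⟨Fam.image a, Fam.biUnion T, ?_, ?_⟩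
  · intro h hh p hp
    obtain ⟨s, hs, hh⟩ := Finset.mem_biUnion.1 hh
    exact hH s hs h hh p hp
  · intro p
    constructor
    · intro hp
      rw [hS'] at hp
      obtain ⟨s, hs, hps⟩ := hp
      rw [haT s hs] at hps
      obtain ⟨q, hq, rfl⟩ := hps
      refine ⟨a s, Finset.mem_image_of_mem _ hs, ?_⟩
      have hq' : q ∈ AddSubmonoid.closure (Fam.biUnion T : Set ((Fin n → ℤ) × ℕ)) :=
        AddSubmonoid.closure_mono (by
          intro x hx
          exact Finset.mem_coe.2 (Finset.mem_biUnion.2 ⟨s, hs, hx⟩)) hq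
      obtain ⟨e, -, he⟩ := AddSubmonoid.mem_closure_finset.1 hq'
      exact ⟨e, by rw [he]; rfl⟩
    · rintro ⟨g, hg, e, rfl⟩
      obtain ⟨s, hs, rfl⟩ := Finset.mem_image.1 hg
      have hgS : a s ∈ S := by simpa using hmem s hs 0 (zero_mem _)
      have hcl : ∀ q ∈ AddSubmonoid.closure (Fam.biUnion T : Set ((Fin n → ℤ) × ℕ)),
          ∀ p ∈ S, p + q ∈ S := by
        intro q hq
        induction hq using AddSubmonoid.closure_induction with
        | mem x hx =>
          obtain ⟨s', hs', hx⟩ := Finset.mem_biUnion.1 (Finset.mem_coe.1 hx)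
          exact hH s' hs' x hx
        | zero => simp
        | add x y _ _ hx hy =>
          intro p hp
          rw [← add_assoc]
          exact hy _ (hx _ hp)
      refine hcl _ ?_ _ hgS
      exact sum_mem fun h hh => AddSubmonoid.nsmul_mem _ (AddSubmonoid.subset_closure hh) _

/-! ### Quasi-polynomiality -/

theorem valsOf_eq {L : Set (Fin n → ℤ)} (h : L.Finite) (g : (Fin n → ℤ) → ℤ) :
    valsOf L g = h.toFinset.val.map g := by
  unfold valsOf
  rw [dif_pos h]

theorem isEQP_of_eventually_empty (L : ℕ → Set (Fin n → ℤ)) (g : ℕ → (Fin n → ℤ) → ℤ) (ℓ : ℕ)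
    (h : ∀ᶠ t in atTop, L t = ∅) : IsEQP (fun t => nthLargest (valsOf (L t) (g t)) ℓ) := by
  refine ⟨1, one_pos, fun _ => none, ?_⟩
  filter_upwards [h] with t ht
  rw [ht, valsOf_eq Set.finite_empty]
  simp [nthLargest, nthLargestW]

open Classical in
/-- `exists_rank` with `none` for sets of fewer than `ℓ` elements. -/
theorem exists_rank_option (c : Fin n → Polynomial ℤ) (ℓ : ℕ) (hℓ : 0 < ℓ)
    (U : Finset (Fin n → ℤ)) :
    ∃ o : Option (Fin n → ℤ), ∀ᶠ t in atTop, ∀ z : ℤ,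
      (z : WithBot ℤ) ≤ (o.map fun u => ((obj c t u : ℤ) : WithBot ℤ)).getD ⊥ ↔
        ℓ ≤ (U.filter (fun x => z ≤ obj c t x)).card := by
  rcases exists_rank c (ℓ - 1) U with h | ⟨u, -, h⟩
  · refine ⟨none, Eventually.of_forall fun t z => ?_⟩
    have := Finset.card_filter_le U (fun x => z ≤ obj c t x)
    simp
    omega
  · refine ⟨some u, ?_⟩
    filter_upwards [h] with t ht z
    rw [Nat.sub_add_cancel hℓ] at ht
    simpa using ht z

/-- Finitely generated families of lattice points whose generators all advance time have eventually
quasi-polynomial `ℓ`th largest values; the period is the time step of the best generator. -/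
theorem isEQP_of_generators (c : Fin n → Polynomial ℤ) (S : Set ((Fin n → ℤ) × ℕ))
    (G H : Finset ((Fin n → ℤ) × ℕ)) (hSH : ∀ h ∈ H, ∀ p ∈ S, p + h ∈ S)
    (hS : ∀ p, p ∈ S ↔ ∃ g ∈ G, ∃ a : (Fin n → ℤ) × ℕ → ℕ, p = g + ∑ h ∈ H, a h • h)
    (hpos : ∀ h ∈ H, 0 < h.2) (hfin : ∀ t : ℕ, 0 < t → {x | (x, t) ∈ S}.Finite)
    (ℓ : ℕ) (hℓ : 0 < ℓ) :
    IsEQP (fun t => nthLargest (valsOf {x | (x, t) ∈ S} (obj c t)) ℓ) := by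
  classical
  rcases H.eq_empty_or_nonempty with rfl | hne
  · apply isEQP_of_eventually_empty
    have : ∀ᶠ t in atTop, ∀ g ∈ G, g.2 < t := by
      rw [Filter.eventually_all_finset]
      exact fun g _ => eventually_gt_atTop _
    filter_upwards [this] with t ht
    rw [Set.eq_empty_iff_forall_notMem]
    intro x hx
    obtain ⟨g, hg, a, hga⟩ := (hS _).1 hx
    have := congrArg Prod.snd hga
    simp at this
    exact absurd (ht g hg) (by omega)
  -- The generator `h₁ = (y, d)` of steepest objective `y / d`; denominators are cleared with `N`.
  set N := ∏ h ∈ H, h.2 with hN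
  have hNpos : 0 < N := Finset.prod_pos hpos
  obtain ⟨h₁, hh₁, hmax⟩ := exists_max c (fun h : (Fin n → ℤ) × ℕ => (N / h.2) • h.1) H hne
  have hmax' : ∀ᶠ t in atTop, ∀ h ∈ H, h.2 • h₁.1 - h₁.2 • h.1 = 0 ∨
      0 < key c t (h.2 • h₁.1 - h₁.2 • h.1) := by
    rw [Filter.eventually_all_finset]
    intro h hh
    have e : (h.2 * h₁.2) • ((N / h₁.2) • h₁.1 - (N / h.2) • h.1) =
        N • (h.2 • h₁.1 - h₁.2 • h.1) := by
      have e1 : h₁.2 * (N / h₁.2) = N := Nat.mul_div_cancel' (Finset.dvd_prod_of_mem _ hh₁)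
      have e2 : h.2 * (N / h.2) = N := Nat.mul_div_cancel' (Finset.dvd_prod_of_mem _ hh)
      rw [smul_sub, smul_sub, smul_smul, smul_smul, smul_smul, smul_smul, mul_assoc, e1,
        mul_comm h.2 h₁.2, mul_assoc, e2, mul_comm h.2, mul_comm h₁.2]
    have hp : 0 < h.2 * h₁.2 := Nat.mul_pos (hpos h hh) (hpos _ hh₁)
    rcases hmax h hh with h0 | h0
    · refine Eventually.of_forall fun t => Or.inl ?_
      rw [h0, sub_self, smul_zero] at e
      exact (smul_eq_zero.1 e.symm).resolve_left hNpos.ne'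
    · filter_upwards [h0] with t ht
      right
      rw [← key_nsmul_pos hNpos, ← e, key_nsmul_pos hp]
      exact ht
  have hd : 0 < h₁.2 := hpos _ hh₁
  set d := h₁.2 with hd_def
  set y := h₁.1 with hy_def
  have hU0 := finite_combinations G (H.erase h₁) (ℓ * d)
  set U0 := hU0.toFinset with hU0_def
  have hSq : ∀ p ∈ S, ∀ q : ℕ, p + q • h₁ ∈ S := by
    intro p hp q
    induction q with
    | zero => simpa using hp
    | succ q ih =>
      rw [succ_nsmul, ← add_assoc]
      exact hSH _ hh₁ _ ih
  have hSg : ∀ g ∈ G, ∀ (a : (Fin n → ℤ) × ℕ → ℕ) (q : ℕ),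
      g + ∑ h ∈ H.erase h₁, a h • h + q • h₁ ∈ S := by
    intro g hg a q
    apply hSq
    rw [hS]
    refine ⟨g, hg, Function.update a h₁ 0, ?_⟩
    rw [← Finset.add_sum_erase _ _ hh₁]
    congr 1
    rw [Function.update_self, zero_smul, zero_add]
    exact Finset.sum_congr rfl fun h hh => by
      rw [Function.update_of_ne (Finset.ne_of_mem_erase hh)]
  have hU0S : ∀ p ∈ U0, p ∈ S := by
    intro p hp
    obtain ⟨g, hg, a, -, rfl⟩ := hU0.mem_toFinset.1 hp
    simpa using hSg g hg a 0
  -- The relevant points at time `t` form the translate by `(t / d) • y` of `U (t % d)`.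
  set U : ℕ → Finset (Fin n → ℤ) := fun r =>
    (U0.filter (fun p => p.2 % d = r)).image (fun p => p.1 - (p.2 / d) • y) with hU
  choose o ho using fun r => exists_rank_option c ℓ hℓ (U r)
  refine ⟨d, hd, fun r => (o r).map fun u => ∑ j, (c j).map (Int.castRingHom ℝ) *
    (Polynomial.C (u j : ℝ) + Polynomial.C (y j : ℝ) *
      (Polynomial.C ((d : ℝ)⁻¹) * (Polynomial.X - Polynomial.C (r : ℝ)))), ?_⟩
  have ho' : ∀ᶠ t in atTop, ∀ r ∈ Finset.range d, ∀ z : ℤ,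
      (z : WithBot ℤ) ≤ ((o r).map fun u => ((obj c t u : ℤ) : WithBot ℤ)).getD ⊥ ↔
        ℓ ≤ ((U r).filter (fun x => z ≤ obj c t x)).card := by
    rw [Filter.eventually_all_finset]
    exact fun r _ => ho r
  have hlarge : ∀ᶠ t in atTop, ∀ p ∈ U0, p.2 < t := by
    rw [Filter.eventually_all_finset]
    exact fun g _ => eventually_gt_atTop _
  filter_upwards [ho', hlarge, hmax', eventually_gt_atTop 0] with t hot htl htm ht0
  set r := t % d with hr
  set s := t / d with hs
  have hL := hfin t ht0
  have hval : nthLargest (valsOf {x | (x, t) ∈ S} (obj c t)) ℓ =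
      ((o r).map fun u => ((obj c t (u + s • y) : ℤ) : WithBot ℤ)).getD ⊥ := by
    rw [valsOf_eq hL]
    apply withBot_eq_of_forall_le
    intro z
    rw [le_nthLargest _ _ _ hℓ]
    have hFL : (U r).image (· + s • y) ⊆ hL.toFinset := by
      intro x hx
      simp only [hU, Finset.mem_image, Finset.mem_filter] at hx
      obtain ⟨_, ⟨p, ⟨hp, hpr⟩, rfl⟩, rfl⟩ := hx
      rw [hL.mem_toFinset, Set.mem_ofPred]
      have hle : p.2 / d ≤ s := Nat.div_le_div_right (htl p hp).le
      obtain ⟨q, hq⟩ := Nat.exists_eq_add_of_le hle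
      convert hSq p (hU0S p hp) q using 1
      ext1
      · simp [hq, add_smul]
        abel
      · have e1 := Nat.mod_add_div p.2 d
        have e2 := Nat.mod_add_div t d
        simp only [Prod.snd_add, Prod.smul_snd, smul_eq_mul, ← hd_def]
        rw [← e1, ← e2, ← hr, ← hs, hpr, hq]
        ring
    have hdom : ∀ x ∈ hL.toFinset, x ∈ (U r).image (· + s • y) ∨
        ∃ D, 0 < key c t D ∧ ∀ i ≤ ℓ, x + i • D ∈ hL.toFinset := by
      intro x hx
      rw [hL.mem_toFinset, Set.mem_ofPred] at hx
      obtain ⟨g, hg, a, hga⟩ := (hS _).1 hx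
      rcases exchange c t ℓ hℓ S (H.erase h₁) h₁ hd g (hSg g hg)
        (fun h hh => htm h (Finset.mem_of_mem_erase hh)) _ a le_rfl (a h₁) (x, t)
        (by rw [hga, ← Finset.add_sum_erase _ _ hh₁]; abel) with ⟨a', ha', q, hq⟩ | ⟨D, hD, hxD⟩
      · left
        set p := g + ∑ h ∈ H.erase h₁, a' h • h with hp
        have hpU : p ∈ U0 := hU0.mem_toFinset.2 ⟨g, hg, a', ha', rfl⟩
        have hx1 : x = p.1 + q • y := congrArg Prod.fst hq
        have ht1 : t = p.2 + q * d := congrArg Prod.snd hq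
        refine Finset.mem_image.2 ⟨p.1 - (p.2 / d) • y, Finset.mem_image.2
          ⟨p, Finset.mem_filter.2 ⟨hpU, ?_⟩, rfl⟩, ?_⟩
        · rw [hr, ht1, Nat.add_mul_mod_self_right]
        · have : s = p.2 / d + q := by rw [hs, ht1, Nat.add_mul_div_right _ _ hd]
          rw [hx1, this, add_smul]
          abel
      · right
        exact ⟨D, hD, fun i hi => by
          rw [hL.mem_toFinset]
          exact hxD i hi⟩
    rw [card_filter_iff c t ℓ _ _ hFL hdom, Finset.filter_image,
      Finset.card_image_of_injective _ (add_left_injective _)]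
    have h3 := hot r (Finset.mem_range.2 (Nat.mod_lt _ hd)) (z - obj c t (s • y))
    simp only [map_add, ← sub_le_iff_le_add]
    rw [← h3]
    cases o r with
    | none => simp
    | some u => simp only [Option.map_some, Option.getD_some, WithBot.coe_le_coe, sub_le_iff_le_add]
  rw [hval]
  cases o r with
  | none => rfl
  | some u =>
    simp only [Option.map_some, Option.getD_some]
    rw [WithBot.map_coe]
    congr 1
    have hsr : (d : ℝ)⁻¹ * ((t : ℝ) - (r : ℝ)) = s := by
      have e2 : ((t % d + d * (t / d) : ℕ) : ℝ) = t := by rw [Nat.mod_add_div]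
      rw [← hr, ← hs] at e2
      push_cast at e2
      rw [← e2]
      have : (d : ℝ) ≠ 0 := by exact_mod_cast hd.ne'
      field_simp
      ring
    have hev : ∀ j, (((c j).map (Int.castRingHom ℝ)).eval (t : ℝ)) = ((evZ (c j) t : ℤ) : ℝ) := by
      intro j
      have := Polynomial.eval_intCast_map (Int.castRingHom ℝ) (c j) (t : ℤ)
      simpa [evZ] using this
    simp [Polynomial.eval_finsetSum, hev, hsr, obj]
    exact Finset.sum_congr rfl fun j _ => by ring

end

/-- **Reduced canonical form.** For a parametric integer linear program
`R(t) = {x | x ≥ 0 ∧ Ax ≤ b(t)}` where `A` is a constant integer matrix and the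
entries of `b` have degree at most 1, bounded for every positive integer `t`,
every ℓth-largest-value function `f_ℓ` is eventually quasi-polynomial. -/
theorem reduced_canonical_form_EQP (n m : ℕ) (hn : 0 < n) (hm : 0 < m)
    (c : Fin n → Polynomial ℤ) (A : Matrix (Fin m) (Fin n) ℤ)
    (b : Fin m → Polynomial ℤ) (hb : ∀ i, (b i).degree ≤ 1)
    (hbdd : ∀ t : ℕ, 0 < t → Bornology.IsBounded
      {x : Fin n → ℝ | (∀ j, 0 ≤ x j) ∧ ∀ i, ∑ j, (A i j : ℝ) * x j ≤ evR (b i) t}) :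
    ∀ ℓ : ℕ, 0 < ℓ → IsEQP (fun t : ℕ =>
      nthLargest
        (valsOf {x : Fin n → ℤ | (∀ j, 0 ≤ x j) ∧ ∀ i, ∑ j, A i j * x j ≤ evZ (b i) t}
          (fun x => ∑ j, evZ (c j) t * x j)) ℓ) := by
  classical
  intro ℓ hℓ
  set S : Set ((Fin n → ℤ) × ℕ) :=
    {p | (∀ j, 0 ≤ p.1 j) ∧ ∀ i, ∑ j, A i j * p.1 j ≤ evZ (b i) p.2} with hSdef
  have hbe : ∀ i t, evZ (b i) t = (b i).coeff 0 + (b i).coeff 1 * t := by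
    intro i t
    conv_lhs => rw [evZ, Polynomial.eq_X_add_C_of_degree_le_one (hb i)]
    simp
    ring
  obtain ⟨G, H, hSH, hS⟩ := exists_generators A (fun i => (b i).coeff 0)
    (fun i => (b i).coeff 1) S (fun p => by simp [hSdef, hbe])
  have hfin : ∀ t : ℕ, 0 < t → {x | (x, t) ∈ S}.Finite := by
    intro t ht
    obtain ⟨C, hC⟩ := (hbdd t ht).exists_norm_le
    refine (Set.finite_Icc (0 : Fin n → ℤ) (fun _ => ⌈C⌉)).subset fun x hx => ⟨hx.1, fun j => ?_⟩
    have h1 := hC (fun j => (x j : ℝ)) ⟨fun j => Int.cast_nonneg (hx.1 j), fun i => by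
      have h : (((∑ j, A i j * x j : ℤ)) : ℝ) ≤ ((evZ (b i) t : ℤ) : ℝ) :=
        Int.cast_le.2 (hx.2 i)
      push_cast at h
      exact h⟩
    have h2 := (norm_le_pi_norm (fun j => (x j : ℝ)) j).trans h1
    have h3 : ((x j : ℤ) : ℝ) ≤ ⌈C⌉ := (le_abs_self _).trans (h2.trans (Int.le_ceil C))
    exact_mod_cast h3
  by_cases hex : ∃ t₀ : ℕ, 0 < t₀ ∧ ∃ x₀, (x₀, t₀) ∈ S
  · obtain ⟨t₀, ht₀, x₀, hx₀⟩ := hex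
    -- A nonzero generator at time zero would give an unbounded ray in `R(t₀)`.
    have hzero : ∀ h ∈ H, ¬ 0 < h.2 → h = 0 := by
      intro h hh h2
      have h20 : h.2 = 0 := by omega
      by_contra hne
      have h1 : h.1 ≠ 0 := fun h1 => hne (Prod.ext h1 h20)
      have hray : ∀ k : ℕ, (x₀ + k • h.1, t₀) ∈ S := by
        intro k
        induction k with
        | zero => simpa using hx₀
        | succ k ih =>
          convert hSH h hh _ ih using 1
          ext1
          · simp [add_smul, add_assoc]
          · simp [h20]
      refine Set.infinite_of_injective_forall_mem (f := fun k : ℕ => x₀ + k • h.1) ?_ hray (hfin t₀ ht₀)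
      intro i j hij
      have hij' : i • h.1 = j • h.1 := add_left_cancel (a := x₀) hij
      obtain ⟨k, hk⟩ := Function.ne_iff.1 h1
      have := congrFun hij' k
      simpa [show h.1 k ≠ 0 from hk] using this
    have hsum : ∀ a : (Fin n → ℤ) × ℕ → ℕ,
        ∑ h ∈ H.filter (fun h => 0 < h.2), a h • h = ∑ h ∈ H, a h • h := by
      intro a
      refine Finset.sum_subset (Finset.filter_subset _ _) fun h hh hh' => ?_
      rw [hzero h hh fun h2 => hh' (Finset.mem_filter.2 ⟨hh, h2⟩), smul_zero]
    exact isEQP_of_generators c S G (H.filter (fun h => 0 < h.2))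
      (fun h hh => hSH h (Finset.mem_of_mem_filter h hh)) (by simpa only [hsum] using hS)
      (fun h hh => (Finset.mem_filter.1 hh).2) hfin ℓ hℓ
  · refine isEQP_of_eventually_empty _ _ ℓ ?_
    filter_upwards [Filter.eventually_gt_atTop 0] with t ht
    rw [Set.eq_empty_iff_forall_notMem]
    exact fun x hx => hex ⟨t, ht, x, hx⟩
end

section
/- Let n, m, and r be positive integers, let A ∈ (ℤ[t])^{m×n}, and let b ∈ (ℤ[t])^m with every coordinate of b having positive leading coefficient. For each positive integer t let L(t) = {x ∈ ℤ^n : 0 ≤ x_i < t^r for all i, and A(t)x = b(t)}. For each positive integer t ≥ 2 let φ_t : {0,…,t^r−1}^n → {0,…,t−1}^{rn} be the base-t digit map, φ_t(x) = (y_{i,j})_{1≤i≤n, 0≤j≤r−1} where x_i = Σ_{j=0}^{r−1} y_{i,j} t^j. Then there exist a finite index set S and, for each α ∈ S, a positive integer m_α, a constant integer matrix A_α ∈ ℤ^{m_α×rn}, and b_α ∈ (ℤ[t])^{m_α} with entries of degree at most 1, defining L_α(t) = {y ∈ ℤ^{rn} : y ≥ 0, y_{i,j} ≤ t−1 for all (i,j),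 and A_α y ≤ b_α(t)}, such that: for every positive integer t the sets L_α(t), α ∈ S, are pairwise disjoint, and for all sufficiently large positive integers t, φ_t restricts to a bijection from L(t) onto the union ∪_{α∈S} L_α(t). -/
open Polynomial

/-! ### Base-`t` digits -/

lemma eq_sum_digits (t x : ℤ) (ht : 0 < t) (r : ℕ) :
    x = ∑ k ∈ Finset.range r, (x / t ^ k % t) * t ^ k + t ^ r * (x / t ^ r) := by
  induction r with
  | zero => simp
  | succ r ih =>
    rw [Finset.sum_range_succ]
    have h1 : x / t ^ (r + 1) = x / t ^ r / t := by
      rw [pow_succ, Int.ediv_ediv_of_nonneg (by positivity)]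
    have h2 := Int.emod_add_mul_ediv (x / t ^ r) t
    rw [h1]
    linear_combination ih - t ^ r * h2

lemma sum_digits_bounds (t : ℤ) (y : ℕ → ℤ) (hy : ∀ k, 0 ≤ y k ∧ y k ≤ t - 1) (r : ℕ) :
    0 ≤ ∑ k ∈ Finset.range r, y k * t ^ k ∧ ∑ k ∈ Finset.range r, y k * t ^ k < t ^ r := by
  have ht : 0 < t := by have := hy 0; omega
  induction r with
  | zero => simp
  | succ r ih =>
    rw [Finset.sum_range_succ, pow_succ]
    have hp : 0 < t ^ r := by positivity
    obtain ⟨h0, h1⟩ := hy r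
    constructor
    · have := mul_nonneg h0 hp.le
      linarith [ih.1]
    · nlinarith [ih.2]

lemma digit_sum_digits (t : ℤ) (y : ℕ → ℤ) (hy : ∀ k, 0 ≤ y k ∧ y k ≤ t - 1) (r k : ℕ)
    (hk : k < r) : (∑ l ∈ Finset.range r, y l * t ^ l) / t ^ k % t = y k := by
  have ht : 0 < t := by have := hy 0; omega
  induction r with
  | zero => omega
  | succ r ih =>
    rw [Finset.sum_range_succ]
    rcases Nat.lt_succ_iff_lt_or_eq.mp hk with h | rfl
    · obtain ⟨e, rfl⟩ := Nat.exists_eq_add_of_lt h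
      have : y (k + e + 1) * t ^ (k + e + 1) = t ^ k * (t * (y (k + e + 1) * t ^ e)) := by ring
      rw [this, Int.add_mul_ediv_left _ _ (by positivity), Int.add_mul_emod_self_left]
      exact ih h
    · obtain ⟨h0, h1⟩ := sum_digits_bounds t y hy k
      rw [Int.add_mul_ediv_right _ _ (by positivity), Int.ediv_eq_zero_of_lt h0 h1, zero_add]
      exact Int.emod_eq_of_lt (hy k).1 (by linarith [(hy k).2])

lemma digits_fin_sum {r : ℕ} (t : ℤ) (y : Fin r → ℤ) (hy : ∀ k, 0 ≤ y k ∧ y k ≤ t - 1)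
    (ht : 0 < t) :
    (0 ≤ ∑ k, y k * t ^ (k : ℕ) ∧ ∑ k, y k * t ^ (k : ℕ) < t ^ r) ∧
      ∀ k : Fin r, (∑ l, y l * t ^ (l : ℕ)) / t ^ (k : ℕ) % t = y k := by
  let y' : ℕ → ℤ := fun k => if h : k < r then y ⟨k, h⟩ else 0
  have hy' : ∀ k, 0 ≤ y' k ∧ y' k ≤ t - 1 := by
    intro k
    by_cases h : k < r
    · simpa [y', h] using hy ⟨k, h⟩
    · simp only [y', h, dite_false]
      omega
  have hval : ∀ k : Fin r, y' k = y k := fun k => by simp [y']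
  have hs : ∑ k, y k * t ^ (k : ℕ) = ∑ k ∈ Finset.range r, y' k * t ^ k := by
    rw [← Fin.sum_univ_eq_sum_range (fun k => y' k * t ^ k)]
    simp [hval]
  rw [hs]
  refine ⟨sum_digits_bounds t y' hy' r, fun k => ?_⟩
  rw [digit_sum_digits t y' hy' r k k.2, hval]

/-! ### Carries -/

/-- If an integer expansion in powers of `t` with coefficients of size at most `C * t` vanishes,
then it is resolved by carries of size at most `2 * C`. -/
lemma exists_carry (t C : ℤ) (ht : 2 ≤ t) (c : ℕ → ℤ) (D : ℕ)
    (hc : ∀ d, |c d| ≤ C * t) (h : ∑ d ∈ Finset.range D, c d * t ^ d = 0) :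
    ∃ q : ℕ → ℤ, q 0 = 0 ∧ q D = 0 ∧ (∀ d ≤ D, |q d| ≤ 2 * C) ∧
      ∀ d < D, c d + q d = q (d + 1) * t := by
  have ht0 : 0 < t := by omega
  have hC : 0 ≤ C := by
    have := (abs_nonneg _).trans (hc 0)
    exact nonneg_of_mul_nonneg_left this ht0
  -- A partial sum is divisible by `t ^ d` because the complementary tail is.
  have hdvd : ∀ d ≤ D, t ^ d ∣ ∑ e ∈ Finset.range d, c e * t ^ e := by
    intro d hd
    have hsplit := Finset.sum_range_add_sum_Ico (fun e => c e * t ^ e) hd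
    rw [h] at hsplit
    rw [eq_neg_of_add_eq_zero_left hsplit]
    refine (Finset.dvd_sum fun e he => ?_).neg_right
    exact (pow_dvd_pow t (Finset.mem_Ico.mp he).1).mul_left _
  let q : ℕ → ℤ := fun d => (∑ e ∈ Finset.range d, c e * t ^ e) / t ^ d
  have hq : ∀ d ≤ D, q d * t ^ d = ∑ e ∈ Finset.range d, c e * t ^ e :=
    fun d hd => Int.ediv_mul_cancel (hdvd d hd)
  have hrec : ∀ d < D, c d + q d = q (d + 1) * t := by
    intro d hd
    have h1 := hq d hd.le
    have h2 := hq (d + 1) hd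
    rw [Finset.sum_range_succ, ← h1] at h2
    have hp : t ^ d ≠ 0 := by positivity
    apply mul_right_cancel₀ hp
    linear_combination -h2
  refine ⟨q, by simp [q], by simp [q, h], fun d => ?_, hrec⟩
  induction d with
  | zero => intro _; simp [q, hC]
  | succ d ih =>
    intro hd
    have h1 := ih (by omega)
    have h2 := hrec d hd
    have h3 : |q (d + 1)| * t ≤ C * t + 2 * C := by
      calc |q (d + 1)| * t = |q (d + 1) * t| := by rw [abs_mul, abs_of_pos ht0]
        _ = |c d + q d| := by rw [h2]
        _ ≤ |c d| + |q d| := abs_add_le _ _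
        _ ≤ _ := add_le_add (hc d) h1
    have h4 : |q (d + 1)| * t ≤ 2 * C * t := by nlinarith
    exact le_of_mul_le_mul_right h4 ht0

lemma sum_of_carry (t : ℤ) (c : ℕ → ℤ) (D : ℕ) (q : Fin (D + 1) → ℤ) (h0 : q 0 = 0)
    (hD : q (Fin.last D) = 0)
    (h : ∀ d : Fin D, c d + q d.castSucc = q d.succ * t) :
    ∑ d ∈ Finset.range D, c d * t ^ d = 0 := by
  have key : ∀ d : Fin (D + 1), ∑ e ∈ Finset.range d, c e * t ^ (e : ℕ) = q d * t ^ (d : ℕ) := by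
    intro d
    induction d using Fin.induction with
    | zero => simp [h0]
    | succ d ih =>
      have := h d
      simp only [Fin.val_castSucc] at ih
      rw [Fin.val_succ, Finset.sum_range_succ, ih]
      linear_combination t ^ (d : ℕ) * this
  simpa [hD] using key (Fin.last D)

lemma carry_unique (t : ℤ) (ht : 0 < t) (D : ℕ) (c : Fin D → ℤ) (q q' : Fin (D + 1) → ℤ)
    (h0 : q 0 = q' 0)
    (h : ∀ d : Fin D, c d + q d.castSucc = q d.succ * t)
    (h' : ∀ d : Fin D, c d + q' d.castSucc = q' d.succ * t) : q = q' := by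
  funext d
  induction d using Fin.induction with
  | zero => exact h0
  | succ d ih =>
    apply mul_right_cancel₀ ht.ne'
    rw [← h d, ← h' d, ih]

/-! ### The carry systems -/

/-- Tables of carries of size at most `K`, one row for each equation, vanishing at both ends. -/
def CarryTable (m D : ℕ) (K : ℤ) : Type :=
  {q : Fin m → Fin (D + 1) → ℤ //
    q ∈ Set.Icc (fun _ _ => -K) (fun _ _ => K) ∧ ∀ i, q i 0 = 0 ∧ q i (Fin.last D) = 0}

instance (m D : ℕ) (K : ℤ) : Finite (CarryTable m D K) :=
  ((Set.finite_Icc (fun (_ : Fin m) (_ : Fin (D + 1)) => -K) (fun _ _ => K)).subset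
    (fun _ hq => hq.1 : {q : Fin m → Fin (D + 1) → ℤ |
      q ∈ Set.Icc (fun _ _ => -K) (fun _ _ => K) ∧
        ∀ i, q i 0 = 0 ∧ q i (Fin.last D) = 0} ⊆ _)).to_subtype

/-- The coefficient with which the digit `y p` enters the `t ^ d` term of the `i`-th equation. -/
noncomputable def digitCoeff {m n r : ℕ} (A : Matrix (Fin m) (Fin n) ℤ[X]) (i : Fin m) (d : ℕ)
    (p : Fin n × Fin r) : ℤ :=
  (A i p.1 * X ^ (p.2 : ℕ)).coeff d

/-- The constant matrix of the inequality systems; the Boolean separates the two inequalities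
making up an equation. -/
noncomputable def carryMatrix {m n r : ℕ} (A : Matrix (Fin m) (Fin n) ℤ[X]) (D : ℕ) :
    Matrix (Fin m × Fin D × Bool) (Fin n × Fin r) ℤ :=
  fun k p => (if k.2.2 then 1 else -1) * digitCoeff A k.1 k.2.1 p

/-- The right-hand sides of the inequality system belonging to the carry table `q`. -/
noncomputable def carryRhs {m D : ℕ} (b : Fin m → ℤ[X]) (q : Fin m → Fin (D + 1) → ℤ)
    (k : Fin m × Fin D × Bool) : ℤ[X] :=
  C ((if k.2.2 then 1 else -1) * q k.1 k.2.1.succ) * X +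
    C ((if k.2.2 then 1 else -1) * ((b k.1).coeff k.2.1 - q k.1 k.2.1.castSucc))

lemma carry_system_iff {m n r D : ℕ} (A : Matrix (Fin m) (Fin n) ℤ[X]) (b : Fin m → ℤ[X])
    (q : Fin m → Fin (D + 1) → ℤ) (t : ℕ) (y : Fin n × Fin r → ℤ) :
    (∀ k, ∑ p, carryMatrix A D k p * y p ≤ evZ (carryRhs b q k) t) ↔
      ∀ i, ∀ d : Fin D, (∑ p, digitCoeff A i d p * y p - (b i).coeff d) + q i d.castSucc =
        q i d.succ * t := by
  constructor
  · intro h i d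
    have h1 := h (i, d, true)
    have h2 := h (i, d, false)
    simp [carryMatrix, carryRhs, evZ] at h1 h2
    linarith
  · rintro h ⟨i, d, s⟩
    have := h i d
    cases s <;> simp [carryMatrix, carryRhs, evZ] <;> linarith

lemma exists_degree_bound {m n : ℕ} (r : ℕ) (A : Matrix (Fin m) (Fin n) ℤ[X])
    (b : Fin m → ℤ[X]) : ∃ D : ℕ, 0 < D ∧
      (∀ i (p : Fin n × Fin r), (A i p.1 * X ^ (p.2 : ℕ)).natDegree < D) ∧
      ∀ i, (b i).natDegree < D := by
  obtain ⟨D₁, h₁⟩ := (Set.finite_range fun z : Fin m × (Fin n × Fin r) =>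
    (A z.1 z.2.1 * X ^ (z.2.2 : ℕ)).natDegree).bddAbove
  obtain ⟨D₂, h₂⟩ := (Set.finite_range fun i => (b i).natDegree).bddAbove
  refine ⟨D₁ + D₂ + 1, by omega, fun i p => ?_, fun i => ?_⟩
  · have := h₁ ⟨(i, p), rfl⟩
    dsimp only at this
    omega
  · have := h₂ ⟨i, rfl⟩
    dsimp only at this
    omega

lemma equation_expansion {m n r D : ℕ} (A : Matrix (Fin m) (Fin n) ℤ[X]) (b : Fin m → ℤ[X])
    (hA : ∀ i (p : Fin n × Fin r), (A i p.1 * X ^ (p.2 : ℕ)).natDegree < D)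
    (hb : ∀ i, (b i).natDegree < D) (t : ℕ) (y : Fin n × Fin r → ℤ) (i : Fin m) :
    ∑ j, evZ (A i j) t * (∑ k : Fin r, y (j, k) * (t : ℤ) ^ (k : ℕ)) - evZ (b i) t =
      ∑ d ∈ Finset.range D, (∑ p, digitCoeff A i d p * y p - (b i).coeff d) * (t : ℤ) ^ d := by
  have hcoef : ∀ p : Fin n × Fin r, evZ (A i p.1) t * (t : ℤ) ^ (p.2 : ℕ) =
      ∑ d ∈ Finset.range D, digitCoeff A i d p * (t : ℤ) ^ d := by
    intro p
    have := eval_eq_sum_range' (hA i p) (t : ℤ)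
    simpa [evZ, digitCoeff] using this
  simp only [sub_mul, Finset.sum_sub_distrib]
  congr 1
  · simp only [Finset.sum_mul, Finset.mul_sum]
    rw [← Fintype.sum_prod_type' (f := fun j k => evZ (A i j) t * (y (j, k) * (t : ℤ) ^ (k : ℕ))),
      Finset.sum_comm]
    refine Finset.sum_congr rfl fun p _ => ?_
    calc evZ (A i p.1) t * (y p * (t : ℤ) ^ (p.2 : ℕ))
        = y p * (evZ (A i p.1) t * (t : ℤ) ^ (p.2 : ℕ)) := by ring
      _ = _ := by
        rw [hcoef p, Finset.mul_sum]
        exact Finset.sum_congr rfl fun d _ => by ring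
  · exact eval_eq_sum_range' (hb i) (t : ℤ)

/-- The coefficients of the expanded equations are `O(t)`, uniformly over digit vectors. -/
lemma exists_coeff_bound {m n : ℕ} (r : ℕ) (A : Matrix (Fin m) (Fin n) ℤ[X]) (b : Fin m → ℤ[X])
    (D : ℕ) : ∃ K : ℤ, ∀ t : ℕ, 0 < t → ∀ y : Fin n × Fin r → ℤ,
      (∀ p, 0 ≤ y p ∧ y p ≤ (t : ℤ) - 1) → ∀ i, ∀ d < D,
        |∑ p, digitCoeff A i d p * y p - (b i).coeff d| ≤ K * t := by
  let g : Fin m × Fin D → ℤ := fun z =>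
    ∑ p : Fin n × Fin r, |digitCoeff A z.1 z.2 p| + |(b z.1).coeff z.2|
  obtain ⟨K, hK⟩ := (Set.finite_range g).bddAbove
  refine ⟨K, fun t ht y hy i d hd => ?_⟩
  have ht1 : (1 : ℤ) ≤ t := by exact_mod_cast ht
  have hg : g (i, ⟨d, hd⟩) ≤ K := hK ⟨_, rfl⟩
  calc |∑ p, digitCoeff A i d p * y p - (b i).coeff d|
      ≤ |∑ p, digitCoeff A i d p * y p| + |(b i).coeff d| := abs_sub _ _
    _ ≤ ∑ p, |digitCoeff A i d p * y p| + |(b i).coeff d| := by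
        gcongr
        exact Finset.abs_sum_le_sum_abs _ _
    _ ≤ ∑ p : Fin n × Fin r, |digitCoeff A i d p| * t + |(b i).coeff d| * t := by
        gcongr with p
        · rw [abs_mul, abs_of_nonneg (hy p).1]
          have := (hy p).2
          gcongr
          omega
        · exact le_mul_of_one_le_right (abs_nonneg _) ht1
    _ = g (i, ⟨d, hd⟩) * t := by simp only [g, add_mul, Finset.sum_mul]
    _ ≤ K * t := by gcongr

/-- A digit vector solves the original equations exactly when it lies in one of the carry
systems. -/
lemma solution_iff_exists_carry {m n r D : ℕ} {K : ℤ} (A : Matrix (Fin m) (Fin n) ℤ[X])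
    (b : Fin m → ℤ[X])
    (hA : ∀ i (p : Fin n × Fin r), (A i p.1 * X ^ (p.2 : ℕ)).natDegree < D)
    (hb : ∀ i, (b i).natDegree < D) (hD : 0 < D) (t : ℕ) (ht : 2 ≤ t) (y : Fin n × Fin r → ℤ)
    (hK : ∀ i, ∀ d < D, |∑ p, digitCoeff A i d p * y p - (b i).coeff d| ≤ K * t) :
    (∀ i, ∑ j, evZ (A i j) t * (∑ k : Fin r, y (j, k) * (t : ℤ) ^ (k : ℕ)) = evZ (b i) t) ↔
      ∃ q : CarryTable m D (2 * K),
        ∀ k, ∑ p, carryMatrix A D k p * y p ≤ evZ (carryRhs b q.1 k) t := by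
  have hexp := equation_expansion A b hA hb t y
  simp only [carry_system_iff]
  constructor
  · intro h
    have hq : ∀ i, ∃ q : ℕ → ℤ, q 0 = 0 ∧ q D = 0 ∧ (∀ d ≤ D, |q d| ≤ 2 * K) ∧
        ∀ d < D, (∑ p, digitCoeff A i d p * y p - (b i).coeff d) + q d = q (d + 1) * t := by
      intro i
      have hsum := hexp i
      rw [h i, sub_self] at hsum
      refine exists_carry t K (by exact_mod_cast ht) _ D (fun d => ?_) hsum.symm
      -- Beyond the degree bound all coefficients vanish.
      by_cases hd : d < D
      · exact hK i d hd
      · have h1 : (b i).coeff d = 0 := coeff_eq_zero_of_natDegree_lt (by have := hb i; omega)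
        have h2 : ∀ p : Fin n × Fin r, digitCoeff A i d p = 0 := fun p =>
          coeff_eq_zero_of_natDegree_lt (by have := hA i p; omega)
        simpa [h1, h2] using (abs_nonneg _).trans (hK i 0 hD)
    choose q h0 hqD hbd hrec using hq
    refine ⟨⟨fun i d => q i d, ⟨fun i d => ?_, fun i d => ?_⟩, fun i => ⟨?_, ?_⟩⟩, fun i d => ?_⟩
    · exact (abs_le.mp (hbd i d (by omega))).1
    · exact (abs_le.mp (hbd i d (by omega))).2
    · simpa using h0 i
    · simpa using hqD i
    · simpa using hrec i d d.2
  · rintro ⟨⟨q, _, hq⟩, h⟩ i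
    rw [← sub_eq_zero, hexp i]
    exact sum_of_carry t _ D (q i) (hq i).1 (hq i).2 (h i)

/-- **Base-`t` decomposition (Lemma 3.2 of Chen–Li–Sam, strengthened to `m > 1`).**
The lattice point set `L(t) = {x ∈ ℤⁿ | 0 ≤ xᵢ < tʳ, A(t)x = b(t)}` is, for large `t`,
in bijection via the base-`t` digit map with a disjoint union of finitely many lattice
point sets of programs in reduced canonical form (constant integer matrices, right-hand
sides of degree at most 1, with the digit constraints `0 ≤ y_{i,j} ≤ t-1`). -/
theorem base_t_decomposition (n m r : ℕ) (hn : 0 < n) (hm : 0 < m) (hr : 0 < r)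
    (A : Matrix (Fin m) (Fin n) (Polynomial ℤ)) (b : Fin m → Polynomial ℤ)
    (hb : ∀ i, 0 < (b i).leadingCoeff) :
    ∃ (N : ℕ) (mα : Fin N → ℕ) (_ : ∀ α, 0 < mα α)
      (Aα : (α : Fin N) → Matrix (Fin (mα α)) (Fin n × Fin r) ℤ)
      (bα : (α : Fin N) → Fin (mα α) → Polynomial ℤ),
      (∀ α i', (bα α i').degree ≤ 1) ∧
      (∀ t : ℕ, 0 < t → Pairwise fun α β : Fin N =>
        Disjoint
          {y : Fin n × Fin r → ℤ | (∀ p, 0 ≤ y p ∧ y p ≤ (t : ℤ) - 1) ∧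
            ∀ i', ∑ p, Aα α i' p * y p ≤ evZ (bα α i') t}
          {y : Fin n × Fin r → ℤ | (∀ p, 0 ≤ y p ∧ y p ≤ (t : ℤ) - 1) ∧
            ∀ i', ∑ p, Aα β i' p * y p ≤ evZ (bα β i') t}) ∧
      ∀ᶠ t : ℕ in Filter.atTop,
        Set.BijOn (fun (x : Fin n → ℤ) (p : Fin n × Fin r) => x p.1 / (t : ℤ) ^ (p.2 : ℕ) % t)
          {x : Fin n → ℤ | (∀ i, 0 ≤ x i ∧ x i < (t : ℤ) ^ r) ∧
            ∀ i, ∑ j, evZ (A i j) t * x j = evZ (b i) t}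
          (⋃ α : Fin N, {y : Fin n × Fin r → ℤ | (∀ p, 0 ≤ y p ∧ y p ≤ (t : ℤ) - 1) ∧
            ∀ i', ∑ p, Aα α i' p * y p ≤ evZ (bα α i') t}) := by
  obtain ⟨D, hD, hdA, hdb⟩ := exists_degree_bound r A b
  obtain ⟨K, hK⟩ := exists_coeff_bound r A b D
  let e : CarryTable m D (2 * K) ≃ Fin (Nat.card (CarryTable m D (2 * K))) :=
    Finite.equivFin _
  let f : Fin m × Fin D × Bool ≃ Fin (Fintype.card (Fin m × Fin D × Bool)) :=
    Fintype.equivFin _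
  have hsys : ∀ (q : Fin m → Fin (D + 1) → ℤ) (t : ℕ) (y : Fin n × Fin r → ℤ),
      (∀ k', ∑ p, carryMatrix A D (f.symm k') p * y p ≤ evZ (carryRhs b q (f.symm k')) t) ↔
        ∀ k, ∑ p, carryMatrix A D k p * y p ≤ evZ (carryRhs b q k) t := fun q t y =>
    (f.symm.surjective.forall (p := fun k =>
      ∑ p, carryMatrix A D k p * y p ≤ evZ (carryRhs b q k) t)).symm
  refine ⟨_, fun _ => _, fun _ => ?_, fun _ k' => carryMatrix A D (f.symm k'),
    fun α k' => carryRhs b (e.symm α).1 (f.symm k'), fun _ _ => degree_linear_le, ?_, ?_⟩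
  · simp [hm, hD]
  · intro t ht α β hαβ
    rw [Set.disjoint_left]
    rintro y ⟨-, hα⟩ ⟨-, hβ⟩
    rw [hsys, carry_system_iff] at hα hβ
    apply hαβ
    apply e.symm.injective
    apply Subtype.ext
    funext i
    exact carry_unique t (by exact_mod_cast ht) D _ _ _
      (((e.symm α).2.2 i).1.trans ((e.symm β).2.2 i).1.symm) (hα i) (hβ i)
  · filter_upwards [Filter.eventually_ge_atTop 2] with t ht
    have ht0 : (0 : ℤ) < t := by exact_mod_cast (by omega : 0 < t)
    have hrecon : ∀ x : ℤ, 0 ≤ x ∧ x < (t : ℤ) ^ r →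
        ∑ k : Fin r, (x / (t : ℤ) ^ (k : ℕ) % t) * (t : ℤ) ^ (k : ℕ) = x := by
      intro x hx
      have h := eq_sum_digits t x ht0 r
      rw [Int.ediv_eq_zero_of_lt hx.1 hx.2, mul_zero, add_zero] at h
      rw [Fin.sum_univ_eq_sum_range (fun k => (x / (t : ℤ) ^ k % t) * (t : ℤ) ^ k)]
      exact h.symm
    refine ⟨?_, ?_, ?_⟩
    · rintro x ⟨hx, heq⟩
      have hbox : ∀ p : Fin n × Fin r, 0 ≤ x p.1 / (t : ℤ) ^ (p.2 : ℕ) % t ∧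
          x p.1 / (t : ℤ) ^ (p.2 : ℕ) % t ≤ (t : ℤ) - 1 := fun p =>
        ⟨Int.emod_nonneg _ ht0.ne', Int.le_sub_one_of_lt (Int.emod_lt_of_pos _ ht0)⟩
      obtain ⟨q, hq⟩ := (solution_iff_exists_carry A b hdA hdb hD t ht _
        (hK t (by omega) _ hbox)).mp (by
          intro i
          simp only [fun j => hrecon (x j) (hx j)]
          exact heq i)
      refine Set.mem_iUnion.mpr ⟨e q, hbox, ?_⟩
      rw [hsys, e.symm_apply_apply]
      exact hq
    · rintro x ⟨hx, -⟩ x' ⟨hx', -⟩ h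
      funext j
      rw [← hrecon (x j) (hx j), ← hrecon (x' j) (hx' j)]
      exact Finset.sum_congr rfl fun k _ =>
        congrArg (· * (t : ℤ) ^ (k : ℕ)) (congrFun h (j, k))
    · intro y hy
      obtain ⟨α, hbox, hα⟩ := Set.mem_iUnion.mp hy
      rw [hsys] at hα
      have hdig := fun j => digits_fin_sum (t : ℤ) (fun k : Fin r => y (j, k))
        (fun k => hbox (j, k)) ht0
      refine ⟨fun j => ∑ k : Fin r, y (j, k) * (t : ℤ) ^ (k : ℕ), ⟨fun j => (hdig j).1, ?_⟩, ?_⟩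
      · exact (solution_iff_exists_carry A b hdA hdb hD t ht y
          (hK t (by omega) y hbox)).mpr ⟨e.symm α, hα⟩
      · funext p
        exact (hdig p.1).2 p.2
end
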